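/- arXiv:1009.0540 — 2 statements merged into one kernel-verified Lean document; each statement's English description precedes it below -/
import Mathlib

section
/- Weighted integral inequalities (Lemma fracestlem): Let 0 < δ < 1 and let f : [0,∞) → ℝ be continuous, continuously differentiable on (0,∞), bounded, with f(0) = 0. Then: (i) there exist constants C₁ > 0 and C₂ > 0 depending only on δ such that ∫_0^∞ f(x)²/x^{2+δ} dx ≥ C₁ ( ∫_0^∞ |f(x)|/x^{1+δ} dx )² − C₂ (1 + ‖f‖_{L^∞}²); and (ii) if in addition 0 < α < 1/4 and 0 < δ < 1 − 4α, then for every ε > 0 there exists C_ε > 0 (depending on ε, α, δ) such that ∫_0^∞ |f(x)|/x^{1+δ+2α} dx ≤ ε ∫_0^∞ f(x)²/x^{2+δ} dx + C_ε (1 + ‖f‖_{L^∞}). In both inequalities, if an integral on the larger side is infinite the inequality holds trivially, and the inequalities are understood in the extended reals. -/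
open Set MeasureTheory ENNReal

/-- Weighted Young inequality: near zero, `|f| / x ^ b` is controlled by `f² / x ^ (2 + δ)`. -/
lemma div_rpow_le_young {x : ℝ} (hx : 0 < x) (y b δ : ℝ) {η : ℝ} (hη : 0 < η) :
    |y| / x ^ b ≤ η * (y ^ (2:ℕ) / x ^ (2 + δ)) + x ^ (2 + δ - 2 * b) / (4 * η) := by
  have hp : 0 < x ^ b := Real.rpow_pos_of_pos hx _
  have hq : 0 < x ^ (2 + δ) := Real.rpow_pos_of_pos hx _
  have hsplit : x ^ (2 + δ - 2 * b) = x ^ (2 + δ) / (x ^ b) ^ 2 := by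
    rw [Real.rpow_sub hx, mul_comm 2 b, Real.rpow_mul hx.le, Real.rpow_two]
  rw [hsplit, ← sq_abs y]
  generalize x ^ b = p at *
  generalize x ^ (2 + δ) = q at *
  have key : η * (|y| ^ 2 / q) + q / p ^ 2 / (4 * η) - |y| / p
      = (2 * η * |y| * p - q) ^ 2 / (4 * η * q * p ^ 2) := by
    field_simp
    ring
  have : 0 ≤ (2 * η * |y| * p - q) ^ 2 / (4 * η * q * p ^ 2) := by positivity
  linarith

lemma lintegral_abs_div_rpow_le {b δ : ℝ} (hb : 1 < b) (hbδ : 2 * b < 3 + δ) :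
    ∃ K ≥ (0:ℝ), ∃ L ≥ (0:ℝ), ∀ (f : ℝ → ℝ) (M η : ℝ), 0 ≤ M → 0 < η →
      (∀ x ∈ Ici (0:ℝ), |f x| ≤ M) →
      (∫⁻ x in Ioi (0:ℝ), ENNReal.ofReal (|f x| / x ^ b))
        ≤ ENNReal.ofReal η * (∫⁻ x in Ioi (0:ℝ), ENNReal.ofReal (f x ^ (2:ℕ) / x ^ (2 + δ)))
            + ENNReal.ofReal (K / η + L * M) := by
  have hK : IntegrableOn (fun x : ℝ => x ^ (2 + δ - 2 * b)) (Ioc 0 1) := by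
    rw [← intervalIntegrable_iff_integrableOn_Ioc_of_le zero_le_one]
    exact intervalIntegral.intervalIntegrable_rpow' (by linarith)
  have hL : IntegrableOn (fun x : ℝ => x ^ (-b)) (Ioi 1) :=
    integrableOn_Ioi_rpow_of_lt (by linarith) one_pos
  have hK0 : 0 ≤ ∫ x in Ioc (0:ℝ) 1, x ^ (2 + δ - 2 * b) :=
    setIntegral_nonneg measurableSet_Ioc fun x hx => Real.rpow_nonneg hx.1.le _
  have hL0 : 0 ≤ ∫ x in Ioi (1:ℝ), x ^ (-b) :=
    setIntegral_nonneg measurableSet_Ioi fun x hx =>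
      Real.rpow_nonneg (zero_le_one.trans (le_of_lt hx)) _
  refine ⟨(∫ x in Ioc (0:ℝ) 1, x ^ (2 + δ - 2 * b)) / 4, by positivity,
    ∫ x in Ioi (1:ℝ), x ^ (-b), hL0, fun f M η hM hη hf => ?_⟩
  have hnear : (∫⁻ x in Ioc (0:ℝ) 1, ENNReal.ofReal (|f x| / x ^ b))
      ≤ ENNReal.ofReal η * (∫⁻ x in Ioi (0:ℝ), ENNReal.ofReal (f x ^ (2:ℕ) / x ^ (2 + δ)))
        + ENNReal.ofReal ((∫ x in Ioc (0:ℝ) 1, x ^ (2 + δ - 2 * b)) / 4 / η) := by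
    calc (∫⁻ x in Ioc (0:ℝ) 1, ENNReal.ofReal (|f x| / x ^ b))
        ≤ ∫⁻ x in Ioc (0:ℝ) 1, (ENNReal.ofReal η * ENNReal.ofReal (f x ^ (2:ℕ) / x ^ (2 + δ))
            + ENNReal.ofReal (x ^ (2 + δ - 2 * b) / (4 * η))) := by
          refine setLIntegral_mono' measurableSet_Ioc fun x hx => ?_
          have hx0 := hx.1
          rw [← ENNReal.ofReal_mul hη.le, ← ENNReal.ofReal_add (by positivity) (by positivity)]
          exact ENNReal.ofReal_le_ofReal (div_rpow_le_young hx0 _ _ _ hη)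
      _ = ENNReal.ofReal η * (∫⁻ x in Ioc (0:ℝ) 1, ENNReal.ofReal (f x ^ (2:ℕ) / x ^ (2 + δ)))
            + ENNReal.ofReal ((∫ x in Ioc (0:ℝ) 1, x ^ (2 + δ - 2 * b)) / 4 / η) := by
          rw [lintegral_add_right _ (by fun_prop), lintegral_const_mul' _ _ ENNReal.ofReal_ne_top,
            ← ofReal_integral_eq_lintegral_ofReal (hK.div_const _), integral_div, div_div]
          filter_upwards [ae_restrict_mem measurableSet_Ioc] with x hx
          have hx0 := hx.1
          simp only [Pi.zero_apply]
          positivity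
      _ ≤ _ := by
          gcongr
          exact Ioc_subset_Ioi_self
  have hfar : (∫⁻ x in Ioi (1:ℝ), ENNReal.ofReal (|f x| / x ^ b))
      ≤ ENNReal.ofReal ((∫ x in Ioi (1:ℝ), x ^ (-b)) * M) := by
    rw [← integral_mul_const, ofReal_integral_eq_lintegral_ofReal (hL.mul_const _)]
    · refine setLIntegral_mono' measurableSet_Ioi fun x hx => ENNReal.ofReal_le_ofReal ?_
      have hx0 : (0:ℝ) < x := one_pos.trans hx
      rw [Real.rpow_neg hx0.le, div_eq_inv_mul]
      gcongr
      exact hf x hx0.le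
    · filter_upwards [ae_restrict_mem measurableSet_Ioi] with x hx
      have hx0 : (0:ℝ) < x := one_pos.trans hx
      simp only [Pi.zero_apply]
      positivity
  rw [← Ioc_union_Ioi_eq_Ioi (zero_le_one' ℝ),
    lintegral_union measurableSet_Ioi (Ioc_disjoint_Ioi le_rfl),
    Ioc_union_Ioi_eq_Ioi (zero_le_one' ℝ), ENNReal.ofReal_add (by positivity) (by positivity),
    ← add_assoc]
  exact add_le_add hnear hfar

/-- Optimizing a Young-type bound over the parameter `η` gives a quadratic bound. -/
lemma mul_sq_le_of_forall_young {A J : ℝ≥0∞} {K L M : ℝ} (hK : 0 ≤ K) (hL : 0 ≤ L) (hM : 0 ≤ M)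
    (h : ∀ η > (0:ℝ), A ≤ ENNReal.ofReal η * J + ENNReal.ofReal (K / η + L * M)) :
    ENNReal.ofReal (1 / (2 * (1 + K) ^ 2)) * A ^ (2:ℕ)
      ≤ J + ENNReal.ofReal ((1 + L ^ 2) * (1 + M ^ (2:ℕ))) := by
  rcases eq_or_ne J ⊤ with rfl | hJ
  · simp
  lift J to NNReal using hJ
  obtain ⟨s, hs, hsJ⟩ : ∃ s > (0:ℝ), s ^ 2 = J + 1 :=
    ⟨√(J + 1), by positivity, Real.sq_sqrt (by positivity)⟩
  have hA : A ≤ ENNReal.ofReal ((1 + K) * s + L * M) := by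
    refine (h s⁻¹ (by positivity)).trans ?_
    rw [← ENNReal.ofReal_coe_nnreal, ← ENNReal.ofReal_mul (by positivity),
      ← ENNReal.ofReal_add (by positivity) (by positivity)]
    refine ENNReal.ofReal_le_ofReal ?_
    have : s⁻¹ * J ≤ s := by
      rw [inv_mul_le_iff₀ hs]
      nlinarith
    rw [div_inv_eq_mul]
    linarith
  calc ENNReal.ofReal (1 / (2 * (1 + K) ^ 2)) * A ^ (2:ℕ)
      ≤ ENNReal.ofReal (1 / (2 * (1 + K) ^ 2)) * ENNReal.ofReal ((1 + K) * s + L * M) ^ (2:ℕ) := by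
        gcongr
    _ = ENNReal.ofReal (1 / (2 * (1 + K) ^ 2) * ((1 + K) * s + L * M) ^ 2) := by
        rw [← ENNReal.ofReal_pow (by positivity), ← ENNReal.ofReal_mul (by positivity)]
    _ ≤ ENNReal.ofReal (J + (1 + L ^ 2) * (1 + M ^ (2:ℕ))) := by
        refine ENNReal.ofReal_le_ofReal ?_
        rw [one_div, inv_mul_le_iff₀ (by positivity)]
        have hsq : ((1 + K) * s + L * M) ^ 2 ≤ 2 * (1 + K) ^ 2 * s ^ 2 + 2 * (L * M) ^ 2 := by
          nlinarith [sq_nonneg ((1 + K) * s - L * M)]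
        have hK1 : 1 ≤ (1 + K) ^ 2 := by nlinarith
        have hLM : (L * M) ^ 2 ≤ (1 + K) ^ 2 * (L * M) ^ 2 :=
          le_mul_of_one_le_left (sq_nonneg _) hK1
        have hrest : 0 ≤ (1 + K) ^ 2 * (L ^ 2 + M ^ 2) := by positivity
        rw [hsJ] at hsq
        nlinarith
    _ = _ := by
        rw [ENNReal.ofReal_add (by positivity) (by positivity), ENNReal.ofReal_coe_nnreal]

/-- **Weighted integral inequalities (Lemma fracestlem).**
For `0 < δ < 1` and `f` continuous on `[0,∞)`, `C¹` on `(0,∞)`, bounded by `M`, with `f 0 = 0`: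
(i) `∫ f²/x^{2+δ} ≥ C₁ (∫ |f|/x^{1+δ})² − C₂(1+M²)`, and
(ii) if moreover `0 < α < 1/4` and `δ < 1−4α`, then for every `ε > 0` there is `C_ε` with
`∫ |f|/x^{1+δ+2α} ≤ ε ∫ f²/x^{2+δ} + C_ε (1+M)`.  The inequalities are stated in the
extended reals (via `lintegral`), with the subtraction in (i) moved to the other side. -/
theorem weighted_integral_inequalities (δ : ℝ) (hδ0 : 0 < δ) (hδ1 : δ < 1) :
    (∃ C₁ > (0:ℝ), ∃ C₂ > (0:ℝ), ∀ (f : ℝ → ℝ) (M : ℝ), 0 ≤ M →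
      ContinuousOn f (Ici 0) → ContDiffOn ℝ 1 f (Ioi 0) → f 0 = 0 →
      (∀ x ∈ Ici (0:ℝ), |f x| ≤ M) →
      ENNReal.ofReal C₁ * (∫⁻ x in Ioi (0:ℝ), ENNReal.ofReal (|f x| / x ^ (1 + δ))) ^ (2:ℕ)
        ≤ (∫⁻ x in Ioi (0:ℝ), ENNReal.ofReal (f x ^ (2:ℕ) / x ^ (2 + δ)))
            + ENNReal.ofReal (C₂ * (1 + M ^ (2:ℕ)))) ∧
    (∀ α : ℝ, 0 < α → α < 1/4 → δ < 1 - 4*α → ∀ ε > (0:ℝ), ∃ Cε > (0:ℝ),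
      ∀ (f : ℝ → ℝ) (M : ℝ), 0 ≤ M →
      ContinuousOn f (Ici 0) → ContDiffOn ℝ 1 f (Ioi 0) → f 0 = 0 →
      (∀ x ∈ Ici (0:ℝ), |f x| ≤ M) →
      (∫⁻ x in Ioi (0:ℝ), ENNReal.ofReal (|f x| / x ^ (1 + δ + 2*α)))
        ≤ ENNReal.ofReal ε * (∫⁻ x in Ioi (0:ℝ), ENNReal.ofReal (f x ^ (2:ℕ) / x ^ (2 + δ)))
            + ENNReal.ofReal (Cε * (1 + M))) := by
  constructor
  · obtain ⟨K, hK, L, hL, h⟩ := lintegral_abs_div_rpow_le (b := 1 + δ) (δ := δ)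
      (by linarith) (by linarith)
    refine ⟨1 / (2 * (1 + K) ^ 2), by positivity, 1 + L ^ 2, by positivity,
      fun f M hM _ _ _ hf => ?_⟩
    exact mul_sq_le_of_forall_young hK hL hM fun η hη => h f M η hM hη hf
  · intro α hα _ hδα ε hε
    obtain ⟨K, hK, L, hL, h⟩ := lintegral_abs_div_rpow_le (b := 1 + δ + 2 * α) (δ := δ)
      (by linarith) (by linarith)
    refine ⟨1 + K / ε + L, by positivity, fun f M hM _ _ _ hf => ?_⟩
    refine (h f M ε hM hε hf).trans ?_
    gcongr
    have : 0 ≤ K / ε := by positivity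
    nlinarith [mul_nonneg this hM]
end

section
/- Preservation of positivity, evenness and monotonicity for the CCF equation (Lemma ccfmon): Let 0 ≤ α < 1/2 and let θ : ℝ × [0,T] → ℝ be a smooth bounded solution, with all spatial derivatives bounded, of ∂_t θ = (Hθ) ∂_x θ − L_α θ, where H is the Hilbert transform in x and L_α f(x) = P.V. ∫_ℝ (f(x) − f(x+y))/|y|^{1+2α} dy (L_0 = 0 when α = 0). Suppose the initial data θ₀ = θ(·,0) is smooth, bounded, positive, even, and strictly monotone decaying on (0,∞) (θ₀'(x) < 0 for x > 0). Then for every t ∈ [0,T], θ(·,t) remains positive, even, and monotone decaying on (0,∞). -/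
open Set MeasureTheory Filter Topology

/-- `HilbertPVAt f x v` says that the iterated principal value
`lim_{R→∞} lim_{ε→0+} ∫_{ε<|x−y|<R} f(y)/(x−y) dy` exists and equals `v`
(so that the Hilbert transform of `f` at `x` is `v/π`). -/
def HilbertPVAt (f : ℝ → ℝ) (x v : ℝ) : Prop :=
  ∃ g : ℝ → ℝ,
    (∀ R, 0 < R → Tendsto (fun ε => ∫ y in {y : ℝ | ε < |x - y| ∧ |x - y| < R}, f y / (x - y))
      (nhdsWithin 0 (Ioi 0)) (nhds (g R))) ∧
    Tendsto g atTop (nhds v)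

/-- Admissible weights: even, radially decreasing, decaying no faster than
`(1 + x ^ 2) ^ (-(1 / 2 + 2 * e))`, and integrable against `(1 + x ^ 2) ^ (e / 2)`. -/
structure IsWeight (e : ℝ) (φ : ℝ → ℝ) : Prop where
  pos : ∀ x, 0 < φ x
  anti : ∀ x z, |x| ≤ |z| → φ z ≤ φ x
  growth : ∀ x z, |x| ≤ |z| →
    φ x * (1 + x ^ 2) ^ (1 / 2 + 2 * e) ≤ φ z * (1 + z ^ 2) ^ (1 / 2 + 2 * e)
  diff : Differentiable ℝ φ
  deriv_le : ∀ x, |deriv φ x| * (1 + x ^ 2) ^ (1 / 2 : ℝ) ≤ 2 * φ x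
  integrable : Integrable (fun x => (1 + x ^ 2) ^ (e / 2) * φ x)

lemma one_le_one_add_sq (x : ℝ) : 1 ≤ 1 + x ^ 2 := by nlinarith [sq_nonneg x]

lemma one_add_sq_pos (x : ℝ) : 0 < 1 + x ^ 2 := by nlinarith [sq_nonneg x]

lemma continuous_one_add_sq_rpow (p : ℝ) : Continuous fun x : ℝ => (1 + x ^ 2) ^ p :=
  Continuous.rpow_const (by fun_prop) fun x => Or.inl (one_add_sq_pos x).ne'

/-- Comparison of weights at two points in terms of their distance. -/
lemma IsWeight.le_mul {e : ℝ} {φ : ℝ → ℝ} (hφ : IsWeight e φ) (he : 0 < e) (he' : e ≤ 1 / 4)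
    {x z q : ℝ} (hq : 1 ≤ q) (h : 1 + x ^ 2 ≤ q * (1 + z ^ 2)) : φ z ≤ q * φ x := by
  rcases le_total |x| |z| with hxz | hxz
  · have := hφ.anti x z hxz
    nlinarith [hφ.pos x]
  · have h1 := hφ.growth z x hxz
    have hz := one_add_sq_pos z
    have hx := one_add_sq_pos x
    have hp : 0 ≤ 1 / 2 + 2 * e := by linarith
    have h2 : (1 + x ^ 2) ^ (1 / 2 + 2 * e) ≤ q * (1 + z ^ 2) ^ (1 / 2 + 2 * e) := by
      calc (1 + x ^ 2) ^ (1 / 2 + 2 * e) ≤ (q * (1 + z ^ 2)) ^ (1 / 2 + 2 * e) :=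
            Real.rpow_le_rpow hx.le h hp
        _ = q ^ (1 / 2 + 2 * e) * (1 + z ^ 2) ^ (1 / 2 + 2 * e) :=
            Real.mul_rpow (by linarith) hz.le
        _ ≤ q ^ (1 : ℝ) * (1 + z ^ 2) ^ (1 / 2 + 2 * e) := by
            gcongr
            linarith
        _ = _ := by rw [Real.rpow_one]
    have hpz : 0 < (1 + z ^ 2) ^ (1 / 2 + 2 * e) := Real.rpow_pos_of_pos hz _
    have h3 : φ z * (1 + z ^ 2) ^ (1 / 2 + 2 * e) ≤ (q * φ x) * (1 + z ^ 2) ^ (1 / 2 + 2 * e) := by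
      calc _ ≤ _ := h1
        _ ≤ φ x * (q * (1 + z ^ 2) ^ (1 / 2 + 2 * e)) := by
            gcongr; exact (hφ.pos x).le
        _ = _ := by ring
    exact le_of_mul_le_mul_right h3 hpz

lemma one_add_sq_le_of_abs_sub_le_one {x z : ℝ} (h : |x - z| ≤ 1) :
    1 + x ^ 2 ≤ 4 * (1 + z ^ 2) := by
  have := abs_le.1 h
  nlinarith [sq_nonneg (x - 2 * z), sq_nonneg (x + z)]

lemma IsWeight.le_four_mul {e : ℝ} {φ : ℝ → ℝ} (hφ : IsWeight e φ) (he : 0 < e)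
    (he' : e ≤ 1 / 4) {x z : ℝ} (h : |x - z| ≤ 1) : φ z ≤ 4 * φ x :=
  hφ.le_mul he he' (by norm_num) (one_add_sq_le_of_abs_sub_le_one h)

lemma IsWeight.abs_deriv_le {e : ℝ} {φ : ℝ → ℝ} (hφ : IsWeight e φ) (x : ℝ) :
    |deriv φ x| ≤ 2 * φ x := by
  have h1 : 1 ≤ (1 + x ^ 2) ^ (1 / 2 : ℝ) :=
    Real.one_le_rpow (one_le_one_add_sq x) (by norm_num)
  have := hφ.deriv_le x
  nlinarith [abs_nonneg (deriv φ x)]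

lemma IsWeight.abs_sub_le {e : ℝ} {φ : ℝ → ℝ} (hφ : IsWeight e φ) (he : 0 < e)
    (he' : e ≤ 1 / 4) {x z : ℝ} (h : |x - z| ≤ 1) : |φ z - φ x| ≤ 8 * |z - x| * φ x := by
  have key := (convex_uIcc x z).norm_image_sub_le_of_norm_hasDerivWithin_le
    (f := φ) (f' := deriv φ) (C := 8 * φ x)
    (fun y _ => (hφ.diff y).hasDerivAt.hasDerivWithinAt)
    (fun y hy => by
      have h1 : |x - y| ≤ 1 := by
        have := abs_sub_left_of_mem_uIcc hy
        rw [abs_sub_comm] at this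
        rw [abs_sub_comm z x] at this
        exact this.trans h
      have h2 := hφ.le_four_mul he he' h1
      have h3 := hφ.abs_deriv_le y
      rw [Real.norm_eq_abs]
      linarith)
    left_mem_uIcc right_mem_uIcc
  rw [Real.norm_eq_abs, Real.norm_eq_abs] at key
  linarith

lemma IsWeight.integrable_self {e : ℝ} {φ : ℝ → ℝ} (hφ : IsWeight e φ) (he : 0 < e) :
    Integrable φ := by
  refine hφ.integrable.mono' hφ.diff.continuous.aestronglyMeasurable (ae_of_all _ fun x => ?_)
  rw [Real.norm_eq_abs, abs_of_pos (hφ.pos x)]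
  have h1 : 1 ≤ (1 + x ^ 2) ^ (e / 2) := Real.one_le_rpow (one_le_one_add_sq x) (by linarith)
  nlinarith [hφ.pos x]

/-- The concrete two-parameter family of weights. -/
noncomputable def wt (e ρ R x : ℝ) : ℝ :=
  (1 + x ^ 2) ^ (-ρ) * (1 + (x / R) ^ 2) ^ (-(1 / 2 + e))

lemma integrable_one_add_sq_rpow {p : ℝ} (hp : p < -(1 / 2)) :
    Integrable fun x : ℝ => (1 + x ^ 2) ^ p := by
  have := integrable_rpow_neg_one_add_norm_sq (E := ℝ) (μ := volume) (r := -2 * p)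
    (by simp; linarith)
  refine this.congr (ae_of_all _ fun x => ?_)
  simp only [Real.norm_eq_abs, sq_abs]
  congr 1; ring

lemma wt_pos (e ρ R x : ℝ) : 0 < wt e ρ R x :=
  mul_pos (Real.rpow_pos_of_pos (one_add_sq_pos _) _) (Real.rpow_pos_of_pos (one_add_sq_pos _) _)

lemma hasDerivAt_wt (e ρ R x : ℝ) (hR : 1 ≤ R) :
    HasDerivAt (wt e ρ R)
      (wt e ρ R x * (-(2 * ρ * x / (1 + x ^ 2)) - (1 + 2 * e) * x / (R ^ 2 + x ^ 2))) x := by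
  have hR0 : 0 < R := by linarith
  have h1 : HasDerivAt (fun x : ℝ => 1 + x ^ 2) (2 * x) x := by
    simpa using (hasDerivAt_pow 2 x).const_add 1
  have h2 : HasDerivAt (fun x : ℝ => 1 + (x / R) ^ 2) (2 * (x / R) * (1 / R)) x := by
    simpa using (((hasDerivAt_id x).div_const R).pow 2).const_add 1
  have h3 := (h1.rpow_const (p := -ρ) (Or.inl (one_add_sq_pos x).ne')).mul
    (h2.rpow_const (p := -(1 / 2 + e)) (Or.inl (one_add_sq_pos (x / R)).ne'))
  refine h3.congr_deriv ?_
  have e1 : (1 + x ^ 2) ^ (-ρ - 1) = (1 + x ^ 2) ^ (-ρ) / (1 + x ^ 2) :=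
    Real.rpow_sub_one (one_add_sq_pos x).ne' _
  have e2 : (1 + (x / R) ^ 2) ^ (-(1 / 2 + e) - 1)
      = (1 + (x / R) ^ 2) ^ (-(1 / 2 + e)) / (1 + (x / R) ^ 2) :=
    Real.rpow_sub_one (one_add_sq_pos _).ne' _
  have e3 : 1 + (x / R) ^ 2 = (R ^ 2 + x ^ 2) / R ^ 2 := by field_simp
  rw [e1, e2, wt]
  have hp2 : R ^ 2 + x ^ 2 ≠ 0 := by positivity
  have hp1 := (one_add_sq_pos x).ne'
  generalize (1 + (x / R) ^ 2) ^ (-(1 / 2 + e)) = B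
  rw [e3]
  generalize (1 + x ^ 2) ^ (-ρ) = A
  field_simp
  ring

lemma isWeight_wt {e ρ R : ℝ} (he : 0 < e) (he' : e ≤ 1 / 4) (hρ : 0 ≤ ρ) (hρe : ρ ≤ e)
    (hR : 1 ≤ R) : IsWeight e (wt e ρ R) where
  pos := wt_pos e ρ R
  anti x z h := by
    have h' : x ^ 2 ≤ z ^ 2 := sq_le_sq.2 h
    have h'' : (x / R) ^ 2 ≤ (z / R) ^ 2 := by
      rw [div_pow, div_pow]; gcongr
    unfold wt
    refine mul_le_mul ?_ ?_ (Real.rpow_nonneg (one_add_sq_pos _).le _)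
      (Real.rpow_nonneg (one_add_sq_pos _).le _)
    · exact Real.rpow_le_rpow_of_nonpos (one_add_sq_pos _) (by linarith) (by linarith)
    · exact Real.rpow_le_rpow_of_nonpos (one_add_sq_pos _) (by linarith) (by linarith)
  growth x z h := by
    have h' : x ^ 2 ≤ z ^ 2 := sq_le_sq.2 h
    have key : ∀ x : ℝ, wt e ρ R x * (1 + x ^ 2) ^ (1 / 2 + 2 * e)
        = (1 + x ^ 2) ^ (e - ρ) * ((1 + x ^ 2) / (1 + (x / R) ^ 2)) ^ (1 / 2 + e) := by
      intro x
      have hx := one_add_sq_pos x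
      have hx' := one_add_sq_pos (x / R)
      rw [Real.div_rpow hx.le hx'.le, wt, Real.rpow_neg hx'.le (1 / 2 + e),
        show (1 / 2 + 2 * e : ℝ) = ρ + (e - ρ) + (1 / 2 + e) by ring, Real.rpow_add hx,
        Real.rpow_add hx, Real.rpow_neg hx.le]
      have := (Real.rpow_pos_of_pos hx ρ).ne'
      field_simp
    rw [key, key]
    refine mul_le_mul ?_ ?_ (by positivity) (by positivity)
    · exact Real.rpow_le_rpow (one_add_sq_pos _).le (by linarith) (by linarith)
    · refine Real.rpow_le_rpow (by positivity) ?_ (by linarith)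
      rw [div_le_div_iff₀ (one_add_sq_pos _) (one_add_sq_pos _), div_pow, div_pow]
      have hR0 : (0 : ℝ) < R ^ 2 := by positivity
      have hR1 : (R ^ 2)⁻¹ ≤ 1 := inv_le_one_of_one_le₀ (by nlinarith)
      rw [div_eq_mul_inv, div_eq_mul_inv]
      nlinarith
  diff x := (hasDerivAt_wt e ρ R x hR).differentiableAt
  deriv_le x := by
    rw [(hasDerivAt_wt e ρ R x hR).deriv, abs_mul, abs_of_pos (wt_pos e ρ R x)]
    have hx := one_add_sq_pos x
    have h1 : |-(2 * ρ * x / (1 + x ^ 2)) - (1 + 2 * e) * x / (R ^ 2 + x ^ 2)|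
        ≤ 2 * (|x| / (1 + x ^ 2)) := by
      have a1 : |-(2 * ρ * x / (1 + x ^ 2))| = 2 * ρ * (|x| / (1 + x ^ 2)) := by
        rw [abs_neg, abs_div, abs_mul, abs_of_pos hx, abs_of_nonneg (by linarith : 0 ≤ 2 * ρ)]
        ring
      have a2 : |(1 + 2 * e) * x / (R ^ 2 + x ^ 2)| ≤ (1 + 2 * e) * (|x| / (1 + x ^ 2)) := by
        rw [abs_div, abs_mul, abs_of_pos (by linarith : 0 < 1 + 2 * e),
          abs_of_pos (by positivity : 0 < R ^ 2 + x ^ 2), mul_div_assoc]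
        have : 0 ≤ 1 + 2 * e := by linarith
        gcongr
        nlinarith
      have a3 : 0 ≤ |x| / (1 + x ^ 2) := by positivity
      refine (abs_sub _ _).trans ?_
      nlinarith
    have h2 : |x| / (1 + x ^ 2) * (1 + x ^ 2) ^ (1 / 2 : ℝ) ≤ 1 := by
      rw [← Real.sqrt_eq_rpow, div_mul_eq_mul_div, div_le_one hx]
      have s1 : |x| ≤ √(1 + x ^ 2) := Real.abs_le_sqrt (by linarith)
      nlinarith [Real.mul_self_sqrt hx.le, Real.sqrt_nonneg (1 + x ^ 2)]
    have h3 : 0 ≤ (1 + x ^ 2) ^ (1 / 2 : ℝ) := by positivity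
    have hw := wt_pos e ρ R x
    calc _ ≤ wt e ρ R x * (2 * (|x| / (1 + x ^ 2))) * (1 + x ^ 2) ^ (1 / 2 : ℝ) := by gcongr
      _ = 2 * wt e ρ R x * (|x| / (1 + x ^ 2) * (1 + x ^ 2) ^ (1 / 2 : ℝ)) := by ring
      _ ≤ 2 * wt e ρ R x * 1 := by gcongr
      _ = _ := by ring
  integrable := by
    have hR0 : 0 < R := by linarith
    have hi := (integrable_one_add_sq_rpow (p := e / 2 - (1 / 2 + e)) (by linarith)).const_mul
      ((R ^ 2) ^ (1 / 2 + e))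
    refine hi.mono' ?_ (ae_of_all _ fun x => ?_)
    · refine Continuous.aestronglyMeasurable ((continuous_one_add_sq_rpow _).mul ?_)
      exact continuous_iff_continuousAt.2 fun x => (hasDerivAt_wt e ρ R x hR).continuousAt
    · have hx := one_add_sq_pos x
      rw [Real.norm_eq_abs, abs_of_nonneg (mul_nonneg (by positivity) (wt_pos _ _ _ _).le), wt]
      have h1 : (1 + x ^ 2) ^ (-ρ) ≤ 1 :=
        Real.rpow_le_one_of_one_le_of_nonpos (one_le_one_add_sq x) (by linarith)
      have h2 : (1 + (x / R) ^ 2) ^ (-(1 / 2 + e))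
          ≤ (R ^ 2) ^ (1 / 2 + e) * (1 + x ^ 2) ^ (-(1 / 2 + e)) := by
        have : (1 + x ^ 2) / R ^ 2 ≤ 1 + (x / R) ^ 2 := by
          rw [div_le_iff₀ (by positivity), div_pow]
          field_simp
          nlinarith
        calc _ ≤ ((1 + x ^ 2) / R ^ 2) ^ (-(1 / 2 + e)) :=
              Real.rpow_le_rpow_of_nonpos (by positivity) this (by linarith)
          _ = _ := by
              rw [Real.div_rpow hx.le (by positivity), Real.rpow_neg (by positivity : 0 ≤ R ^ 2)]
              field_simp
      rw [Real.rpow_sub hx]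
      calc _ ≤ (1 + x ^ 2) ^ (e / 2)
            * (1 * ((R ^ 2) ^ (1 / 2 + e) * (1 + x ^ 2) ^ (-(1 / 2 + e)))) := by gcongr
        _ = _ := by rw [Real.rpow_neg hx.le]; field_simp

/-- Even, radially decreasing Lévy-type kernels with a quantitative tail. -/
structure IsKernel (e : ℝ) (κ : ℝ → ℝ) : Prop where
  meas : Measurable κ
  nonneg : ∀ y, 0 ≤ κ y
  even : ∀ y, κ (-y) = κ y
  anti : ∀ y z, y ≠ 0 → |y| ≤ |z| → κ z ≤ κ y
  tail : ∀ y, 1 ≤ |y| → κ y ≤ 2 * (1 + y ^ 2) ^ (-(1 / 2 + 2 * e))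
  integrable : Integrable fun y => min |y| 1 * κ y

/-- The nonlocal operator with kernel `κ`. -/
noncomputable def lap (κ f : ℝ → ℝ) (x : ℝ) : ℝ := ∫ y, (f x - f (x + y)) * κ y

/-- `f` is bounded by `A` and `A`-Lipschitz. -/
structure IsBL (f : ℝ → ℝ) (A : ℝ) : Prop where
  bdd : ∀ x, |f x| ≤ A
  lip : ∀ x z, |f x - f z| ≤ A * |x - z|

namespace IsBL

variable {f g : ℝ → ℝ} {A B : ℝ}

lemma nonneg (hf : IsBL f A) : 0 ≤ A := (abs_nonneg _).trans (hf.bdd 0)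

lemma continuous (hf : IsBL f A) : Continuous f := by
  have : LipschitzWith A.toNNReal f := LipschitzWith.of_dist_le_mul fun x z => by
    rw [Real.dist_eq, Real.dist_eq, Real.coe_toNNReal _ hf.nonneg]
    exact hf.lip x z
  exact this.continuous

lemma of_hasDerivAt {f' : ℝ → ℝ} (hb : ∀ x, |f x| ≤ A) (hd : ∀ x, HasDerivAt f (f' x) x)
    (hb' : ∀ x, |f' x| ≤ A) : IsBL f A where
  bdd := hb
  lip x z := by
    have := convex_univ.norm_image_sub_le_of_norm_hasDerivWithin_le (f := f) (f' := f') (C := A)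
      (fun y _ => (hd y).hasDerivWithinAt) (fun y _ => hb' y) (mem_univ z) (mem_univ x)
    simpa using this

lemma abs_deriv_le {f' : ℝ → ℝ} (hf : IsBL f A) (hd : ∀ x, HasDerivAt f (f' x) x) (x : ℝ) :
    |f' x| ≤ A := by
  have hl : LipschitzWith A.toNNReal f := LipschitzWith.of_dist_le_mul fun x z => by
    rw [Real.dist_eq, Real.dist_eq, Real.coe_toNNReal _ hf.nonneg]
    exact hf.lip x z
  have := norm_deriv_le_of_lipschitz (x₀ := x) hl
  rwa [(hd x).deriv, Real.coe_toNNReal _ hf.nonneg] at this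

lemma mono (hf : IsBL f A) (h : A ≤ B) : IsBL f B where
  bdd x := (hf.bdd x).trans h
  lip x z := (hf.lip x z).trans (by gcongr)

lemma sub (hf : IsBL f A) (hg : IsBL g B) : IsBL (fun x => f x - g x) (A + B) where
  bdd x := (abs_sub _ _).trans (add_le_add (hf.bdd x) (hg.bdd x))
  lip x z := by
    have h := abs_sub (f x - f z) (g x - g z)
    have : f x - g x - (f z - g z) = f x - f z - (g x - g z) := by ring
    rw [this]
    linarith [hf.lip x z, hg.lip x z]

lemma comp_neg (hf : IsBL f A) : IsBL (fun x => f (-x)) A where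
  bdd x := hf.bdd _
  lip x z := by
    have := hf.lip (-x) (-z)
    rwa [show -x - -z = -(x - z) by ring, abs_neg] at this

lemma neg (hf : IsBL f A) : IsBL (fun x => -f x) A where
  bdd x := by rw [abs_neg]; exact hf.bdd _
  lip x z := by
    have := hf.lip x z
    rwa [show -f x - -f z = -(f x - f z) by ring, abs_neg]

lemma mul (hf : IsBL f A) (hg : IsBL g B) : IsBL (fun x => f x * g x) (2 * A * B) where
  bdd x := by
    rw [abs_mul]
    nlinarith [hf.bdd x, hg.bdd x, abs_nonneg (f x), abs_nonneg (g x), hf.nonneg, hg.nonneg,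
      mul_le_mul (hf.bdd x) (hg.bdd x) (abs_nonneg _) hf.nonneg, mul_nonneg hf.nonneg hg.nonneg]
  lip x z := by
    rw [show f x * g x - f z * g z = f x * (g x - g z) + (f x - f z) * g z by ring]
    refine (abs_add_le _ _).trans ?_
    rw [abs_mul, abs_mul]
    have h1 := mul_le_mul (hf.bdd x) (hg.lip x z) (abs_nonneg _) hf.nonneg
    have h2 := mul_le_mul (hf.lip x z) (hg.bdd z) (abs_nonneg _)
      (mul_nonneg hf.nonneg (abs_nonneg _))
    nlinarith

lemma abs_sub_le (hf : IsBL f A) (x y : ℝ) : |f x - f (x + y)| ≤ 2 * A * min |y| 1 := by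
  have h1 := hf.lip x (x + y)
  rw [show x - (x + y) = -y by ring, abs_neg] at h1
  have h2 := abs_sub (f x) (f (x + y))
  have h3 := hf.bdd x
  have h4 := hf.bdd (x + y)
  have := hf.nonneg
  rcases le_total |y| 1 with h | h
  · rw [min_eq_left h]; nlinarith [abs_nonneg y]
  · rw [min_eq_right h]; linarith

end IsBL

section Kernel

variable {e : ℝ} {κ f g : ℝ → ℝ} {A B : ℝ}

lemma IsBL.abs_lap_integrand_le (hf : IsBL f A) (hκ : IsKernel e κ) (x y : ℝ) :
    |(f x - f (x + y)) * κ y| ≤ 2 * A * (min |y| 1 * κ y) := by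
  rw [abs_mul, abs_of_nonneg (hκ.nonneg y), ← mul_assoc]
  exact mul_le_mul_of_nonneg_right (hf.abs_sub_le x y) (hκ.nonneg y)

lemma IsBL.integrable_lap (hf : IsBL f A) (hκ : IsKernel e κ) (x : ℝ) :
    Integrable fun y => (f x - f (x + y)) * κ y := by
  refine (hκ.integrable.const_mul (2 * A)).mono' ?_ (ae_of_all _ (hf.abs_lap_integrand_le hκ x))
  have := hf.continuous
  exact ((by fun_prop : Continuous fun y => f x - f (x + y)).measurable.mul
    hκ.meas).aestronglyMeasurable

lemma IsBL.abs_lap_le (hf : IsBL f A) (hκ : IsKernel e κ) (x : ℝ) :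
    |lap κ f x| ≤ 2 * A * ∫ y, min |y| 1 * κ y := by
  rw [← integral_const_mul, lap]
  exact norm_integral_le_of_norm_le (f := fun y => (f x - f (x + y)) * κ y)
    (hκ.integrable.const_mul (2 * A)) (ae_of_all _ fun y => hf.abs_lap_integrand_le hκ x y)

lemma IsKernel.integral_nonneg (hκ : IsKernel e κ) : 0 ≤ ∫ y, min |y| 1 * κ y :=
  MeasureTheory.integral_nonneg fun y => mul_nonneg (by positivity) (hκ.nonneg y)

lemma lap_sub (hκ : IsKernel e κ) (hf : IsBL f A) (hg : IsBL g B) (x : ℝ) :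
    lap κ (fun x => f x - g x) x = lap κ f x - lap κ g x := by
  unfold lap
  rw [← integral_sub (hf.integrable_lap hκ x) (hg.integrable_lap hκ x)]
  congr 1; ext y; ring

lemma lap_comp_neg (hκ : IsKernel e κ) (x : ℝ) : lap κ (fun x => f (-x)) x = lap κ f (-x) := by
  unfold lap
  rw [← integral_neg_eq_self (fun y => (f (-x) - f (-x + y)) * κ y)]
  congr 1; ext y
  simp only [hκ.even, neg_add]

lemma hasDerivAt_lap (hκ : IsKernel e κ) {f' : ℝ → ℝ} (hf : IsBL f A) (hf' : IsBL f' A)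
    (hd : ∀ x, HasDerivAt f (f' x) x) (x : ℝ) : HasDerivAt (lap κ f) (lap κ f' x) x := by
  refine (hasDerivAt_integral_of_dominated_loc_of_deriv_le (F := fun x y => (f x - f (x + y)) * κ y)
    (F' := fun x y => (f' x - f' (x + y)) * κ y) (s := univ) univ_mem
    (Eventually.of_forall fun x => (hf.integrable_lap hκ x).aestronglyMeasurable)
    (hf.integrable_lap hκ x) (hf'.integrable_lap hκ x).aestronglyMeasurable
    (ae_of_all _ fun y x _ => hf'.abs_lap_integrand_le hκ x y)
    (hκ.integrable.const_mul (2 * A)) (ae_of_all _ fun y x _ => ?_)).2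
  exact ((hd x).sub ((hd (x + y)).comp_add_const x y)).mul_const _

/-- The convexity inequality for nonlocal operators, in pointwise form. -/
lemma lap_le_mul_lap (hκ : IsKernel e κ) (hf : IsBL f A) (hg : IsBL g B) {x p : ℝ}
    (h : ∀ z, g x - g z ≤ p * (f x - f z)) : lap κ g x ≤ p * lap κ f x := by
  unfold lap
  rw [← integral_const_mul]
  refine integral_mono (hg.integrable_lap hκ x) ((hf.integrable_lap hκ x).const_mul p) fun y => ?_
  have := mul_le_mul_of_nonneg_right (h (x + y)) (hκ.nonneg y)
  simpa [mul_assoc] using this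

lemma IsWeight.kernel_mul_abs_sub_le {φ : ℝ → ℝ} (hφ : IsWeight e φ) (he : 0 < e)
    (he' : e ≤ 1 / 4) (hκ : IsKernel e κ) (x y : ℝ) :
    |(φ (x - y) - φ x) * κ y|
      ≤ φ x * (8 * (min |y| 1 * κ y)) + 8 * (φ x * (1 + (x - y) ^ 2) ^ (-(1 / 2 + 2 * e))) := by
  have hκ0 := hκ.nonneg y
  have hφx := hφ.pos x
  have hJ : 0 ≤ (1 + (x - y) ^ 2) ^ (-(1 / 2 + 2 * e)) := by positivity
  rw [abs_mul, abs_of_nonneg hκ0]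
  rcases le_total |y| 1 with hy | hy
  · rw [min_eq_left hy]
    have h1 := hφ.abs_sub_le he he' (x := x) (z := x - y) (by simpa using hy)
    rw [show x - y - x = -y by ring, abs_neg] at h1
    have := mul_le_mul_of_nonneg_right h1 hκ0
    nlinarith [mul_nonneg hφx.le hJ]
  · rw [min_eq_right hy, one_mul]
    have h0 : |φ (x - y) - φ x| ≤ φ (x - y) + φ x := by
      refine (abs_sub _ _).trans ?_
      rw [abs_of_pos (hφ.pos _), abs_of_pos hφx]
    suffices h : φ (x - y) * κ y ≤ φ x * (4 * κ y)
        + 8 * (φ x * (1 + (x - y) ^ 2) ^ (-(1 / 2 + 2 * e))) by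
      nlinarith [mul_le_mul_of_nonneg_right h0 hκ0, mul_nonneg hφx.le hκ0]
    by_cases hxy : |x| / 2 ≤ |x - y|
    · have hsq : x ^ 2 ≤ 4 * (x - y) ^ 2 := by
        have : |x| ≤ |2 * (x - y)| := by rw [abs_mul, abs_two]; linarith
        have := sq_le_sq.2 this
        nlinarith
      have h2 := hφ.le_mul he he' (x := x) (z := x - y) (q := 4) (by norm_num) (by linarith)
      have := mul_le_mul_of_nonneg_right h2 hκ0
      nlinarith [mul_nonneg hφx.le hJ]
    · push Not at hxy
      have hge : |x| / 2 ≤ |y| := by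
        have := abs_sub_abs_le_abs_sub x y
        have h' := abs_add_le (x - y) y
        rw [sub_add_cancel] at h'
        linarith
      have hsq : x ^ 2 ≤ 4 * y ^ 2 := by
        have : |x| ≤ |2 * y| := by rw [abs_mul, abs_two]; linarith
        have := sq_le_sq.2 this
        nlinarith
      set p : ℝ := 1 / 2 + 2 * e with hp
      have hpx := Real.rpow_pos_of_pos (one_add_sq_pos x) p
      have hpy := Real.rpow_pos_of_pos (one_add_sq_pos y) p
      have hpz := Real.rpow_pos_of_pos (one_add_sq_pos (x - y)) p
      have g1 := hφ.growth (x - y) x (by linarith [abs_nonneg x])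
      have g2 := hκ.tail y hy
      rw [Real.rpow_neg (one_add_sq_pos y).le] at g2
      rw [Real.rpow_neg (one_add_sq_pos (x - y)).le]
      have g3 : (1 + x ^ 2) ^ p ≤ 4 * (1 + y ^ 2) ^ p := by
        calc (1 + x ^ 2) ^ p ≤ (4 * (1 + y ^ 2)) ^ p :=
              Real.rpow_le_rpow (one_add_sq_pos x).le (by linarith) (by linarith)
          _ = 4 ^ p * (1 + y ^ 2) ^ p := Real.mul_rpow (by norm_num) (one_add_sq_pos y).le
          _ ≤ 4 ^ (1 : ℝ) * (1 + y ^ 2) ^ p := by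
              gcongr
              · norm_num
              · linarith
          _ = _ := by rw [Real.rpow_one]
      have g4 : φ (x - y) ≤ φ x * (1 + x ^ 2) ^ p * ((1 + (x - y) ^ 2) ^ p)⁻¹ := by
        rw [← div_eq_mul_inv, le_div_iff₀ hpz]; exact g1
      have g5 : (1 + x ^ 2) ^ p * ((1 + y ^ 2) ^ p)⁻¹ ≤ 4 := by
        rw [← div_eq_mul_inv, div_le_iff₀ hpy]; exact g3
      calc φ (x - y) * κ y
          ≤ (φ x * (1 + x ^ 2) ^ p * ((1 + (x - y) ^ 2) ^ p)⁻¹) * (2 * ((1 + y ^ 2) ^ p)⁻¹) :=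
            mul_le_mul g4 g2 hκ0 (by positivity)
        _ = 2 * (φ x * ((1 + (x - y) ^ 2) ^ p)⁻¹) * ((1 + x ^ 2) ^ p * ((1 + y ^ 2) ^ p)⁻¹) := by
            ring
        _ ≤ 2 * (φ x * ((1 + (x - y) ^ 2) ^ p)⁻¹) * 4 := by gcongr
        _ ≤ _ := by nlinarith [mul_nonneg hφx.le hκ0]

/-- The constant in the weighted estimate for the nonlocal operator. -/
noncomputable def kernelConst (e : ℝ) (κ : ℝ → ℝ) : ℝ :=
  8 * (∫ y, min |y| 1 * κ y) + 8 * ∫ y : ℝ, (1 + y ^ 2) ^ (-(1 / 2 + 2 * e))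

lemma IsKernel.kernelConst_nonneg (hκ : IsKernel e κ) : 0 ≤ kernelConst e κ := by
  have h1 := hκ.integral_nonneg
  have h2 : 0 ≤ ∫ y : ℝ, (1 + y ^ 2) ^ (-(1 / 2 + 2 * e)) :=
    MeasureTheory.integral_nonneg fun y => by positivity
  unfold kernelConst
  linarith

lemma integrable_lap_mul_weight {φ : ℝ → ℝ} (hφ : IsWeight e φ) (he : 0 < e)
    (hκ : IsKernel e κ) (hf : IsBL f A) :
    Integrable (fun p : ℝ × ℝ => (f p.1 - f (p.1 + p.2)) * κ p.2 * φ p.1) := by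
  have hc := hf.continuous
  have h := ((hφ.integrable_self he).mul_prod hκ.integrable).const_mul (2 * A)
  refine h.mono' ?_ (ae_of_all _ fun p => ?_)
  · refine Measurable.aestronglyMeasurable ?_
    refine Measurable.mul (Measurable.mul ?_ ?_) ?_
    · exact Continuous.measurable (by fun_prop)
    · exact hκ.meas.comp measurable_snd
    · exact hφ.diff.continuous.measurable.comp measurable_fst
  · have h1 := hf.abs_lap_integrand_le hκ p.1 p.2
    rw [Real.norm_eq_abs, abs_mul, abs_of_pos (hφ.pos _)]
    have := mul_le_mul_of_nonneg_right h1 (hφ.pos p.1).le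
    linarith

lemma integrable_lap_mul_weight' {φ : ℝ → ℝ} (hφ : IsWeight e φ) (he : 0 < e)
    (hκ : IsKernel e κ) (hf : IsBL f A) : Integrable (fun x => lap κ f x * φ x) := by
  have := (integrable_lap_mul_weight hφ he hκ hf).integral_prod_left
  refine this.congr (ae_of_all _ fun x => ?_)
  simp only [lap]
  rw [integral_mul_const]

/-- Weighted lower bound for the nonlocal operator applied to a nonnegative function. -/
lemma neg_integral_lap_mul_le {φ : ℝ → ℝ} (hφ : IsWeight e φ) (he : 0 < e) (he' : e ≤ 1 / 4)
    (hκ : IsKernel e κ) (hf : IsBL f A) (hf0 : ∀ x, 0 ≤ f x) :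
    -∫ x, lap κ f x * φ x ≤ kernelConst e κ * ∫ x, f x * φ x := by
  have hc := hf.continuous
  have hφc := hφ.diff.continuous
  have hφi := hφ.integrable_self he
  have hJi := integrable_one_add_sq_rpow (p := -(1 / 2 + 2 * e)) (by linarith)
  have hshift : ∀ y, ∫ x, (f x - f (x + y)) * κ y * φ x
      = -∫ x, f x * ((φ (x - y) - φ x) * κ y) := by
    intro y
    have i1 : Integrable fun x => f x * φ x :=
      hφi.bdd_mul hc.aestronglyMeasurable (ae_of_all _ hf.bdd)
    have i2 : Integrable fun x => f (x + y) * φ x :=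
      hφi.bdd_mul (by fun_prop : Continuous fun x => f (x + y)).aestronglyMeasurable
        (ae_of_all _ fun x => hf.bdd (x + y))
    have i3 : Integrable fun x => f x * φ (x - y) :=
      (hφi.comp_sub_right y).bdd_mul hc.aestronglyMeasurable (ae_of_all _ hf.bdd)
    have e1 : ∫ x, f (x + y) * φ x = ∫ x, f x * φ (x - y) := by
      rw [← integral_add_right_eq_self (fun x => f x * φ (x - y)) y]
      simp
    calc ∫ x, (f x - f (x + y)) * κ y * φ x
        = ∫ x, κ y * (f x * φ x - f (x + y) * φ x) := by congr 1; ext x; ring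
      _ = κ y * ((∫ x, f x * φ x) - ∫ x, f x * φ (x - y)) := by
          rw [integral_const_mul, integral_sub i1 i2, e1]
      _ = -∫ x, κ y * (f x * φ (x - y) - f x * φ x) := by
          rw [integral_const_mul, integral_sub i3 i1]; ring
      _ = _ := by congr 2; ext x; ring
  have hInt : Integrable (fun p : ℝ × ℝ => f p.1 * ((φ (p.1 - p.2) - φ p.1) * κ p.2))
      (volume.prod volume) := by
    have hconv := (hφi.convolution_integrand (ContinuousLinearMap.mul ℝ ℝ) hJi).swap
    have hb : Integrable (fun p : ℝ × ℝ => A * (φ p.1 * (8 * (min |p.2| 1 * κ p.2))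
        + 8 * (φ p.1 * (1 + (p.1 - p.2) ^ 2) ^ (-(1 / 2 + 2 * e))))) (volume.prod volume) := by
      refine ((hφi.mul_prod (hκ.integrable.const_mul 8)).add
        (Integrable.const_mul ?_ 8)).const_mul A
      refine hconv.congr (ae_of_all _ fun p => ?_)
      simp only [Function.comp, Prod.fst_swap, Prod.snd_swap, ContinuousLinearMap.mul_apply']
      rw [show (p.2 - p.1) ^ 2 = (p.1 - p.2) ^ 2 by ring]
    refine hb.mono' ?_ (ae_of_all _ fun p => ?_)
    · refine Measurable.aestronglyMeasurable ?_
      refine Measurable.mul ?_ (Measurable.mul ?_ ?_)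
      · exact Continuous.measurable (by fun_prop)
      · exact Continuous.measurable (by fun_prop)
      · exact hκ.meas.comp measurable_snd
    · rw [norm_mul]
      exact mul_le_mul (hf.bdd _) (hφ.kernel_mul_abs_sub_le he he' hκ p.1 p.2) (norm_nonneg _)
        hf.nonneg
  have hI := integrable_lap_mul_weight hφ he hκ hf
  have e0 : ∫ x, lap κ f x * φ x = ∫ x, ∫ y, (f x - f (x + y)) * κ y * φ x := by
    congr 1; ext x; rw [lap, integral_mul_const]
  have e1 : -∫ x, lap κ f x * φ x = ∫ x, ∫ y, f x * ((φ (x - y) - φ x) * κ y) := by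
    rw [e0, integral_integral_swap (f := fun x y => (f x - f (x + y)) * κ y * φ x) hI,
      integral_integral_swap (f := fun x y => f x * ((φ (x - y) - φ x) * κ y)) hInt,
      ← integral_neg]
    congr 1; ext y
    rw [hshift y, neg_neg]
  rw [e1, ← integral_const_mul]
  refine integral_mono hInt.integral_prod_left ?_ fun x => ?_
  · exact (hφi.bdd_mul hc.aestronglyMeasurable (ae_of_all _ hf.bdd)).const_mul _
  · have hJx : Integrable fun y : ℝ => (1 + (x - y) ^ 2) ^ (-(1 / 2 + 2 * e)) :=
      hJi.comp_sub_left x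
    have hb : Integrable (fun y => f x * (φ x * (8 * (min |y| 1 * κ y))
        + 8 * (φ x * (1 + (x - y) ^ 2) ^ (-(1 / 2 + 2 * e))))) :=
      (((hκ.integrable.const_mul 8).const_mul (φ x)).add
        ((hJx.const_mul (φ x)).const_mul 8)).const_mul (f x)
    calc ∫ y, f x * ((φ (x - y) - φ x) * κ y)
        ≤ ∫ y, f x * (φ x * (8 * (min |y| 1 * κ y))
          + 8 * (φ x * (1 + (x - y) ^ 2) ^ (-(1 / 2 + 2 * e)))) := by
          have hle : ∀ y, f x * |(φ (x - y) - φ x) * κ y| ≤ f x * (φ x * (8 * (min |y| 1 * κ y))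
              + 8 * (φ x * (1 + (x - y) ^ 2) ^ (-(1 / 2 + 2 * e)))) := fun y =>
            mul_le_mul_of_nonneg_left (hφ.kernel_mul_abs_sub_le he he' hκ x y) (hf0 x)
          refine integral_mono (hb.mono' ?_ (ae_of_all _ fun y => ?_)) hb fun y => ?_
          · exact (((by fun_prop : Continuous fun y => φ (x - y) - φ x).measurable.mul
              hκ.meas).const_mul _).aestronglyMeasurable
          · rw [norm_mul, Real.norm_eq_abs, abs_of_nonneg (hf0 x)]
            exact hle y
          · exact (mul_le_mul_of_nonneg_left (le_abs_self _) (hf0 x)).trans (hle y)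
      _ = kernelConst e κ * (f x * φ x) := by
          rw [integral_const_mul, integral_add ((hκ.integrable.const_mul 8).const_mul (φ x))
            ((hJx.const_mul (φ x)).const_mul 8), integral_const_mul, integral_const_mul,
            integral_const_mul, integral_const_mul,
            integral_sub_left_eq_self (fun y : ℝ => (1 + y ^ 2) ^ (-(1 / 2 + 2 * e))) volume x,
            kernelConst]
          ring

end Kernel

lemma gronwall_of_deriv_le {E E' : ℝ → ℝ} {a b C S : ℝ} (hC : 0 ≤ C) (hS : 0 ≤ S)
    (hc : ContinuousOn E (Icc a b)) (hd : ∀ t ∈ Ioo a b, HasDerivAt E (E' t) t)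
    (hle : ∀ t ∈ Ioo a b, E' t ≤ C * E t + S) {t : ℝ} (ht : t ∈ Icc a b) :
    E t ≤ Real.exp (C * (t - a)) * (E a + S * (t - a)) := by
  set D : ℝ → ℝ := fun t => Real.exp (-(C * (t - a))) * E t - S * (t - a) with hD
  have hexp : ∀ t, HasDerivAt (fun t => Real.exp (-(C * (t - a))))
      (Real.exp (-(C * (t - a))) * (-C)) t := fun t => by
    have : HasDerivAt (fun t => -(C * (t - a))) (-(C * 1)) t :=
      (((hasDerivAt_id t).sub_const a).const_mul C).neg
    rw [mul_one] at this
    exact this.exp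
  have hD' : ∀ t ∈ Ioo a b, HasDerivAt D
      (Real.exp (-(C * (t - a))) * (-C) * E t + Real.exp (-(C * (t - a))) * E' t - S) t := by
    intro t ht
    have h2 : HasDerivAt (fun t => S * (t - a)) S t := by
      simpa using ((hasDerivAt_id t).sub_const a).const_mul S
    exact ((hexp t).mul (hd t ht)).sub h2
  have hanti : AntitoneOn D (Icc a b) := by
    refine antitoneOn_of_deriv_nonpos (convex_Icc a b) ?_ ?_ ?_
    · exact (ContinuousOn.mul (by fun_prop) hc).sub (by fun_prop)
    · rw [interior_Icc]
      exact fun t ht => (hD' t ht).differentiableAt.differentiableWithinAt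
    · rw [interior_Icc]
      intro t ht
      rw [(hD' t ht).deriv]
      have h1 := hle t ht
      have h2 : Real.exp (-(C * (t - a))) ≤ 1 :=
        Real.exp_le_one_iff.2 (by nlinarith [ht.1])
      nlinarith [mul_le_mul_of_nonneg_left h1 (Real.exp_pos (-(C * (t - a)))).le]
  have h := hanti (left_mem_Icc.2 (ht.1.trans ht.2)) ht ht.1
  simp only [hD, sub_self, mul_zero, neg_zero, Real.exp_zero, one_mul, sub_zero] at h
  have h3 : Real.exp (-(C * (t - a))) * E t ≤ E a + S * (t - a) := by linarith
  calc E t = Real.exp (C * (t - a)) * (Real.exp (-(C * (t - a))) * E t) := by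
        rw [← mul_assoc, ← Real.exp_add]; simp
    _ ≤ _ := by gcongr

/-- Weighted energy estimate for a drift-diffusion inequality. -/
theorem weighted_energy_le {e : ℝ} {κ φ : ℝ → ℝ} (he : 0 < e) (he' : e ≤ 1 / 4)
    (hκ : IsKernel e κ) (hφ : IsWeight e φ) {t₁ t₂ K k S A : ℝ} (hk : 0 ≤ k) (hK : 0 ≤ K)
    (hS : 0 ≤ S) {b c Q Qx Qt : ℝ → ℝ → ℝ}
    (hb : ∀ t ∈ Ioo t₁ t₂, ∀ x, HasDerivAt (fun x => b x t) (c x t) x)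
    (hbK : ∀ t ∈ Ioo t₁ t₂, ∀ x, |b x t| ≤ K * (1 + x ^ 2) ^ (e / 2))
    (hcK : ∀ t ∈ Ioo t₁ t₂, ∀ x, |c x t| ≤ K)
    (hQ0 : ∀ t ∈ Icc t₁ t₂, ∀ x, 0 ≤ Q x t)
    (hQA : ∀ t ∈ Icc t₁ t₂, IsBL (fun x => Q x t) A)
    (hQc : ∀ x, ContinuousOn (fun t => Q x t) (Icc t₁ t₂))
    (hQx : ∀ t ∈ Ioo t₁ t₂, ∀ x, HasDerivAt (fun x => Q x t) (Qx x t) x)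
    (hQt : ∀ t ∈ Ioo t₁ t₂, ∀ x, HasDerivAt (fun t => Q x t) (Qt x t) t)
    (hQtm : ∀ t ∈ Ioo t₁ t₂, Measurable fun x => Qt x t)
    (hQtA : ∀ t ∈ Ioo t₁ t₂, ∀ x, |Qt x t| ≤ A * (1 + x ^ 2) ^ (e / 2))
    (hr : ∀ t ∈ Ioo t₁ t₂, ∫ x, (Qt x t - b x t * Qx x t + lap κ (fun x => Q x t) x) * φ x
      ≤ k * (∫ x, Q x t * φ x) + S) {t : ℝ} (ht : t ∈ Icc t₁ t₂) :
    ∫ x, Q x t * φ x ≤ Real.exp ((kernelConst e κ + 3 * K + k) * (t - t₁))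
      * ((∫ x, Q x t₁ * φ x) + S * (t - t₁)) := by
  have hφi := hφ.integrable_self he
  have hφc := hφ.diff.continuous
  have hQi : ∀ t ∈ Icc t₁ t₂, Integrable fun x => Q x t * φ x := fun t ht =>
    hφi.bdd_mul (hQA t ht).continuous.aestronglyMeasurable (ae_of_all _ (hQA t ht).bdd)
  have hdom : Integrable fun x => A * ((1 + x ^ 2) ^ (e / 2) * φ x) := hφ.integrable.const_mul A
  have hder : ∀ t ∈ Ioo t₁ t₂, Integrable (fun x => Qt x t * φ x) ∧
      HasDerivAt (fun t => ∫ x, Q x t * φ x) (∫ x, Qt x t * φ x) t := by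
    intro t ht
    refine hasDerivAt_integral_of_dominated_loc_of_deriv_le (F := fun t x => Q x t * φ x)
      (F' := fun t x => Qt x t * φ x) (Ioo_mem_nhds ht.1 ht.2) ?_
      (hQi t (Ioo_subset_Icc_self ht)) ?_ (ae_of_all _ fun x s hs => ?_) hdom
      (ae_of_all _ fun x s hs => (hQt s hs x).mul_const _)
    · filter_upwards [Ioo_mem_nhds ht.1 ht.2] with s hs
      exact (hQi s (Ioo_subset_Icc_self hs)).aestronglyMeasurable
    · exact ((hQtm t ht).mul hφc.measurable).aestronglyMeasurable
    · rw [norm_mul, Real.norm_eq_abs, Real.norm_eq_abs, abs_of_pos (hφ.pos x), ← mul_assoc]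
      exact mul_le_mul_of_nonneg_right (hQtA s hs x) (hφ.pos x).le
  refine gronwall_of_deriv_le (by have := hκ.kernelConst_nonneg; positivity) hS ?_
    (fun t ht => (hder t ht).2) ?_ ht
  · intro t ht
    refine continuousWithinAt_of_dominated (bound := fun x => A * φ x) ?_ ?_ (hφi.const_mul A)
      (ae_of_all _ fun x => (hQc x t ht).mul_const _)
    · filter_upwards [self_mem_nhdsWithin] with s hs
      exact (hQi s hs).aestronglyMeasurable
    · filter_upwards [self_mem_nhdsWithin] with s hs
      refine ae_of_all _ fun x => ?_
      rw [norm_mul, Real.norm_eq_abs, Real.norm_eq_abs, abs_of_pos (hφ.pos x)]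
      exact mul_le_mul_of_nonneg_right ((hQA s hs).bdd x) (hφ.pos x).le
  · intro t ht
    have ht' := Ioo_subset_Icc_self ht
    have hA := (hQA t ht').nonneg
    have hbc : Continuous fun x => b x t :=
      continuous_iff_continuousAt.2 fun x => (hb t ht x).continuousAt
    have hcm : Measurable fun x => c x t := by
      have : (fun x => c x t) = deriv fun x => b x t := by ext x; exact (hb t ht x).deriv.symm
      rw [this]; exact measurable_deriv _
    have hQxm : Measurable fun x => Qx x t := by
      have : (fun x => Qx x t) = deriv fun x => Q x t := by ext x; exact (hQx t ht x).deriv.symm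
      rw [this]; exact measurable_deriv _
    have hQxA : ∀ x, |Qx x t| ≤ A := (hQA t ht').abs_deriv_le (hQx t ht)
    have hQcont := (hQA t ht').continuous
    have hbφ : Integrable fun x => b x t * φ x := by
      refine (hφ.integrable.const_mul K).mono' (hbc.mul hφc).aestronglyMeasurable
        (ae_of_all _ fun x => ?_)
      rw [norm_mul, Real.norm_eq_abs, Real.norm_eq_abs, abs_of_pos (hφ.pos x), ← mul_assoc]
      exact mul_le_mul_of_nonneg_right (hbK t ht x) (hφ.pos x).le
    have hbQ : Integrable fun x => b x t * φ x * Qx x t := by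
      have := hbφ.bdd_mul hQxm.aestronglyMeasurable (ae_of_all _ hQxA)
      exact this.congr (ae_of_all _ fun x => by ring)
    have hdrift : ∀ x, |c x t * φ x + b x t * deriv φ x| ≤ 3 * K * φ x := by
      intro x
      have h1 : |c x t * φ x| ≤ K * φ x := by
        rw [abs_mul, abs_of_pos (hφ.pos x)]
        exact mul_le_mul_of_nonneg_right (hcK t ht x) (hφ.pos x).le
      have h2 : |b x t * deriv φ x| ≤ 2 * K * φ x := by
        rw [abs_mul]
        have hp : (1 + x ^ 2) ^ (e / 2) ≤ (1 + x ^ 2) ^ (1 / 2 : ℝ) :=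
          Real.rpow_le_rpow_of_exponent_le (one_le_one_add_sq x) (by linarith)
        calc |b x t| * |deriv φ x| ≤ (K * (1 + x ^ 2) ^ (1 / 2 : ℝ)) * |deriv φ x| := by
              refine mul_le_mul_of_nonneg_right ((hbK t ht x).trans ?_) (abs_nonneg _)
              exact mul_le_mul_of_nonneg_left hp hK
          _ = K * (|deriv φ x| * (1 + x ^ 2) ^ (1 / 2 : ℝ)) := by ring
          _ ≤ K * (2 * φ x) := mul_le_mul_of_nonneg_left (hφ.deriv_le x) hK
          _ = _ := by ring
      exact (abs_add_le _ _).trans (by linarith)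
    have hdQ : Integrable fun x => (c x t * φ x + b x t * deriv φ x) * Q x t := by
      refine (hφi.const_mul (3 * K * A)).mono' ?_ (ae_of_all _ fun x => ?_)
      · exact (((hcm.mul hφc.measurable).add (hbc.measurable.mul (measurable_deriv φ))).mul
          hQcont.measurable).aestronglyMeasurable
      · rw [norm_mul, Real.norm_eq_abs, Real.norm_eq_abs]
        have := mul_le_mul (hdrift x) ((hQA t ht').bdd x) (abs_nonneg _)
          (by have := hφ.pos x; positivity)
        linarith
    have hparts : ∫ x, b x t * φ x * Qx x t
        = -∫ x, (c x t * φ x + b x t * deriv φ x) * Q x t :=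
      integral_mul_deriv_eq_deriv_mul_of_integrable
        (u := fun x => b x t * φ x) (v := fun x => Q x t)
        (fun x _ => (hb t ht x).mul (hφ.diff x).hasDerivAt) (fun x _ => hQx t ht x) hbQ hdQ
        (by
          have := hbφ.bdd_mul hQcont.aestronglyMeasurable (ae_of_all _ (hQA t ht').bdd)
          exact this.congr (ae_of_all _ fun x => by simp; ring))
    have hdriftle : ∫ x, b x t * φ x * Qx x t ≤ 3 * K * ∫ x, Q x t * φ x := by
      rw [hparts, ← integral_neg, ← integral_const_mul]
      refine integral_mono hdQ.neg ((hQi t ht').const_mul _) fun x => ?_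
      have h1 := neg_le_of_abs_le (hdrift x)
      have := mul_le_mul_of_nonneg_right (neg_le.1 h1) (hQ0 t ht' x)
      simp only
      linarith
    have hlap := neg_integral_lap_mul_le hφ he he' hκ (hQA t ht') (hQ0 t ht')
    have hlapi := integrable_lap_mul_weight' hφ he hκ (hQA t ht')
    have hsplit : ∫ x, (Qt x t - b x t * Qx x t + lap κ (fun x => Q x t) x) * φ x
        = (∫ x, Qt x t * φ x) - (∫ x, b x t * φ x * Qx x t)
          + ∫ x, lap κ (fun x => Q x t) x * φ x := by
      have i1 := (hder t ht).1
      rw [← integral_sub i1 hbQ, ← integral_add (f := fun x => Qt x t * φ x - b x t * φ x * Qx x t)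
        (i1.sub hbQ) hlapi]
      congr 1; ext x; ring
    have := hr t ht
    rw [hsplit] at this
    linarith

/-- The symmetric difference quotient appearing in the folded Hilbert transform. -/
noncomputable def symQuot (f : ℝ → ℝ) (x s : ℝ) : ℝ := (f (x - s) - f (x + s)) / s

section Hilbert

variable {f f' : ℝ → ℝ} {A : ℝ}

lemma IsBL.abs_symQuot_le (hf : IsBL f A) (x s : ℝ) : |symQuot f x s| ≤ 2 * A := by
  unfold symQuot
  rcases eq_or_ne s 0 with rfl | hs
  · simpa using hf.nonneg
  · rw [abs_div, div_le_iff₀ (abs_pos.2 hs)]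
    have := hf.lip (x - s) (x + s)
    rw [show x - s - (x + s) = -(2 * s) by ring, abs_neg, abs_mul, abs_two] at this
    linarith

lemma IsBL.abs_symQuot_le_div (hf : IsBL f A) (x : ℝ) {s : ℝ} (hs : 0 < s) :
    |symQuot f x s| ≤ 2 * A / s := by
  unfold symQuot
  rw [abs_div, abs_of_pos hs]
  gcongr
  exact (abs_sub _ _).trans (by linarith [hf.bdd (x - s), hf.bdd (x + s)])

lemma IsBL.measurable_symQuot (hf : IsBL f A) (x : ℝ) : Measurable (symQuot f x) := by
  have := hf.continuous
  exact (by fun_prop : Continuous fun s => f (x - s) - f (x + s)).measurable.div measurable_id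

lemma IsBL.intervalIntegrable_symQuot (hf : IsBL f A) (x a b : ℝ) :
    IntervalIntegrable (symQuot f x) volume a b := by
  refine (intervalIntegrable_const (c := 2 * A)).mono_fun
    (hf.measurable_symQuot x).aestronglyMeasurable (ae_of_all _ fun s => ?_)
  exact (hf.abs_symQuot_le x s).trans (le_abs_self _)

lemma setIntegral_annulus_eq (hf : Continuous f) (x : ℝ) {ε R : ℝ} (hε : 0 < ε) (hR : ε < R) :
    ∫ y in {y : ℝ | ε < |x - y| ∧ |x - y| < R}, f y / (x - y)
      = ∫ s in ε..R, symQuot f x s := by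
  have hset : {y : ℝ | ε < |x - y| ∧ |x - y| < R}
      = Ioo (x - R) (x - ε) ∪ Ioo (x + ε) (x + R) := by
    ext y
    simp only [mem_ofPred_eq, mem_union, mem_Ioo, lt_abs, abs_lt]
    constructor
    · rintro ⟨h1 | h1, h2, h3⟩
      · left; constructor <;> linarith
      · right; constructor <;> linarith
    · rintro (⟨h1, h2⟩ | ⟨h1, h2⟩)
      · exact ⟨Or.inl (by linarith), by linarith, by linarith⟩
      · exact ⟨Or.inr (by linarith), by linarith, by linarith⟩
  have hdisj : Disjoint (Ioo (x - R) (x - ε)) (Ioo (x + ε) (x + R)) := by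
    rw [Set.disjoint_left]
    rintro y ⟨_, h1⟩ ⟨h2, _⟩
    linarith
  have c1 : ContinuousOn (fun y => f y / (x - y)) (Icc (x - R) (x - ε)) :=
    hf.continuousOn.div (by fun_prop) fun y hy => by linarith [hy.2]
  have c2 : ContinuousOn (fun y => f y / (x - y)) (Icc (x + ε) (x + R)) :=
    hf.continuousOn.div (by fun_prop) fun y hy => by linarith [hy.1]
  have i1 : IntegrableOn (fun y => f y / (x - y)) (Ioo (x - R) (x - ε)) :=
    c1.integrableOn_Icc.mono_set Ioo_subset_Icc_self
  have i2 : IntegrableOn (fun y => f y / (x - y)) (Ioo (x + ε) (x + R)) :=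
    c2.integrableOn_Icc.mono_set Ioo_subset_Icc_self
  rw [hset, setIntegral_union hdisj measurableSet_Ioo i1 i2, ← integral_Ioc_eq_integral_Ioo,
    ← integral_Ioc_eq_integral_Ioo, ← intervalIntegral.integral_of_le (by linarith),
    ← intervalIntegral.integral_of_le (by linarith),
    ← intervalIntegral.integral_comp_sub_left (fun y => f y / (x - y)) x,
    ← intervalIntegral.integral_comp_add_left (fun y => f y / (x - y)) x,
    ← intervalIntegral.integral_add]
  · refine intervalIntegral.integral_congr fun s hs => ?_
    simp only [symQuot]
    rw [show x - (x - s) = s by ring, show x - (x + s) = -s by ring]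
    rw [div_neg]; ring
  · refine ContinuousOn.intervalIntegrable (ContinuousOn.div (by fun_prop) (by fun_prop) ?_)
    intro s hs
    rw [uIcc_of_le hR.le] at hs
    linarith [hs.1]
  · refine ContinuousOn.intervalIntegrable (ContinuousOn.div (by fun_prop) (by fun_prop) ?_)
    intro s hs
    rw [uIcc_of_le hR.le] at hs
    linarith [hs.1]

lemma HilbertPVAt.tendsto_symQuot (hf : IsBL f A) {x v : ℝ} (h : HilbertPVAt f x v) :
    Tendsto (fun R => ∫ s in (0 : ℝ)..R, symQuot f x s) atTop (𝓝 v) := by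
  obtain ⟨g, hg, hv⟩ := h
  refine hv.congr' ?_
  filter_upwards [eventually_gt_atTop 0] with R hR
  have h1 : Tendsto (fun ε => ∫ s in ε..R, symQuot f x s) (𝓝[>] 0) (𝓝 (g R)) := by
    refine (hg R hR).congr' ?_
    filter_upwards [Ioo_mem_nhdsGT hR] with ε hε
    exact setIntegral_annulus_eq hf.continuous x hε.1 hε.2
  have h2 : Tendsto (fun ε => ∫ s in ε..R, symQuot f x s) (𝓝[>] 0)
      (𝓝 (∫ s in (0 : ℝ)..R, symQuot f x s)) := by
    have hc : Continuous fun ε => ∫ s in R..ε, symQuot f x s :=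
      intervalIntegral.continuous_primitive (fun a b => hf.intervalIntegrable_symQuot x a b) R
    refine ((hc.neg.tendsto 0).mono_left (nhdsWithin_le_nhds (s := Ioi 0))).congr' ?_ |>.trans ?_
    · exact Eventually.of_forall fun ε => (intervalIntegral.integral_symm _ _).symm
    · exact (congrArg 𝓝 (intervalIntegral.integral_symm _ _).symm).le
  exact tendsto_nhds_unique h1 h2

lemma hasDerivAt_integral_symQuot (hf : IsBL f A) (hf' : IsBL f' A)
    (hd : ∀ x, HasDerivAt f (f' x) x) (a R x : ℝ) :
    HasDerivAt (fun x => ∫ s in a..R, symQuot f x s) (∫ s in a..R, symQuot f' x s) x := by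
  refine (intervalIntegral.hasDerivAt_integral_of_dominated_loc_of_deriv_le
    (F := symQuot f) (F' := symQuot f') (s := univ) (bound := fun _ => 2 * A) univ_mem
    (Eventually.of_forall fun x => (hf.measurable_symQuot x).aestronglyMeasurable)
    (hf.intervalIntegrable_symQuot x a R) (hf'.measurable_symQuot x).aestronglyMeasurable
    (ae_of_all _ fun s _ x _ => hf'.abs_symQuot_le x s)
    intervalIntegrable_const (ae_of_all _ fun s _ x _ => ?_)).2
  exact (((hd (x - s)).comp_sub_const x s).sub ((hd (x + s)).comp_add_const x s)).div_const s

lemma abs_integral_symQuot_deriv_le (hf : IsBL f A) (hf' : IsBL f' A)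
    (hd : ∀ x, HasDerivAt f (f' x) x) (x : ℝ) {a R : ℝ} (ha : 0 < a) (haR : a ≤ R) :
    |∫ s in a..R, symQuot f' x s| ≤ 4 * A / a := by
  have hfc := hf.continuous
  have hR : 0 < R := ha.trans_le haR
  have hA := hf.nonneg
  set G : ℝ → ℝ := fun s => -(f (x - s) + f (x + s)) with hG
  have hGb : ∀ s, |G s| ≤ 2 * A := fun s => by
    rw [hG, abs_neg]
    exact (abs_add_le _ _).trans (by linarith [hf.bdd (x - s), hf.bdd (x + s)])
  have hGc : Continuous G := by simp only [hG]; fun_prop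
  have hGd : ∀ s, HasDerivAt G (f' (x - s) - f' (x + s)) s := fun s => by
    have := (((hd (x - s)).comp_const_sub x s).add ((hd (x + s)).comp_const_add x s)).neg
    exact this.congr_deriv (by ring)
  have hci : IntervalIntegrable (fun s => G s / s ^ 2) volume a R := by
    refine ContinuousOn.intervalIntegrable (hGc.continuousOn.div (by fun_prop) fun s hs => ?_)
    rw [uIcc_of_le haR] at hs
    have : 0 < s := ha.trans_le hs.1
    positivity
  have hfund : ∫ s in a..R, (symQuot f' x s - G s / s ^ 2) = G R / R - G a / a := by
    refine intervalIntegral.integral_eq_sub_of_hasDerivAt (f := fun s => G s / s) (fun s hs => ?_)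
      ((hf'.intervalIntegrable_symQuot x a R).sub hci)
    rw [uIcc_of_le haR] at hs
    have hs0 : s ≠ 0 := (ha.trans_le hs.1).ne'
    refine ((hGd s).div (hasDerivAt_id s) hs0).congr_deriv ?_
    simp only [symQuot, id]
    field_simp
  rw [intervalIntegral.integral_sub (hf'.intervalIntegrable_symQuot x a R) hci] at hfund
  have hlast : |∫ s in a..R, G s / s ^ 2| ≤ 2 * A / a - 2 * A / R := by
    have hi : IntervalIntegrable (fun s : ℝ => 2 * A / s ^ 2) volume a R := by
      refine ContinuousOn.intervalIntegrable (continuousOn_const.div (by fun_prop) fun s hs => ?_)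
      rw [uIcc_of_le haR] at hs
      have : 0 < s := ha.trans_le hs.1
      positivity
    have hval : ∫ s in a..R, 2 * A / s ^ 2 = 2 * A / a - 2 * A / R := by
      rw [intervalIntegral.integral_eq_sub_of_hasDerivAt (f := fun s => -(2 * A) / s) ?_ hi]
      · ring
      · intro s hs
        rw [uIcc_of_le haR] at hs
        have hs0 : s ≠ 0 := (ha.trans_le hs.1).ne'
        refine ((hasDerivAt_const s (-(2 * A))).div (hasDerivAt_id s) hs0).congr_deriv ?_
        simp
    rw [← hval]
    refine intervalIntegral.norm_integral_le_of_norm_le (f := fun s => G s / s ^ 2) haR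
      (ae_of_all _ fun s hs => ?_) hi
    rw [Real.norm_eq_abs, abs_div, abs_of_nonneg (sq_nonneg s)]
    gcongr
    exact hGb s
  have e : ∫ s in a..R, symQuot f' x s = G R / R - G a / a + ∫ s in a..R, G s / s ^ 2 := by
    linarith
  have b1 : |G R / R| ≤ 2 * A / R := by
    rw [abs_div, abs_of_pos hR]; gcongr; exact hGb R
  have b2 : |G a / a| ≤ 2 * A / a := by
    rw [abs_div, abs_of_pos ha]; gcongr; exact hGb a
  rw [e]
  refine (abs_add_le _ _).trans ?_
  have := abs_sub (G R / R) (G a / a)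
  have : 4 * A / a = 2 * A / a + 2 * A / a := by ring
  linarith

/-- The folded Hilbert transform of a smooth bounded function is differentiable, with bounded
derivative. -/
lemma exists_hasDerivAt_hilbert (hf : IsBL f A) (hf' : IsBL f' A)
    (hd : ∀ x, HasDerivAt f (f' x) x) {V : ℝ → ℝ}
    (hV : ∀ x, Tendsto (fun R => ∫ s in (0 : ℝ)..R, symQuot f x s) atTop (𝓝 (V x))) :
    ∃ c : ℝ → ℝ, (∀ x, HasDerivAt V (c x) x) ∧ ∀ x, |c x| ≤ 6 * A := by
  have hA := hf.nonneg
  have hdiff : ∀ x a R, 0 < a → a ≤ R →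
      |(∫ s in (0 : ℝ)..R, symQuot f' x s) - ∫ s in (0 : ℝ)..a, symQuot f' x s| ≤ 4 * A / a := by
    intro x a R ha haR
    rw [intervalIntegral.integral_interval_sub_left (hf'.intervalIntegrable_symQuot x 0 R)
      (hf'.intervalIntegrable_symQuot x 0 a)]
    exact abs_integral_symQuot_deriv_le hf hf' hd x ha haR
  have hlim : Tendsto (fun a : ℝ => 4 * A / a) atTop (𝓝 0) :=
    tendsto_const_nhds.div_atTop tendsto_id
  have hex : ∀ x, ∃ c, Tendsto (fun R => ∫ s in (0 : ℝ)..R, symQuot f' x s) atTop (𝓝 c) := by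
    intro x
    refine cauchySeq_tendsto_of_complete (Metric.cauchySeq_iff'.2 fun ε hε => ?_)
    obtain ⟨N, hN0, hN⟩ := ((eventually_gt_atTop 0).and (hlim.eventually_lt_const hε)).exists
    exact ⟨N, fun n hn => (hdiff x N n hN0 hn).trans_lt hN⟩
  choose c hc using hex
  have hcd : ∀ x a, 0 < a → |c x - ∫ s in (0 : ℝ)..a, symQuot f' x s| ≤ 4 * A / a := by
    intro x a ha
    refine le_of_tendsto ((hc x).sub_const _).abs ?_
    filter_upwards [eventually_ge_atTop a] with R hR using hdiff x a R ha hR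
  refine ⟨c, fun x => ?_, fun x => ?_⟩
  · refine hasDerivAt_of_tendstoUniformly (l := atTop)
      (f := fun R x => ∫ s in (0 : ℝ)..R, symQuot f x s)
      (f' := fun R x => ∫ s in (0 : ℝ)..R, symQuot f' x s) ?_
      (Eventually.of_forall fun R x => hasDerivAt_integral_symQuot hf hf' hd 0 R x) hV x
    refine Metric.tendstoUniformly_iff.2 fun ε hε => ?_
    filter_upwards [eventually_gt_atTop 0, hlim.eventually_lt_const hε] with a ha hlt y
    exact (hcd y a ha).trans_lt hlt
  · have h1 := hcd x 1 one_pos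
    have h2 : |∫ s in (0 : ℝ)..1, symQuot f' x s| ≤ 2 * A := by
      have := intervalIntegral.norm_integral_le_of_norm_le_const (a := (0 : ℝ)) (b := 1)
        (f := symQuot f' x) (C := 2 * A) fun s _ => hf'.abs_symQuot_le x s
      simpa using this
    have h3 := abs_add_le (c x - ∫ s in (0 : ℝ)..1, symQuot f' x s)
      (∫ s in (0 : ℝ)..1, symQuot f' x s)
    rw [sub_add_cancel] at h3
    rw [div_one] at h1
    linarith

lemma IsBL.abs_integral_symQuot_le_log (hf : IsBL f A) (x : ℝ) {ρ : ℝ} (hρ : 1 ≤ ρ) :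
    |∫ s in (0 : ℝ)..ρ, symQuot f x s| ≤ 2 * A + 2 * A * Real.log ρ := by
  rw [← intervalIntegral.integral_add_adjacent_intervals
    (hf.intervalIntegrable_symQuot x 0 1) (hf.intervalIntegrable_symQuot x 1 ρ)]
  refine (abs_add_le _ _).trans (add_le_add ?_ ?_)
  · have := intervalIntegral.norm_integral_le_of_norm_le_const (a := (0 : ℝ)) (b := 1)
      (f := symQuot f x) (C := 2 * A) fun s _ => hf.abs_symQuot_le x s
    simpa using this
  · have h0 : (0 : ℝ) ∉ uIcc 1 ρ := by
      rw [uIcc_of_le hρ]; exact fun h => by linarith [h.1]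
    have hi : IntervalIntegrable (fun s : ℝ => 2 * A * s⁻¹) volume 1 ρ :=
      (intervalIntegral.intervalIntegrable_inv (fun s hs h => h0 (h ▸ hs))
        continuousOn_id).const_mul _
    have := intervalIntegral.norm_integral_le_of_norm_le (f := symQuot f x) hρ
      (ae_of_all _ fun s hs => (hf.abs_symQuot_le_div x (by linarith [hs.1])).trans_eq
        (div_eq_mul_inv _ _)) hi
    rwa [intervalIntegral.integral_const_mul, integral_inv h0, div_one] at this

/-- The folded Hilbert transform of a smooth bounded function grows at most logarithmically. -/
lemma abs_hilbert_sub_le (hf : IsBL f A) (hf' : IsBL f' A)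
    (hd : ∀ x, HasDerivAt f (f' x) x) {V : ℝ → ℝ}
    (hV : ∀ x, Tendsto (fun R => ∫ s in (0 : ℝ)..R, symQuot f x s) atTop (𝓝 (V x)))
    {e : ℝ} (he : 0 < e) (x : ℝ) :
    |V x - V 0| ≤ (8 * A + 4 * A / e) * (1 + x ^ 2) ^ (e / 2) := by
  have hA := hf.nonneg
  set ρ := max 1 |x| with hρ
  have hρ1 : 1 ≤ ρ := le_max_left _ _
  have hρx : |x| ≤ ρ := le_max_right _ _
  have hbound : |V x - V 0| ≤ 8 * A + 4 * A * Real.log ρ := by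
    refine le_of_tendsto ((hV x).sub (hV 0)).abs ?_
    filter_upwards [eventually_ge_atTop ρ] with R hR
    have hmv : |(∫ s in ρ..R, symQuot f x s) - ∫ s in ρ..R, symQuot f 0 s|
        ≤ 4 * A / ρ * |x - 0| :=
      convex_univ.norm_image_sub_le_of_norm_hasDerivWithin_le
        (f := fun x => ∫ s in ρ..R, symQuot f x s)
        (fun y _ => (hasDerivAt_integral_symQuot hf hf' hd ρ R y).hasDerivWithinAt)
        (fun y _ => abs_integral_symQuot_deriv_le hf hf' hd y (by linarith) hR)
        (mem_univ 0) (mem_univ x)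
    have hmv' : 4 * A / ρ * |x - 0| ≤ 4 * A := by
      rw [sub_zero, div_mul_eq_mul_div, div_le_iff₀ (by linarith)]
      gcongr
    have h1 := hf.abs_integral_symQuot_le_log x hρ1
    have h2 := hf.abs_integral_symQuot_le_log 0 hρ1
    rw [← intervalIntegral.integral_add_adjacent_intervals
      (hf.intervalIntegrable_symQuot x 0 ρ) (hf.intervalIntegrable_symQuot x ρ R),
      ← intervalIntegral.integral_add_adjacent_intervals
      (hf.intervalIntegrable_symQuot 0 0 ρ) (hf.intervalIntegrable_symQuot 0 ρ R)]
    rw [abs_le] at *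
    constructor <;> linarith
  have hsq : ρ ^ 2 ≤ 1 + x ^ 2 := by
    rcases max_choice 1 |x| with h | h
    · rw [hρ, h]; nlinarith [sq_nonneg x]
    · rw [hρ, h, sq_abs]; linarith
  have hlog : Real.log ρ ≤ (1 + x ^ 2) ^ (e / 2) / e := by
    have h1 : Real.log (ρ ^ 2) ≤ Real.log (1 + x ^ 2) := Real.log_le_log (by positivity) hsq
    rw [Real.log_pow] at h1
    have h2 := Real.log_le_rpow_div (one_add_sq_pos x).le (half_pos he)
    have h3 : (1 + x ^ 2) ^ (e / 2) / (e / 2) = 2 * ((1 + x ^ 2) ^ (e / 2) / e) := by field_simp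
    push_cast at h1
    linarith
  have hp : 1 ≤ (1 + x ^ 2) ^ (e / 2) := Real.one_le_rpow (one_le_one_add_sq x) (by linarith)
  calc |V x - V 0| ≤ 8 * A + 4 * A * Real.log ρ := hbound
    _ ≤ 8 * A * (1 + x ^ 2) ^ (e / 2) + 4 * A * ((1 + x ^ 2) ^ (e / 2) / e) := by
        refine add_le_add (le_mul_of_one_le_right (by positivity) hp) ?_
        gcongr
    _ = _ := by ring

end Hilbert

/-- A solution `θ` (with `u = θ_x`, `u₁ = θ_xx`, `b = Hθ`, `c = b_x`) of the nonlocal transport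
equation on `[t₁, t₂]`, with quantitative control of the drift. -/
structure IsDrift (e : ℝ) (κ : ℝ → ℝ) (t₁ t₂ M K : ℝ) (θ u u₁ b c : ℝ → ℝ → ℝ) : Prop where
  e_pos : 0 < e
  e_le : e ≤ 1 / 4
  kernel : IsKernel e κ
  K_nonneg : 0 ≤ K
  θ_cont : ∀ x, ContinuousOn (fun t => θ x t) (Icc t₁ t₂)
  u_cont : ∀ x, ContinuousOn (fun t => u x t) (Icc t₁ t₂)
  θ_x : ∀ t ∈ Icc t₁ t₂, ∀ x, HasDerivAt (fun x => θ x t) (u x t) x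
  u_x : ∀ t ∈ Icc t₁ t₂, ∀ x, HasDerivAt (fun x => u x t) (u₁ x t) x
  θ_bl : ∀ t ∈ Icc t₁ t₂, IsBL (fun x => θ x t) M
  u_bl : ∀ t ∈ Icc t₁ t₂, IsBL (fun x => u x t) M
  hilbert : ∀ t ∈ Icc t₁ t₂, ∀ x,
    Tendsto (fun R => ∫ s in (0 : ℝ)..R, symQuot (fun x => θ x t) x s) atTop
      (𝓝 (Real.pi * b x t))
  θ_t : ∀ t ∈ Ioo t₁ t₂, ∀ x,
    HasDerivAt (fun t => θ x t) (b x t * u x t - lap κ (fun x => θ x t) x) t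
  u_t : ∀ t ∈ Ioo t₁ t₂, ∀ x,
    HasDerivAt (fun t => u x t) (c x t * u x t + b x t * u₁ x t - lap κ (fun x => u x t) x) t
  b_x : ∀ t ∈ Ioo t₁ t₂, ∀ x, HasDerivAt (fun x => b x t) (c x t) x
  b_le : ∀ t ∈ Ioo t₁ t₂, ∀ x, |b x t| ≤ K * (1 + x ^ 2) ^ (e / 2)
  c_le : ∀ t ∈ Ioo t₁ t₂, ∀ x, |c x t| ≤ K

lemma measurable_of_hasDerivAt {f f' : ℝ → ℝ} (h : ∀ x, HasDerivAt f (f' x) x) :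
    Measurable f' := by
  rw [show f' = deriv f from funext fun x => (h x).deriv.symm]
  exact measurable_deriv f

lemma IsBL.continuous_lap {e : ℝ} {κ f : ℝ → ℝ} {A : ℝ} (hκ : IsKernel e κ) (hf : IsBL f A) :
    Continuous (lap κ f) := by
  have hc := hf.continuous
  refine continuous_of_dominated (F := fun x y => (f x - f (x + y)) * κ y)
    (fun x => (hf.integrable_lap hκ x).aestronglyMeasurable)
    (fun x => ae_of_all _ (hf.abs_lap_integrand_le hκ x)) (hκ.integrable.const_mul (2 * A))
    (ae_of_all _ fun y => by fun_prop)

lemma eq_zero_of_integral_mul_weight_nonpos {e : ℝ} {φ f : ℝ → ℝ} {A : ℝ} (he : 0 < e)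
    (hφ : IsWeight e φ) (hf : IsBL f A) (hf0 : ∀ x, 0 ≤ f x) (h : ∫ x, f x * φ x ≤ 0) (x : ℝ) :
    f x = 0 := by
  have hi : Integrable fun x => f x * φ x :=
    (hφ.integrable_self he).bdd_mul hf.continuous.aestronglyMeasurable (ae_of_all _ hf.bdd)
  have hnn : 0 ≤ fun x => f x * φ x := fun x => mul_nonneg (hf0 x) (hφ.pos x).le
  have h0 := (integral_eq_zero_iff_of_nonneg hnn hi).1 (le_antisymm h (integral_nonneg hnn))
  have hc : Continuous fun x => f x * φ x := hf.continuous.mul hφ.diff.continuous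
  have := congrFun ((Continuous.ae_eq_iff_eq volume hc continuous_zero).1 h0) x
  simpa [(hφ.pos x).ne'] using this

namespace IsDrift

variable {e : ℝ} {κ : ℝ → ℝ} {t₁ t₂ M K : ℝ} {θ u u₁ b c : ℝ → ℝ → ℝ}

lemma mono (h : IsDrift e κ t₁ t₂ M K θ u u₁ b c) {s₁ s₂ : ℝ} (h₁ : t₁ ≤ s₁) (h₂ : s₂ ≤ t₂) :
    IsDrift e κ s₁ s₂ M K θ u u₁ b c := by
  have hI : Icc s₁ s₂ ⊆ Icc t₁ t₂ := Icc_subset_Icc h₁ h₂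
  have hO : Ioo s₁ s₂ ⊆ Ioo t₁ t₂ := Ioo_subset_Ioo h₁ h₂
  exact ⟨h.e_pos, h.e_le, h.kernel, h.K_nonneg, fun x => (h.θ_cont x).mono hI,
    fun x => (h.u_cont x).mono hI, fun t ht => h.θ_x t (hI ht), fun t ht => h.u_x t (hI ht),
    fun t ht => h.θ_bl t (hI ht), fun t ht => h.u_bl t (hI ht), fun t ht => h.hilbert t (hI ht),
    fun t ht => h.θ_t t (hO ht), fun t ht => h.u_t t (hO ht), fun t ht => h.b_x t (hO ht),
    fun t ht => h.b_le t (hO ht), fun t ht => h.c_le t (hO ht)⟩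

variable (h : IsDrift e κ t₁ t₂ M K θ u u₁ b c)
include h

lemma b_continuous {t : ℝ} (ht : t ∈ Ioo t₁ t₂) : Continuous fun x => b x t :=
  continuous_iff_continuousAt.2 fun x => (h.b_x t ht x).continuousAt

lemma u₁_le {t : ℝ} (ht : t ∈ Icc t₁ t₂) (x : ℝ) : |u₁ x t| ≤ M :=
  (h.u_bl t ht).abs_deriv_le (h.u_x t ht) x

lemma exists_abs_θ_t_le : ∃ D, 0 ≤ D ∧ ∀ t ∈ Ioo t₁ t₂, ∀ x,
    |b x t * u x t - lap κ (fun x => θ x t) x| ≤ D * (1 + x ^ 2) ^ (e / 2) := by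
  rcases (Ioo t₁ t₂).eq_empty_or_nonempty with h0 | ⟨t₀, ht₀⟩
  · exact ⟨0, le_rfl, fun t ht => by simp [h0] at ht⟩
  have hM := (h.u_bl t₀ (Ioo_subset_Icc_self ht₀)).nonneg
  have hI := h.kernel.integral_nonneg
  have hK := h.K_nonneg
  refine ⟨K * M + 2 * M * ∫ y, min |y| 1 * κ y, by positivity, fun t ht x => ?_⟩
  have ht' := Ioo_subset_Icc_self ht
  have h1 := (h.θ_bl t ht').abs_lap_le h.kernel x
  have hp : 1 ≤ (1 + x ^ 2) ^ (e / 2) :=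
    Real.one_le_rpow (one_le_one_add_sq x) (by linarith [h.e_pos])
  have h2 : |b x t * u x t| ≤ K * (1 + x ^ 2) ^ (e / 2) * M := by
    rw [abs_mul]
    exact mul_le_mul (h.b_le t ht x) ((h.u_bl t ht').bdd x) (abs_nonneg _) (by positivity)
  have h3 : 2 * M * (∫ y, min |y| 1 * κ y)
      ≤ 2 * M * (∫ y, min |y| 1 * κ y) * (1 + x ^ 2) ^ (e / 2) :=
    le_mul_of_one_le_right (by positivity) hp
  refine (abs_sub _ _).trans ?_
  linarith

lemma exists_abs_u_t_le : ∃ D, 0 ≤ D ∧ ∀ t ∈ Ioo t₁ t₂, ∀ x,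
    |c x t * u x t + b x t * u₁ x t - lap κ (fun x => u x t) x| ≤ D * (1 + x ^ 2) ^ (e / 2) := by
  rcases (Ioo t₁ t₂).eq_empty_or_nonempty with h0 | ⟨t₀, ht₀⟩
  · exact ⟨0, le_rfl, fun t ht => by simp [h0] at ht⟩
  have hM := (h.u_bl t₀ (Ioo_subset_Icc_self ht₀)).nonneg
  have hI := h.kernel.integral_nonneg
  have hK := h.K_nonneg
  refine ⟨K * M + K * M + 2 * M * ∫ y, min |y| 1 * κ y, by positivity, fun t ht x => ?_⟩
  have ht' := Ioo_subset_Icc_self ht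
  have h1 := (h.u_bl t ht').abs_lap_le h.kernel x
  have hp : 1 ≤ (1 + x ^ 2) ^ (e / 2) :=
    Real.one_le_rpow (one_le_one_add_sq x) (by linarith [h.e_pos])
  have h2 : |b x t * u₁ x t| ≤ K * (1 + x ^ 2) ^ (e / 2) * M := by
    rw [abs_mul]
    exact mul_le_mul (h.b_le t ht x) (h.u₁_le ht' x) (abs_nonneg _) (by positivity)
  have h2' : |c x t * u x t| ≤ K * M := by
    rw [abs_mul]
    exact mul_le_mul (h.c_le t ht x) ((h.u_bl t ht').bdd x) (abs_nonneg _) (by positivity)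
  have h3 : K * M + 2 * M * (∫ y, min |y| 1 * κ y)
      ≤ (K * M + 2 * M * (∫ y, min |y| 1 * κ y)) * (1 + x ^ 2) ^ (e / 2) :=
    le_mul_of_one_le_right (by positivity) hp
  refine (abs_sub _ _).trans ?_
  have := abs_add_le (c x t * u x t) (b x t * u₁ x t)
  linarith

lemma measurable_θ_t {t : ℝ} (ht : t ∈ Ioo t₁ t₂) :
    Measurable fun x => b x t * u x t - lap κ (fun x => θ x t) x :=
  ((h.b_continuous ht).mul (h.u_bl t (Ioo_subset_Icc_self ht)).continuous).measurable.sub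
    ((h.θ_bl t (Ioo_subset_Icc_self ht)).continuous_lap h.kernel).measurable

lemma measurable_u_t {t : ℝ} (ht : t ∈ Ioo t₁ t₂) :
    Measurable fun x => c x t * u x t + b x t * u₁ x t - lap κ (fun x => u x t) x := by
  have ht' := Ioo_subset_Icc_self ht
  have h1 := (h.u_bl t ht').continuous.measurable
  have h2 := ((h.u_bl t ht').continuous_lap h.kernel).measurable
  have h3 := measurable_of_hasDerivAt (h.u_x t ht')
  have h4 := measurable_of_hasDerivAt (h.b_x t ht)
  have h5 := (h.b_continuous ht).measurable
  exact ((h4.mul h1).add (h5.mul h3)).sub h2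

/-- The weighted energy estimate along a solution. -/
theorem energy_le {φ : ℝ → ℝ} (hφ : IsWeight e φ) {k S A B : ℝ} (hk : 0 ≤ k) (hS : 0 ≤ S)
    {Q Qx Qt : ℝ → ℝ → ℝ} (hQ0 : ∀ t ∈ Icc t₁ t₂, ∀ x, 0 ≤ Q x t)
    (hQA : ∀ t ∈ Icc t₁ t₂, IsBL (fun x => Q x t) A)
    (hQc : ∀ x, ContinuousOn (fun t => Q x t) (Icc t₁ t₂))
    (hQx : ∀ t ∈ Ioo t₁ t₂, ∀ x, HasDerivAt (fun x => Q x t) (Qx x t) x)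
    (hQt : ∀ t ∈ Ioo t₁ t₂, ∀ x, HasDerivAt (fun t => Q x t) (Qt x t) t)
    (hQtm : ∀ t ∈ Ioo t₁ t₂, Measurable fun x => Qt x t)
    (hQtB : ∀ t ∈ Ioo t₁ t₂, ∀ x, |Qt x t| ≤ B * (1 + x ^ 2) ^ (e / 2))
    {ψ : ℝ → ℝ → ℝ} (hψi : ∀ t ∈ Ioo t₁ t₂, Integrable fun x => ψ x t * φ x)
    (hr : ∀ t ∈ Ioo t₁ t₂, ∀ x,
      Qt x t - b x t * Qx x t + lap κ (fun x => Q x t) x ≤ ψ x t)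
    (hψ : ∀ t ∈ Ioo t₁ t₂, ∫ x, ψ x t * φ x ≤ k * (∫ x, Q x t * φ x) + S)
    {t : ℝ} (ht : t ∈ Icc t₁ t₂) :
    ∫ x, Q x t * φ x ≤ Real.exp ((kernelConst e κ + 3 * K + k) * (t - t₁))
      * ((∫ x, Q x t₁ * φ x) + S * (t - t₁)) := by
  have hκ := h.kernel
  refine weighted_energy_le (A := max A B) h.e_pos h.e_le hκ hφ hk h.K_nonneg hS h.b_x h.b_le
    h.c_le hQ0 (fun t ht => (hQA t ht).mono (le_max_left _ _)) hQc hQx hQt hQtm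
    (fun t ht x => (hQtB t ht x).trans
      (mul_le_mul_of_nonneg_right (le_max_right _ _) (by positivity)))
    (fun t ht => (integral_mono ?_ (hψi t ht) fun x =>
      mul_le_mul_of_nonneg_right (hr t ht x) (hφ.pos x).le).trans (hψ t ht)) ht
  have ht' := Ioo_subset_Icc_self ht
  have hQxm := measurable_of_hasDerivAt (hQx t ht)
  have hA := (hQA t ht').nonneg
  have i1 : Integrable fun x => Qt x t * φ x := by
    refine (hφ.integrable.const_mul B).mono'
      ((hQtm t ht).mul hφ.diff.continuous.measurable).aestronglyMeasurable
      (ae_of_all _ fun x => ?_)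
    rw [norm_mul, Real.norm_eq_abs, Real.norm_eq_abs, abs_of_pos (hφ.pos x), ← mul_assoc]
    exact mul_le_mul_of_nonneg_right (hQtB t ht x) (hφ.pos x).le
  have i2 : Integrable fun x => b x t * Qx x t * φ x := by
    refine (hφ.integrable.const_mul (K * A)).mono'
      (((h.b_continuous ht).measurable.mul hQxm).mul
        hφ.diff.continuous.measurable).aestronglyMeasurable (ae_of_all _ fun x => ?_)
    rw [norm_mul, norm_mul, Real.norm_eq_abs, Real.norm_eq_abs, Real.norm_eq_abs,
      abs_of_pos (hφ.pos x)]
    have hK := h.K_nonneg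
    have h1 := mul_le_mul (h.b_le t ht x) ((hQA t ht').abs_deriv_le (hQx t ht) x) (abs_nonneg _)
      (by positivity)
    have := mul_le_mul_of_nonneg_right h1 (hφ.pos x).le
    linarith
  have i3 := integrable_lap_mul_weight' hφ h.e_pos hκ (hQA t ht')
  refine ((i1.sub i2).add i3).congr (ae_of_all _ fun x => ?_)
  simp only [Pi.add_apply, Pi.sub_apply]
  ring

/-- Energy estimate for the slope. -/
theorem integral_sq_slope_le {φ : ℝ → ℝ} (hφ : IsWeight e φ) {t : ℝ} (ht : t ∈ Icc t₁ t₂) :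
    ∫ x, u x t ^ 2 * φ x ≤ Real.exp ((kernelConst e κ + 3 * K + 2 * K) * (t - t₁))
      * ∫ x, u x t₁ ^ 2 * φ x := by
  have hK := h.K_nonneg
  obtain ⟨D, hD0, hD⟩ := h.exists_abs_u_t_le
  have hbl : ∀ t ∈ Icc t₁ t₂, IsBL (fun x => u x t ^ 2) (2 * M * M) := fun t ht => by
    simpa only [sq] using (h.u_bl t ht).mul (h.u_bl t ht)
  have hφi := hφ.integrable_self h.e_pos
  have hi : ∀ t ∈ Icc t₁ t₂, Integrable fun x => u x t ^ 2 * φ x := fun t ht =>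
    hφi.bdd_mul (hbl t ht).continuous.aestronglyMeasurable (ae_of_all _ (hbl t ht).bdd)
  have := h.energy_le hφ (k := 2 * K) (S := 0) (A := 2 * M * M) (B := 2 * M * D)
    (Q := fun x t => u x t ^ 2)
    (Qx := fun x t => 2 * u x t * u₁ x t)
    (Qt := fun x t => 2 * u x t
      * (c x t * u x t + b x t * u₁ x t - lap κ (fun x => u x t) x))
    (ψ := fun x t => 2 * K * u x t ^ 2)
    (by positivity) le_rfl (fun t _ x => sq_nonneg _) hbl
    (fun x => (h.u_cont x).pow 2)
    (fun t ht x => ((h.u_x t (Ioo_subset_Icc_self ht) x).pow 2).congr_deriv (by simp))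
    (fun t ht x => ((h.u_t t ht x).pow 2).congr_deriv (by simp))
    (fun t ht => ((h.u_bl t (Ioo_subset_Icc_self ht)).continuous.measurable.const_mul 2).mul
      (h.measurable_u_t ht))
    (fun t ht x => ?_)
    (fun t ht => by simpa only [mul_assoc] using (hi t (Ioo_subset_Icc_self ht)).const_mul (2 * K))
    (fun t ht x => ?_)
    (fun t ht => by rw [← integral_const_mul, add_zero]; simp only [mul_assoc]; exact le_rfl) ht
  · simpa using this
  · have hM := (h.u_bl t (Ioo_subset_Icc_self ht)).nonneg
    rw [abs_mul, abs_mul, abs_two, mul_assoc (2 * M)]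
    exact mul_le_mul (by linarith [(h.u_bl t (Ioo_subset_Icc_self ht)).bdd x]) (hD t ht x)
      (abs_nonneg _) (by positivity)
  · have ht' := Ioo_subset_Icc_self ht
    have h1 := lap_le_mul_lap (x := x) (p := 2 * u x t) h.kernel (h.u_bl t ht') (hbl t ht')
      fun z => by nlinarith [sq_nonneg (u x t - u z t)]
    have h2 := le_of_abs_le (h.c_le t ht x)
    nlinarith [mul_le_mul_of_nonneg_right h2 (sq_nonneg (u x t))]

/-- Energy estimate for convex functions of the solution. -/
theorem integral_convex_le {φ : ℝ → ℝ} (hφ : IsWeight e φ) {F F' : ℝ → ℝ} {G : ℝ}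
    (hF0 : ∀ s, 0 ≤ F s) (hF : ∀ s, HasDerivAt F (F' s) s) (hF'c : Continuous F')
    (hconv : ∀ s r, F s - F r ≤ F' s * (s - r))
    (hFG : ∀ s, |s| ≤ M → |F s| ≤ G) (hFG' : ∀ s, |s| ≤ M → |F' s| ≤ G)
    {t : ℝ} (ht : t ∈ Icc t₁ t₂) :
    ∫ x, F (θ x t) * φ x ≤ Real.exp ((kernelConst e κ + 3 * K) * (t - t₁))
      * ∫ x, F (θ x t₁) * φ x := by
  obtain ⟨D, hD0, hD⟩ := h.exists_abs_θ_t_le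
  have hG : 0 ≤ G := (abs_nonneg _).trans (hFG _ ((h.θ_bl t ht).bdd 0))
  have hM := (h.θ_bl t ht).nonneg
  have hx : ∀ t ∈ Icc t₁ t₂, ∀ x, HasDerivAt (fun x => F (θ x t)) (F' (θ x t) * u x t) x :=
    fun t ht x => (hF (θ x t)).comp x (h.θ_x t ht x)
  have hbl : ∀ t ∈ Icc t₁ t₂, IsBL (fun x => F (θ x t)) (max G (G * M)) := fun t ht => by
    refine IsBL.of_hasDerivAt (fun x => (hFG _ ((h.θ_bl t ht).bdd x)).trans (le_max_left _ _))
      (hx t ht) fun x => le_trans ?_ (le_max_right _ _)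
    rw [abs_mul]
    exact mul_le_mul (hFG' _ ((h.θ_bl t ht).bdd x)) ((h.u_bl t ht).bdd x) (abs_nonneg _) hG
  have := h.energy_le hφ (k := 0) (S := 0) (A := max G (G * M)) (B := G * D)
    (Q := fun x t => F (θ x t))
    (Qx := fun x t => F' (θ x t) * u x t)
    (Qt := fun x t => F' (θ x t) * (b x t * u x t - lap κ (fun x => θ x t) x))
    (ψ := fun x t => 0)
    le_rfl le_rfl (fun t _ x => hF0 _) hbl
    (fun x => (continuous_iff_continuousAt.2 fun s => (hF s).continuousAt).comp_continuousOn
      (h.θ_cont x))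
    (fun t ht x => hx t (Ioo_subset_Icc_self ht) x)
    (fun t ht x => (hF (θ x t)).comp t (h.θ_t t ht x))
    (fun t ht => (hF'c.comp (h.θ_bl t (Ioo_subset_Icc_self ht)).continuous).measurable.mul
      (h.measurable_θ_t ht))
    (fun t ht x => ?_) (fun t ht => by simp) (fun t ht x => ?_) (fun t ht => by simp) ht
  · simpa using this
  · rw [abs_mul, mul_assoc]
    exact mul_le_mul (hFG' _ ((h.θ_bl t (Ioo_subset_Icc_self ht)).bdd x)) (hD t ht x)
      (abs_nonneg _) hG
  · have ht' := Ioo_subset_Icc_self ht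
    have h1 := lap_le_mul_lap (x := x) (p := F' (θ x t)) h.kernel (h.θ_bl t ht') (hbl t ht')
      fun z => hconv _ _
    nlinarith

end IsDrift

lemma wt_zero_le_one {e : ℝ} (he : 0 < e) (R x : ℝ) : wt e 0 R x ≤ 1 := by
  unfold wt
  rw [neg_zero, Real.rpow_zero, one_mul]
  exact Real.rpow_le_one_of_one_le_of_nonpos (one_le_one_add_sq _) (by linarith)

lemma rpow_le_two_mul_wt {e R x : ℝ} (he : 0 < e) (he' : e ≤ 1 / 4) (hR : 1 ≤ R) (hx : |x| ≤ R)
    (ρ : ℝ) : (1 + x ^ 2) ^ (-ρ) ≤ 2 * wt e ρ R x := by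
  have h1 : (1 / 2 : ℝ) ≤ (1 + (x / R) ^ 2) ^ (-(1 / 2 + e)) := by
    have hle : 1 + (x / R) ^ 2 ≤ 2 := by
      have : |x / R| ≤ 1 := by
        rw [abs_div, abs_of_pos (by linarith : 0 < R), div_le_one (by linarith)]
        exact hx
      have := (sq_le_one_iff_abs_le_one _).2 this
      linarith
    calc (1 / 2 : ℝ) = 2 ^ (-1 : ℝ) := by rw [Real.rpow_neg_one]; norm_num
      _ ≤ 2 ^ (-(1 / 2 + e)) :=
          Real.rpow_le_rpow_of_exponent_le one_le_two (by linarith)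
      _ ≤ _ := Real.rpow_le_rpow_of_nonpos (one_add_sq_pos _) hle (by linarith)
  have h2 : 0 < (1 + x ^ 2) ^ (-ρ) := Real.rpow_pos_of_pos (one_add_sq_pos x) _
  unfold wt
  nlinarith

lemma wt_neg (e ρ R x : ℝ) : wt e ρ R (-x) = wt e ρ R x := by
  simp [wt, neg_div]

lemma rpow_mul_wt (e R x : ℝ) : (1 + x ^ 2) ^ e * wt e e R x = wt e 0 R x := by
  unfold wt
  rw [← mul_assoc, ← Real.rpow_add (one_add_sq_pos x), add_neg_cancel, neg_zero]

lemma hasDerivAt_max_zero_sq (s : ℝ) : HasDerivAt (fun s : ℝ => max s 0 ^ 2) (2 * max s 0) s := by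
  rcases lt_trichotomy s 0 with hs | rfl | hs
  · rw [max_eq_right hs.le, mul_zero]
    refine (hasDerivAt_const s (0 : ℝ)).congr_of_eventuallyEq ?_
    filter_upwards [Iio_mem_nhds hs] with r hr
    simp [max_eq_right (mem_Iio.1 hr).le]
  · rw [max_self, mul_zero, hasDerivAt_iff_isLittleO]
    refine Asymptotics.IsLittleO.of_bound fun ε hε => ?_
    filter_upwards [Metric.ball_mem_nhds (0 : ℝ) hε] with r hr
    rw [Metric.mem_ball, Real.dist_eq, sub_zero] at hr
    have h1 : max r 0 ≤ |r| := max_le (le_abs_self r) (abs_nonneg r)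
    have h2 : 0 ≤ max r 0 := le_max_right _ _
    simp only [max_self, sub_zero, smul_zero, Real.norm_eq_abs]
    rw [show max r 0 ^ 2 - 0 ^ 2 = max r 0 ^ 2 by ring, abs_of_nonneg (sq_nonneg _)]
    nlinarith [abs_nonneg r]
  · rw [max_eq_left hs.le]
    refine HasDerivAt.congr_of_eventuallyEq (f := fun r => r ^ 2)
      ((hasDerivAt_pow 2 s).congr_deriv (by simp)) ?_
    filter_upwards [Ioi_mem_nhds hs] with r hr
    simp only [max_eq_left (mem_Ioi.1 hr).le]

lemma max_zero_sq_sub_le (s r : ℝ) : max s 0 ^ 2 - max r 0 ^ 2 ≤ 2 * max s 0 * (s - r) := by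
  rcases le_total s 0 with hs | hs <;> rcases le_total r 0 with hr | hr <;>
    simp only [max_eq_left, max_eq_right, hs, hr] <;> nlinarith [sq_nonneg (s - r)]

namespace IsDrift

variable {e : ℝ} {κ : ℝ → ℝ} {t₁ t₂ M K : ℝ} {θ u u₁ b c : ℝ → ℝ → ℝ}

variable (h : IsDrift e κ t₁ t₂ M K θ u u₁ b c)
include h

theorem integral_posPart_sq_le {φ : ℝ → ℝ} (hφ : IsWeight e φ) (a d : ℝ)
    {t : ℝ} (ht : t ∈ Icc t₁ t₂) :
    ∫ x, max (a * θ x t + d) 0 ^ 2 * φ x ≤ Real.exp ((kernelConst e κ + 3 * K) * (t - t₁))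
      * ∫ x, max (a * θ x t₁ + d) 0 ^ 2 * φ x := by
  have hb : ∀ s, |s| ≤ M → max (a * s + d) 0 ≤ |a| * M + |d| := fun s hs => by
    have h1 : a * s ≤ |a| * M := (le_abs_self _).trans (by rw [abs_mul]; gcongr)
    have hM : 0 ≤ M := (abs_nonneg s).trans hs
    exact max_le (by linarith [le_abs_self d]) (by positivity)
  refine h.integral_convex_le hφ (F := fun s => max (a * s + d) 0 ^ 2)
    (F' := fun s => 2 * max (a * s + d) 0 * a)
    (G := (|a| * M + |d|) ^ 2 + 2 * (|a| * M + |d|) * |a|)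
    (fun s => sq_nonneg _) (fun s => ?_) (by fun_prop) (fun s r => ?_) (fun s hs => ?_)
    (fun s hs => ?_) ht
  · have h1 : HasDerivAt (fun s => a * s + d) a s := by
      simpa using ((hasDerivAt_id s).const_mul a).add_const d
    exact (hasDerivAt_max_zero_sq (a * s + d)).comp s h1
  · have := max_zero_sq_sub_le (a * s + d) (a * r + d)
    linarith
  · have h1 := hb s hs
    have h0 : 0 ≤ max (a * s + d) 0 := le_max_right _ _
    have := abs_nonneg a
    rw [abs_of_nonneg (sq_nonneg _)]
    nlinarith [mul_nonneg (h0.trans h1) this]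
  · have h1 := hb s hs
    have h0 : 0 ≤ max (a * s + d) 0 := le_max_right _ _
    rw [abs_mul, abs_of_nonneg (by positivity)]
    nlinarith [mul_le_mul_of_nonneg_right h1 (abs_nonneg a), sq_nonneg (|a| * M + |d|)]

/-- Strict lower bounds are preserved almost everywhere. -/
theorem ae_lt_of_forall_lt {m : ℝ} (hm : ∀ x, m < θ x t₁) {t : ℝ} (ht : t ∈ Icc t₁ t₂) :
    ∀ᵐ x, m < θ x t := by
  have ht₁ : t₁ ∈ Icc t₁ t₂ := left_mem_Icc.2 (ht.1.trans ht.2)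
  have hφ : IsWeight e (wt e 0 1) := isWeight_wt h.e_pos h.e_le le_rfl h.e_pos.le le_rfl
  set φ := wt e 0 1
  have hφi := hφ.integrable_self h.e_pos
  have hφc := hφ.diff.continuous
  have hθc := (h.θ_bl t ht).continuous
  have hθc₁ := (h.θ_bl t₁ ht₁).continuous
  have hle1 : ∀ x (n : ℕ), max (-(n : ℝ) * θ x t₁ + (1 + n * m)) 0 ≤ 1 := fun x n =>
    max_le (by nlinarith [hm x, (Nat.cast_nonneg n : (0 : ℝ) ≤ n)]) zero_le_one
  have hlim : Tendsto (fun n : ℕ => ∫ x, max (-(n : ℝ) * θ x t₁ + (1 + n * m)) 0 ^ 2 * φ x) atTop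
      (𝓝 (∫ _ : ℝ, (0 : ℝ))) := by
    refine tendsto_integral_of_dominated_convergence φ
      (fun n => (by fun_prop : Continuous _).aestronglyMeasurable) hφi
      (fun n => ae_of_all _ fun x => ?_) (ae_of_all _ fun x => ?_)
    · have h0 : 0 ≤ max (-(n : ℝ) * θ x t₁ + (1 + n * m)) 0 := le_max_right _ _
      rw [norm_mul, Real.norm_eq_abs, Real.norm_eq_abs, abs_of_pos (hφ.pos x),
        abs_of_nonneg (sq_nonneg _)]
      exact mul_le_of_le_one_left (hφ.pos x).le (pow_le_one₀ h0 (hle1 x n))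
    · refine tendsto_const_nhds.congr' ?_
      obtain ⟨N, hN⟩ := exists_nat_gt (1 / (θ x t₁ - m))
      filter_upwards [eventually_ge_atTop N] with n hn
      have hpos : 0 < θ x t₁ - m := sub_pos.2 (hm x)
      have h1 : 1 ≤ (n : ℝ) * (θ x t₁ - m) := by
        rw [div_lt_iff₀ hpos] at hN
        have : (N : ℝ) ≤ n := by exact_mod_cast hn
        nlinarith
      rw [max_eq_right (by linarith)]
      simp
  rw [integral_zero] at hlim
  set B : Set ℝ := {x | θ x t ≤ m} with hB
  have hBm : MeasurableSet B := measurableSet_le hθc.measurable measurable_const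
  have hle : ∀ n : ℕ, ∫ x, B.indicator φ x ≤ Real.exp ((kernelConst e κ + 3 * K) * (t - t₁))
      * ∫ x, max (-(n : ℝ) * θ x t₁ + (1 + n * m)) 0 ^ 2 * φ x := fun n => by
    refine le_trans ?_ (h.integral_posPart_sq_le hφ (-(n : ℝ)) (1 + n * m) ht)
    have hbd : ∀ x, ‖max (-(n : ℝ) * θ x t + (1 + n * m)) 0 ^ 2‖ ≤ (n * M + |1 + n * m|) ^ 2 := by
      intro x
      have hM := (h.θ_bl t ht).nonneg
      rw [Real.norm_eq_abs, abs_of_nonneg (sq_nonneg _)]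
      refine pow_le_pow_left₀ (le_max_right _ _) (max_le ?_ (by positivity)) 2
      have := neg_le_of_abs_le ((h.θ_bl t ht).bdd x)
      nlinarith [le_abs_self (1 + n * m), (Nat.cast_nonneg n : (0 : ℝ) ≤ n)]
    refine integral_mono (hφi.indicator hBm)
      (hφi.bdd_mul (by fun_prop : Continuous _).aestronglyMeasurable (ae_of_all _ hbd)) fun x => ?_
    by_cases hx : x ∈ B
    · rw [indicator_of_mem hx]
      have h1 : 1 ≤ max (-(n : ℝ) * θ x t + (1 + n * m)) 0 :=
        le_max_of_le_left (by
          have : θ x t ≤ m := hx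
          nlinarith [(Nat.cast_nonneg n : (0 : ℝ) ≤ n)])
      exact le_mul_of_one_le_left (hφ.pos x).le (one_le_pow₀ h1)
    · rw [indicator_of_notMem hx]
      have := hφ.pos x
      positivity
  have hz : ∫ x, B.indicator φ x ≤ 0 := by
    refine ge_of_tendsto' (x := atTop) ?_ hle
    simpa using hlim.const_mul (Real.exp ((kernelConst e κ + 3 * K) * (t - t₁)))
  have hnn : 0 ≤ B.indicator φ := fun x => indicator_nonneg (fun x _ => (hφ.pos x).le) x
  have h0 := (integral_eq_zero_iff_of_nonneg hnn (hφi.indicator hBm)).1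
    (le_antisymm hz (integral_nonneg hnn))
  filter_upwards [h0] with x hx
  by_contra hcon
  have hxB : x ∈ B := not_lt.1 hcon
  rw [indicator_of_mem hxB] at hx
  exact (hφ.pos x).ne' hx

/-- A solution which is below `m` outside a compact interval is never a constant above `m`. -/
theorem not_forall_eq_of_lt {m m' x₁ : ℝ} (hm : m < m') (hx₁ : 0 ≤ x₁)
    (h₀ : ∀ x, x₁ ≤ |x| → θ x t₁ ≤ m) {t : ℝ} (ht : t ∈ Icc t₁ t₂) : ¬ ∀ x, θ x t = m' := by
  intro hconst
  have ht₁ : t₁ ∈ Icc t₁ t₂ := left_mem_Icc.2 (ht.1.trans ht.2)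
  have hM := (h.θ_bl t ht).nonneg
  have hθc₁ := (h.θ_bl t₁ ht₁).continuous
  set C := Real.exp ((kernelConst e κ + 3 * K) * (t - t₁)) * ((M + |m|) ^ 2 * (2 * x₁))
  have key : ∀ R, 1 ≤ R → (m' - m) ^ 2 * R ≤ C := by
    intro R hR
    have hφ : IsWeight e (wt e 0 R) := isWeight_wt h.e_pos h.e_le le_rfl h.e_pos.le hR
    have hφi := hφ.integrable_self h.e_pos
    have hφc := hφ.diff.continuous
    have h1 := h.integral_posPart_sq_le hφ 1 (-m) ht
    have h2 : ∫ x, max (1 * θ x t₁ + -m) 0 ^ 2 * wt e 0 R x ≤ (M + |m|) ^ 2 * (2 * x₁) := by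
      have hi : Integrable ((Icc (-x₁) x₁).indicator fun _ => (M + |m|) ^ 2) :=
        (integrable_indicator_iff measurableSet_Icc).2 (integrableOn_const (by simp))
      have hval : ∫ x, (Icc (-x₁) x₁).indicator (fun _ => (M + |m|) ^ 2) x
          = (M + |m|) ^ 2 * (2 * x₁) := by
        rw [integral_indicator measurableSet_Icc, setIntegral_const, Measure.real,
          Real.volume_Icc, ENNReal.toReal_ofReal (by linarith), smul_eq_mul]
        ring
      rw [← hval]
      refine integral_mono_of_nonneg (ae_of_all _ fun x => ?_) hi (ae_of_all _ fun x => ?_)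
      · have := hφ.pos x
        positivity
      · by_cases hx : x ∈ Icc (-x₁) x₁
        · rw [indicator_of_mem hx]
          have hle : max (1 * θ x t₁ + -m) 0 ≤ M + |m| := by
            refine max_le ?_ (by positivity)
            have := le_of_abs_le ((h.θ_bl t₁ ht₁).bdd x)
            linarith [neg_abs_le m]
          have := pow_le_pow_left₀ (le_max_right _ _) hle 2
          exact (mul_le_of_le_one_right (sq_nonneg _) (wt_zero_le_one h.e_pos R x)).trans this
        · rw [indicator_of_notMem hx]
          have hx' : x₁ ≤ |x| := by
            by_contra hcon
            exact hx (abs_le.1 (le_of_lt (not_le.1 hcon)))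
          have hz : max (1 * θ x t₁ + -m) 0 = 0 := max_eq_right (by linarith [h₀ x hx'])
          simp only [hz]
          simp
    have h3 : (m' - m) ^ 2 * R ≤ ∫ x, max (1 * θ x t + -m) 0 ^ 2 * wt e 0 R x := by
      simp only [hconst, one_mul]
      rw [max_eq_left (by linarith), integral_const_mul, ← sub_eq_add_neg]
      refine mul_le_mul_of_nonneg_left ?_ (sq_nonneg _)
      have hi : Integrable ((Icc (-R) R).indicator fun _ => (1 / 2 : ℝ)) :=
        (integrable_indicator_iff measurableSet_Icc).2 (integrableOn_const (by simp))
      have hval : ∫ x, (Icc (-R) R).indicator (fun _ => (1 / 2 : ℝ)) x = R := by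
        rw [integral_indicator measurableSet_Icc, setIntegral_const, Measure.real,
          Real.volume_Icc, ENNReal.toReal_ofReal (by linarith), smul_eq_mul]
        ring
      calc R = _ := hval.symm
        _ ≤ _ := integral_mono hi hφi fun x => by
            by_cases hx : x ∈ Icc (-R) R
            · rw [indicator_of_mem hx]
              have := rpow_le_two_mul_wt h.e_pos h.e_le hR (abs_le.2 hx) 0
              rw [neg_zero, Real.rpow_zero] at this
              linarith
            · rw [indicator_of_notMem hx]
              exact (hφ.pos x).le
    calc (m' - m) ^ 2 * R ≤ _ := h3
      _ ≤ _ := h1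
      _ ≤ C := mul_le_mul_of_nonneg_left h2 (Real.exp_pos _).le
  have hpos : 0 < (m' - m) ^ 2 := by
    have := sub_pos.2 hm
    positivity
  have := key (max 1 (C / (m' - m) ^ 2 + 1)) (le_max_left _ _)
  have h4 : (m' - m) ^ 2 * (C / (m' - m) ^ 2 + 1) ≤ C :=
    (mul_le_mul_of_nonneg_left (le_max_right _ _) hpos.le).trans this
  rw [mul_add, mul_div_cancel₀ _ hpos.ne'] at h4
  linarith

end IsDrift

lemma odd_of_hasDerivAt_of_even {f f' : ℝ → ℝ} (hd : ∀ x, HasDerivAt f (f' x) x)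
    (heven : ∀ x, f (-x) = f x) (x : ℝ) : f' (-x) = -f' x := by
  have h1 := (hd (- -x)).comp (-x) (hasDerivAt_neg (-x))
  rw [show f ∘ Neg.neg = f from funext heven, neg_neg] at h1
  have := (hd (-x)).unique h1
  linarith

/-- For an odd function, the part having the same sign as the variable. -/
noncomputable def signPart (f : ℝ → ℝ) (x : ℝ) : ℝ := if 0 ≤ x then max (f x) 0 else min (f x) 0

section SignPart

variable {f : ℝ → ℝ} {A : ℝ}

lemma signPart_of_nonneg {x : ℝ} (hx : 0 ≤ x) : signPart f x = max (f x) 0 := if_pos hx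

lemma signPart_of_neg {x : ℝ} (hx : x < 0) : signPart f x = min (f x) 0 := if_neg (not_le.2 hx)

lemma signPart_mul_self (x : ℝ) : signPart f x * f x = signPart f x ^ 2 := by
  rcases le_or_gt 0 x with hx | hx
  · rw [signPart_of_nonneg hx]
    rcases le_total (f x) 0 with h | h <;> simp [h, sq]
  · rw [signPart_of_neg hx]
    rcases le_total (f x) 0 with h | h <;> simp [h, sq]

lemma abs_signPart_le (x : ℝ) : |signPart f x| ≤ |f x| := by
  rcases le_or_gt 0 x with hx | hx
  · rw [signPart_of_nonneg hx]
    rcases le_total (f x) 0 with h | h <;> simp [h]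
  · rw [signPart_of_neg hx]
    rcases le_total (f x) 0 with h | h <;> simp [h]

lemma signPart_neg (hodd : ∀ x, f (-x) = -f x) (x : ℝ) : signPart f (-x) = -signPart f x := by
  have h0 : f 0 = 0 := by have := hodd 0; rw [neg_zero] at this; linarith
  rcases lt_trichotomy 0 x with hx | rfl | hx
  · rw [signPart_of_neg (by linarith), signPart_of_nonneg hx.le, hodd]
    rcases le_total (f x) 0 with h | h <;> simp [h]
  · simp [signPart, h0]
  · rw [signPart_of_nonneg (by linarith), signPart_of_neg hx, hodd]
    rcases le_total (f x) 0 with h | h <;> simp [h]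

lemma IsBL.signPart (hf : IsBL f A) (h0 : f 0 = 0) : IsBL (signPart f) A where
  bdd x := (abs_signPart_le x).trans (hf.bdd x)
  lip := by
    have hcross : ∀ x z, 0 ≤ x → z < 0 →
        |_root_.signPart f x - _root_.signPart f z| ≤ A * |x - z| := by
      intro x z hx hz
      have h1 := (abs_signPart_le (f := f) x).trans (by simpa [h0] using hf.lip x 0)
      have h2 := (abs_signPart_le (f := f) z).trans (by simpa [h0] using hf.lip z 0)
      rw [abs_of_nonneg hx] at h1
      rw [abs_of_neg hz] at h2
      rw [abs_of_nonneg (by linarith : 0 ≤ x - z)]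
      refine (abs_sub _ _).trans ?_
      linarith
    intro x z
    rcases le_or_gt 0 x with hx | hx <;> rcases le_or_gt 0 z with hz | hz
    · rw [signPart_of_nonneg hx, signPart_of_nonneg hz]
      exact (abs_max_sub_max_le_abs _ _ _).trans (hf.lip x z)
    · exact hcross x z hx hz
    · rw [abs_sub_comm, abs_sub_comm x]
      exact hcross z x hz hx
    · rw [signPart_of_neg hx, signPart_of_neg hz]
      have := abs_min_sub_min_le_max (f x) 0 (f z) 0
      rw [sub_self, abs_zero, max_eq_left (abs_nonneg _)] at this
      exact this.trans (hf.lip x z)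

lemma hasDerivAt_min_zero_sq (s : ℝ) : HasDerivAt (fun s : ℝ => min s 0 ^ 2) (2 * min s 0) s := by
  have h1 : ∀ s : ℝ, min s 0 = -max (-s) 0 := fun s => by
    rw [← neg_zero, max_neg_neg, neg_neg, neg_zero]
  have h2 := (hasDerivAt_max_zero_sq (-s)).comp s (hasDerivAt_neg s)
  refine (h2.congr_deriv (by rw [h1]; ring)).congr_of_eventuallyEq
    (Eventually.of_forall fun r => ?_)
  simp only [h1, Function.comp, neg_sq]

lemma hasDerivAt_signPart_sq {f' : ℝ → ℝ} (hf : IsBL f A) (h0 : f 0 = 0)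
    (hd : ∀ x, HasDerivAt f (f' x) x) (x : ℝ) :
    HasDerivAt (fun x => signPart f x ^ 2) (2 * signPart f x * f' x) x := by
  rcases lt_trichotomy x 0 with hx | rfl | hx
  · rw [signPart_of_neg hx]
    refine ((hasDerivAt_min_zero_sq (f x)).comp x (hd x)).congr_of_eventuallyEq ?_
    filter_upwards [Iio_mem_nhds hx] with z hz
    simp [signPart_of_neg (mem_Iio.1 hz)]
  · have hs0 : signPart f 0 = 0 := by simp [signPart, h0]
    have hlip := (hf.signPart h0).lip
    rw [hs0, mul_zero, zero_mul, hasDerivAt_iff_isLittleO]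
    simp only [hs0, sub_zero, smul_zero]
    refine Asymptotics.IsLittleO.of_bound fun ε hε => ?_
    have hA := hf.nonneg
    filter_upwards [Metric.ball_mem_nhds (0 : ℝ) (by positivity : 0 < ε / (A ^ 2 + 1))] with z hz
    rw [Metric.mem_ball, Real.dist_eq, sub_zero, lt_div_iff₀ (by positivity)] at hz
    have h1 := hlip z 0
    rw [hs0, sub_zero, sub_zero] at h1
    rw [show signPart f z ^ 2 - 0 ^ 2 = signPart f z ^ 2 by ring, Real.norm_eq_abs,
      Real.norm_eq_abs, abs_pow]
    have h2 : |signPart f z| ^ 2 ≤ (A * |z|) ^ 2 := pow_le_pow_left₀ (abs_nonneg _) h1 2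
    nlinarith [abs_nonneg z, mul_nonneg (abs_nonneg z) (abs_nonneg z)]
  · rw [signPart_of_nonneg hx.le]
    refine ((hasDerivAt_max_zero_sq (f x)).comp x (hd x)).congr_of_eventuallyEq ?_
    filter_upwards [Ioi_mem_nhds hx] with z hz
    simp [signPart_of_nonneg (mem_Ioi.1 hz).le]

/-- The sign part of an odd function interacts well with radially decreasing kernels. -/
lemma lap_signPart_sq_le {e : ℝ} {κ : ℝ → ℝ} (hκ : IsKernel e κ) (hf : IsBL f A)
    (hodd : ∀ x, f (-x) = -f x) (x : ℝ) :
    lap κ (fun x => signPart f x ^ 2) x ≤ 2 * signPart f x * lap κ f x := by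
  have h0 : f 0 = 0 := by have := hodd 0; rw [neg_zero] at this; linarith
  have hP := hf.signPart h0
  have hP2 : IsBL (fun x => signPart f x ^ 2) (2 * A * A) := by
    simpa only [sq] using hP.mul hP
  have h1 := lap_le_mul_lap (x := x) (p := 2 * signPart f x) hκ hP hP2
    fun z => by nlinarith [sq_nonneg (signPart f x - signPart f z)]
  set N : ℝ → ℝ := fun x => f x - signPart f x with hN
  have hNbl : IsBL N (A + A) := hf.sub hP
  have hsub : lap κ N x = lap κ f x - lap κ (signPart f) x := lap_sub hκ hf hP x
  suffices hmain : 0 ≤ signPart f x * lap κ N x by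
    rw [hsub] at hmain
    nlinarith
  rcases eq_or_ne (signPart f x) 0 with hz | hz
  · rw [hz, zero_mul]
  have hNx : N x = 0 := by
    have := signPart_mul_self (f := f) x
    have : f x = signPart f x := mul_left_cancel₀ hz (by rw [this, sq])
    simp only [hN]; linarith
  have hNodd : ∀ z, N (-z) = -N z := fun z => by
    simp only [hN, hodd, signPart_neg hodd]; ring
  have hNneg : ∀ z, 0 < z → N z ≤ 0 := fun z hz => by
    simp only [hN, signPart_of_nonneg hz.le]
    linarith [le_max_left (f z) 0]
  have hi : Integrable fun y => N (x + y) * κ y := by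
    refine (hNbl.integrable_lap hκ x).neg.congr (ae_of_all _ fun y => ?_)
    simp [hNx]
  have hlap : lap κ N x = -∫ y, N (x + y) * κ y := by
    rw [lap, ← integral_neg]
    congr 1; ext y; rw [hNx]; ring
  have hi1 : Integrable fun z => N z * κ (z - x) := by
    refine (hi.comp_sub_right x).congr (ae_of_all _ fun z => ?_)
    simp only [add_sub_cancel]
  have hi2 : Integrable fun z => N z * κ (z + x) := by
    refine hi1.comp_neg.neg.congr (ae_of_all _ fun z => ?_)
    simp only [Pi.neg_apply, hNodd]
    rw [show -z - x = -(z + x) by ring, hκ.even]; ring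
  have e1 : ∫ y, N (x + y) * κ y = ∫ z, N z * κ (z - x) := by
    rw [← integral_sub_right_eq_self (fun y => N (x + y) * κ y) x]
    simp only [add_sub_cancel]
  have e2 : ∫ z, N z * κ (z - x) = -∫ z, N z * κ (z + x) := by
    rw [← integral_neg_eq_self, ← integral_neg]
    congr 1; ext z
    rw [hNodd, show -z - x = -(z + x) by ring, hκ.even]; ring
  have hsum : 2 * (signPart f x * lap κ N x)
      = ∫ z, -(signPart f x * (N z * κ (z - x) - N z * κ (z + x))) := by
    rw [integral_neg, integral_const_mul, integral_sub hi1 hi2, hlap, e1]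
    have e3 : ∫ z, N z * κ (z + x) = -∫ z, N z * κ (z - x) := by linarith
    rw [e3]
    ring
  suffices hnn : 0 ≤ ∫ z, -(signPart f x * (N z * κ (z - x) - N z * κ (z + x))) by linarith
  refine integral_nonneg_of_ae ?_
  have hae : ∀ᵐ z : ℝ, z ≠ x ∧ z ≠ -x := by
    filter_upwards [compl_mem_ae_iff.2 (measure_singleton x),
      compl_mem_ae_iff.2 (measure_singleton (-x))] with z h1 h2
    exact ⟨h1, h2⟩
  filter_upwards [hae] with z ⟨hzx, hzx'⟩
  have hd1 : z - x ≠ 0 := sub_ne_zero.2 hzx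
  have hd2 : z + x ≠ 0 := fun hh => hzx' (by linarith)
  have hsign : signPart f x * (N z * (κ (z - x) - κ (z + x))) ≤ 0 := by
    have hz0 : N 0 = 0 := by have := hNodd 0; rw [neg_zero] at this; linarith
    have hcmp : ∀ {p q : ℝ}, 0 ≤ p * q → |p - q| ≤ |p + q| := fun hpq =>
      sq_le_sq.1 (by nlinarith)
    have hcmp' : ∀ {p q : ℝ}, p * q ≤ 0 → |p + q| ≤ |p - q| := fun hpq =>
      sq_le_sq.1 (by nlinarith)
    rcases le_or_gt 0 x with hx | hx
    · have hp : 0 ≤ signPart f x := by rw [signPart_of_nonneg hx]; exact le_max_right _ _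
      refine mul_nonpos_of_nonneg_of_nonpos hp ?_
      rcases lt_trichotomy 0 z with hz' | rfl | hz'
      · exact mul_nonpos_of_nonpos_of_nonneg (hNneg z hz')
          (sub_nonneg.2 (hκ.anti _ _ hd1 (hcmp (by positivity))))
      · rw [hz0, zero_mul]
      · have := hNneg (-z) (by linarith)
        rw [hNodd] at this
        exact mul_nonpos_of_nonneg_of_nonpos (by linarith)
          (sub_nonpos.2 (hκ.anti _ _ hd2 (hcmp' (by nlinarith))))
    · have hp : signPart f x ≤ 0 := by rw [signPart_of_neg hx]; exact min_le_right _ _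
      refine mul_nonpos_of_nonpos_of_nonneg hp ?_
      rcases lt_trichotomy 0 z with hz' | rfl | hz'
      · exact mul_nonneg_of_nonpos_of_nonpos (hNneg z hz')
          (sub_nonpos.2 (hκ.anti _ _ hd2 (hcmp' (by nlinarith))))
      · rw [hz0, zero_mul]
      · have := hNneg (-z) (by linarith)
        rw [hNodd] at this
        exact mul_nonneg (by linarith)
          (sub_nonneg.2 (hκ.anti _ _ hd1 (hcmp (by nlinarith))))
  simp only [Pi.zero_apply]
  linarith

end SignPart

namespace IsDrift

variable {e : ℝ} {κ : ℝ → ℝ} {t₁ t₂ M K : ℝ} {θ u u₁ b c : ℝ → ℝ → ℝ}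

variable (h : IsDrift e κ t₁ t₂ M K θ u u₁ b c)
include h

/-- Even solutions remain decreasing on the positive half-line. -/
theorem slope_nonpos (heven : ∀ t ∈ Icc t₁ t₂, ∀ x, θ (-x) t = θ x t)
    (h₁ : ∀ x, 0 < x → u x t₁ ≤ 0) {t : ℝ} (ht : t ∈ Icc t₁ t₂) {x : ℝ} (hx : 0 < x) :
    u x t ≤ 0 := by
  have hK := h.K_nonneg
  have ht₁ : t₁ ∈ Icc t₁ t₂ := left_mem_Icc.2 (ht.1.trans ht.2)
  have hodd : ∀ t ∈ Icc t₁ t₂, ∀ x, u (-x) t = -u x t := fun t ht =>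
    odd_of_hasDerivAt_of_even (h.θ_x t ht) (heven t ht)
  have hu0 : ∀ t ∈ Icc t₁ t₂, u 0 t = 0 := fun t ht => by
    have := hodd t ht 0; rw [neg_zero] at this; linarith
  obtain ⟨D, hD0, hD⟩ := h.exists_abs_u_t_le
  have hφ : IsWeight e (wt e 0 1) := isWeight_wt h.e_pos h.e_le le_rfl h.e_pos.le le_rfl
  have hφi := hφ.integrable_self h.e_pos
  set P : ℝ → ℝ → ℝ := fun x t => signPart (fun x => u x t) x with hP
  have hPbl : ∀ t ∈ Icc t₁ t₂, IsBL (fun x => P x t) M := fun t ht =>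
    (h.u_bl t ht).signPart (hu0 t ht)
  have hbl : ∀ t ∈ Icc t₁ t₂, IsBL (fun x => P x t ^ 2) (2 * M * M) := fun t ht => by
    simpa only [sq] using (hPbl t ht).mul (hPbl t ht)
  have hi : ∀ t ∈ Icc t₁ t₂, Integrable fun x => P x t ^ 2 * wt e 0 1 x := fun t ht =>
    hφi.bdd_mul (hbl t ht).continuous.aestronglyMeasurable (ae_of_all _ (hbl t ht).bdd)
  have hPt : ∀ x, (0 ≤ x ∧ (fun t => P x t) = fun t => max (u x t) 0) ∨
      (x < 0 ∧ (fun t => P x t) = fun t => min (u x t) 0) := fun x => by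
    rcases le_or_gt 0 x with hx | hx
    · exact Or.inl ⟨hx, funext fun t => signPart_of_nonneg hx⟩
    · exact Or.inr ⟨hx, funext fun t => signPart_of_neg hx⟩
  have := h.energy_le hφ (k := 2 * K) (S := 0) (A := 2 * M * M) (B := 2 * M * D)
    (Q := fun x t => P x t ^ 2)
    (Qx := fun x t => 2 * P x t * u₁ x t)
    (Qt := fun x t => 2 * P x t
      * (c x t * u x t + b x t * u₁ x t - lap κ (fun x => u x t) x))
    (ψ := fun x t => 2 * K * P x t ^ 2)
    (by positivity) le_rfl (fun t _ x => sq_nonneg _) hbl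
    (fun x => ?_)
    (fun t ht x => hasDerivAt_signPart_sq (h.u_bl t (Ioo_subset_Icc_self ht))
      (hu0 t (Ioo_subset_Icc_self ht)) (h.u_x t (Ioo_subset_Icc_self ht)) x)
    (fun t ht x => ?_)
    (fun t ht => ((hPbl t (Ioo_subset_Icc_self ht)).continuous.measurable.const_mul 2).mul
      (h.measurable_u_t ht))
    (fun t ht x => ?_)
    (fun t ht => by simpa only [mul_assoc] using (hi t (Ioo_subset_Icc_self ht)).const_mul (2 * K))
    (fun t ht x => ?_)
    (fun t ht => by rw [← integral_const_mul, add_zero]; simp only [mul_assoc]; exact le_rfl) ht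
  · have hinit : ∀ x, P x t₁ = 0 := by
      have hpos : ∀ x, 0 < x → P x t₁ = 0 := fun x hx => by
        simp only [hP, signPart_of_nonneg hx.le]
        exact max_eq_right (h₁ x hx)
      intro x
      rcases lt_trichotomy 0 x with hx | rfl | hx
      · exact hpos x hx
      · simp [hP, signPart, hu0 t₁ ht₁]
      · have h2 := hpos (-x) (by linarith)
        have h3 := signPart_neg (f := fun x => u x t₁) (hodd t₁ ht₁) x
        simp only [hP] at h2 ⊢
        linarith
    have hle : ∫ x, P x t ^ 2 * wt e 0 1 x ≤ 0 := by simpa [hinit] using this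
    have hz := eq_zero_of_integral_mul_weight_nonpos h.e_pos hφ (hbl t ht)
      (fun x => sq_nonneg _) hle x
    have : P x t = 0 := by simpa using hz
    simp only [hP, signPart_of_nonneg hx.le] at this
    exact max_eq_right_iff.1 this
  · rcases hPt x with ⟨_, hx⟩ | ⟨_, hx⟩
    · have : ContinuousOn (fun t => P x t) (Icc t₁ t₂) := by
        rw [hx]; exact (h.u_cont x).sup continuousOn_const
      exact this.pow 2
    · have : ContinuousOn (fun t => P x t) (Icc t₁ t₂) := by
        rw [hx]; exact (h.u_cont x).inf continuousOn_const
      exact this.pow 2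
  · rcases hPt x with ⟨_, hx⟩ | ⟨_, hx⟩
    · simp only [congrFun hx]
      exact (hasDerivAt_max_zero_sq (u x t)).comp t (h.u_t t ht x)
    · simp only [congrFun hx]
      exact (hasDerivAt_min_zero_sq (u x t)).comp t (h.u_t t ht x)
  · have hM := (h.u_bl t (Ioo_subset_Icc_self ht)).nonneg
    rw [abs_mul, abs_mul, abs_two, mul_assoc (2 * M)]
    exact mul_le_mul (by linarith [(hPbl t (Ioo_subset_Icc_self ht)).bdd x]) (hD t ht x)
      (abs_nonneg _) (by positivity)
  · have ht' := Ioo_subset_Icc_self ht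
    have h1 := lap_signPart_sq_le h.kernel (h.u_bl t ht') (hodd t ht') x
    have h2 := le_of_abs_le (h.c_le t ht x)
    have h3 : P x t * u x t = P x t ^ 2 := signPart_mul_self (f := fun x => u x t) x
    have h4 := mul_le_mul_of_nonneg_right h2 (sq_nonneg (P x t))
    have h5 : 2 * P x t * (c x t * u x t + b x t * u₁ x t - lap κ (fun x => u x t) x)
        = 2 * c x t * (P x t * u x t) + b x t * (2 * P x t * u₁ x t)
          - 2 * P x t * lap κ (fun x => u x t) x := by ring
    rw [h5, h3]
    simp only [hP] at h1 h4 ⊢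
    linarith

end IsDrift

section SymQuot

variable {e : ℝ} {φ w v : ℝ → ℝ} {B M : ℝ}

lemma IsBL.integrable_sq_mul_weight (hw : IsBL w B) (hφ : IsWeight e φ) (he : 0 < e) :
    Integrable fun x => w x ^ 2 * φ x := by
  have h2 : IsBL (fun x => w x ^ 2) (2 * B * B) := by simpa only [sq] using hw.mul hw
  exact (hφ.integrable_self he).bdd_mul h2.continuous.aestronglyMeasurable (ae_of_all _ h2.bdd)

lemma abs_integral_mul_symQuot_le (hφ : IsWeight e φ) (he : 0 < e) (he' : e ≤ 1 / 4)
    (hw : IsBL w B) (hv : IsBL v M) {s : ℝ} (hs : 0 < s) (hs1 : s ≤ 1) :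
    |∫ x, w x * v x * φ x * symQuot w x s| ≤ 30 * M * ∫ x, w x ^ 2 * φ x := by
  have hwc := hw.continuous
  have hvc := hv.continuous
  have hφc := hφ.diff.continuous
  have hφi := hφ.integrable_self he
  have hB := hw.nonneg
  have hM := hv.nonneg
  have hInt : ∀ r, Integrable fun x => w x * v x * φ x * (w (x + r) / s) := fun r => by
    refine (hφi.const_mul (B * M * (B / s))).mono' (by fun_prop) (ae_of_all _ fun x => ?_)
    rw [Real.norm_eq_abs, abs_mul, abs_mul, abs_mul, abs_div, abs_of_pos (hφ.pos x),
      abs_of_pos hs]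
    have h1 : |w (x + r)| / s ≤ B / s := by gcongr; exact hw.bdd _
    have h2 := mul_le_mul (hw.bdd x) (hv.bdd x) (abs_nonneg _) hB
    have h3 := mul_le_mul h2 h1 (by positivity) (by positivity)
    nlinarith [mul_le_mul_of_nonneg_right h3 (hφ.pos x).le]
  have e1 : ∫ x, w x * v x * φ x * symQuot w x s
      = ∫ x, w x * w (x + s) * ((v (x + s) * φ (x + s) - v x * φ x) / s) := by
    have i1 := hInt (-s)
    have i2 := hInt s
    have i3 : Integrable fun x => w (x + s) * v (x + s) * φ (x + s) * (w x / s) := by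
      simpa using i1.comp_add_right s
    have e2 : ∫ x, w x * v x * φ x * (w (x + -s) / s)
        = ∫ x, w (x + s) * v (x + s) * φ (x + s) * (w x / s) := by
      rw [← integral_add_right_eq_self _ s]
      simp
    have e3 : ∀ x, w x * v x * φ x * symQuot w x s
        = w x * v x * φ x * (w (x + -s) / s) - w x * v x * φ x * (w (x + s) / s) := fun x => by
      rw [symQuot, ← sub_eq_add_neg]; ring
    simp_rw [e3]
    rw [integral_sub i1 i2, e2, ← integral_sub i3 i2]
    congr 1; ext x; ring
  have iE := hw.integrable_sq_mul_weight hφ he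
  have hb : ∀ x, ‖w x * w (x + s) * ((v (x + s) * φ (x + s) - v x * φ x) / s)‖
      ≤ 12 * M * (1 / 2 * (w x ^ 2 * φ x) + 2 * (w (x + s) ^ 2 * φ (x + s))) := fun x => by
    have hd : |x - (x + s)| ≤ 1 := by
      rw [show x - (x + s) = -s by ring, abs_neg, abs_of_pos hs]; exact hs1
    have hd' : |x + s - x| ≤ 1 := by rw [abs_sub_comm]; exact hd
    have h1 := hφ.abs_sub_le he he' hd
    have h2 := hφ.le_four_mul he he' hd
    have h3 := hφ.le_four_mul he he' hd'
    have h4 := hv.lip (x + s) x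
    rw [add_sub_cancel_left, abs_of_pos hs] at h1 h4
    have hp := hφ.pos x
    have hp' := hφ.pos (x + s)
    have h5 : |(v (x + s) * φ (x + s) - v x * φ x) / s| ≤ 12 * M * φ x := by
      rw [abs_div, abs_of_pos hs, div_le_iff₀ hs,
        show v (x + s) * φ (x + s) - v x * φ x
          = (v (x + s) - v x) * φ (x + s) + v x * (φ (x + s) - φ x) by ring]
      refine (abs_add_le _ _).trans ?_
      rw [abs_mul, abs_mul, abs_of_pos hp']
      have h6 := mul_le_mul h4 h2 hp'.le (by positivity)
      have h7 := mul_le_mul (hv.bdd x) h1 (abs_nonneg _) hM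
      linarith
    rw [Real.norm_eq_abs, abs_mul]
    have h8 := mul_le_mul_of_nonneg_left h5 (abs_nonneg (w x * w (x + s)))
    refine h8.trans ?_
    have h9 : |w x * w (x + s)| ≤ 1 / 2 * w x ^ 2 + 1 / 2 * w (x + s) ^ 2 := by
      rw [abs_le]
      constructor <;> nlinarith [sq_nonneg (w x + w (x + s)), sq_nonneg (w x - w (x + s))]
    have h10 := mul_le_mul_of_nonneg_right h9 (by positivity : 0 ≤ 12 * M * φ x)
    have h11 := mul_le_mul_of_nonneg_left h3 (by positivity : 0 ≤ 6 * M * w (x + s) ^ 2)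
    linarith
  have iE' : Integrable fun x => w (x + s) ^ 2 * φ (x + s) := iE.comp_add_right s
  rw [e1]
  refine (norm_integral_le_of_norm_le (((iE.const_mul (1 / 2)).add (iE'.const_mul 2)).const_mul
    (12 * M)) (ae_of_all _ hb)).trans (le_of_eq ?_)
  simp only [Pi.add_apply]
  rw [integral_const_mul, integral_add (iE.const_mul (1 / 2)) (iE'.const_mul 2),
    integral_const_mul, integral_const_mul, integral_add_right_eq_self (fun x => w x ^ 2 * φ x)]
  ring

lemma abs_integral_mul_near_le (hφ : IsWeight e φ) (he : 0 < e) (he' : e ≤ 1 / 4)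
    (hw : IsBL w B) (hv : IsBL v M) :
    |∫ x, w x * v x * φ x * ∫ s in (0 : ℝ)..1, symQuot w x s|
      ≤ 30 * M * ∫ x, w x ^ 2 * φ x := by
  have hwc := hw.continuous
  have hvc := hv.continuous
  have hφc := hφ.diff.continuous
  have hφi := hφ.integrable_self he
  have hB := hw.nonneg
  have hM := hv.nonneg
  simp_rw [intervalIntegral.integral_of_le (zero_le_one' ℝ), ← integral_const_mul]
  rw [integral_integral_swap]
  · have := norm_setIntegral_le_of_norm_le_const (μ := volume) (s := Ioc (0 : ℝ) 1)
      (f := fun s => ∫ x, w x * v x * φ x * symQuot w x s)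
      (C := 30 * M * ∫ x, w x ^ 2 * φ x) (by simp)
      fun s hs => abs_integral_mul_symQuot_le hφ he he' hw hv hs.1 hs.2
    rw [integral_const_mul]
    simpa using this
  · have hi : Integrable (fun p : ℝ × ℝ => B * M * (2 * B) * φ p.1 * 1)
        (volume.prod (volume.restrict (Ioc (0 : ℝ) 1))) :=
      (hφi.const_mul (B * M * (2 * B))).mul_prod (integrable_const _)
    refine hi.mono' ?_ (ae_of_all _ fun p => ?_)
    · have hm : Measurable fun p : ℝ × ℝ => symQuot w p.1 p.2 :=
        (by fun_prop : Continuous fun p : ℝ × ℝ => w (p.1 - p.2) - w (p.1 + p.2)).measurable.div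
          measurable_snd
      exact ((by fun_prop : Continuous fun p : ℝ × ℝ =>
        w p.1 * v p.1 * φ p.1).measurable.mul hm).aestronglyMeasurable
    · rw [Function.uncurry, Real.norm_eq_abs, abs_mul, abs_mul, abs_mul, abs_of_pos (hφ.pos p.1)]
      have h2 := mul_le_mul (hw.bdd p.1) (hv.bdd p.1) (abs_nonneg _) hB
      have h3 := mul_le_mul h2 (hw.abs_symQuot_le p.1 p.2) (abs_nonneg _) (by positivity)
      nlinarith [mul_le_mul_of_nonneg_right h3 (hφ.pos p.1).le]

lemma integral_abs_div_le (he : 0 < e) (he' : e ≤ 1 / 4) (hw : IsBL w B) {E : ℝ}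
    (hE : ∀ R, 1 ≤ R → ∫ x, w x ^ 2 * wt e e R x ≤ E) (x : ℝ) {L : ℝ} (hL : 1 ≤ L)
    {l : ℝ} (hl : 0 < l) :
    ∫ s in (1 : ℝ)..L, |w (x - s)| / s ≤ 2 * l * ((1 + x ^ 2) ^ e * E) + 2 / l := by
  have hwc := hw.continuous
  set n := |x| + L with hn
  have hn1 : 1 ≤ n := by linarith [abs_nonneg x]
  have hx := one_add_sq_pos x
  have hXp : 0 < (1 + x ^ 2) ^ e := Real.rpow_pos_of_pos hx e
  have hφ : IsWeight e (wt e e n) := isWeight_wt he he' he.le le_rfl hn1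
  have hφc := hφ.diff.continuous
  have iE := hw.integrable_sq_mul_weight hφ he
  have iE' : Integrable fun s => w (x - s) ^ 2 * wt e e n (x - s) := iE.comp_sub_left x
  have hpt : ∀ s ∈ Icc 1 L, |w (x - s)| / s
      ≤ 2 * l * (1 + x ^ 2) ^ e * (w (x - s) ^ 2 * wt e e n (x - s))
        + 1 / l * s ^ (-(3 / 2) : ℝ) := fun s hs => by
    have hs0 : 0 < s := by linarith [hs.1]
    have hz := one_add_sq_pos (x - s)
    have hsp := one_add_sq_pos s
    set p := (1 + s ^ 2) ^ (-e) with hp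
    have hp0 : 0 < p := Real.rpow_pos_of_pos hsp _
    have habs : |x - s| ≤ n := (abs_sub _ _).trans (by rw [abs_of_pos hs0]; linarith [hs.2])
    have h1 := rpow_le_two_mul_wt he he' hn1 habs e
    have h2 : p ≤ 2 * (1 + x ^ 2) ^ e * (1 + (x - s) ^ 2) ^ (-e) := by
      have h3 : 1 + (x - s) ^ 2 ≤ 2 * ((1 + x ^ 2) * (1 + s ^ 2)) := by
        nlinarith [sq_nonneg (x + s), sq_nonneg (x * s)]
      have h4 : (1 + (x - s) ^ 2) ^ e ≤ 2 * ((1 + x ^ 2) ^ e * (1 + s ^ 2) ^ e) := by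
        calc (1 + (x - s) ^ 2) ^ e ≤ (2 * ((1 + x ^ 2) * (1 + s ^ 2))) ^ e :=
              Real.rpow_le_rpow hz.le h3 he.le
          _ = 2 ^ e * ((1 + x ^ 2) ^ e * (1 + s ^ 2) ^ e) := by
              rw [Real.mul_rpow (by norm_num) (by positivity), Real.mul_rpow hx.le hsp.le]
          _ ≤ 2 ^ (1 : ℝ) * ((1 + x ^ 2) ^ e * (1 + s ^ 2) ^ e) := by
              gcongr
              · norm_num
              · linarith
          _ = _ := by rw [Real.rpow_one]
      rw [hp, Real.rpow_neg hsp.le, Real.rpow_neg hz.le, ← div_eq_mul_inv,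
        le_div_iff₀ (Real.rpow_pos_of_pos hz e), inv_mul_le_iff₀ (Real.rpow_pos_of_pos hsp e)]
      linarith
    have h5 : 1 ≤ 2 * s ^ (1 / 2 : ℝ) * p := by
      have h6 : (1 + s ^ 2) ^ e ≤ 2 * s ^ (1 / 2 : ℝ) := by
        calc (1 + s ^ 2) ^ e ≤ (1 + s ^ 2) ^ (1 / 4 : ℝ) :=
              Real.rpow_le_rpow_of_exponent_le (one_le_one_add_sq s) he'
          _ ≤ (2 * s ^ 2) ^ (1 / 4 : ℝ) := by
              refine Real.rpow_le_rpow hsp.le ?_ (by norm_num)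
              nlinarith [hs.1]
          _ = 2 ^ (1 / 4 : ℝ) * s ^ (1 / 2 : ℝ) := by
              rw [Real.mul_rpow (by norm_num) (by positivity), ← Real.rpow_natCast,
                ← Real.rpow_mul hs0.le]
              norm_num
          _ ≤ 2 ^ (1 : ℝ) * s ^ (1 / 2 : ℝ) := by
              gcongr
              · norm_num
              · norm_num
          _ = _ := by rw [Real.rpow_one]
      rw [hp, Real.rpow_neg hsp.le, ← div_eq_mul_inv, le_div_iff₀ (Real.rpow_pos_of_pos hsp e)]
      linarith
    have h7 : s ^ (-(3 / 2) : ℝ) * s ^ 2 = s ^ (1 / 2 : ℝ) := by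
      rw [← Real.rpow_natCast, ← Real.rpow_add hs0]; norm_num
    have h8 : |w (x - s)| / s ≤ l / 2 * (w (x - s) ^ 2 * p) + 1 / (2 * l * p * s ^ 2) := by
      have h9 : l / 2 * (w (x - s) ^ 2 * p) + 1 / (2 * l * p * s ^ 2) - |w (x - s)| / s
          = (l * p * |w (x - s)| * s - 1) ^ 2 / (2 * l * p * s ^ 2) := by
        rw [← sq_abs (w (x - s))]
        field_simp
        ring
      have : 0 ≤ (l * p * |w (x - s)| * s - 1) ^ 2 / (2 * l * p * s ^ 2) := by positivity
      linarith
    have h10 : 1 / (2 * l * p * s ^ 2) ≤ 1 / l * s ^ (-(3 / 2) : ℝ) := by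
      rw [div_le_iff₀ (by positivity)]
      calc (1 : ℝ) ≤ 2 * s ^ (1 / 2 : ℝ) * p := h5
        _ = 1 / l * s ^ (-(3 / 2) : ℝ) * (2 * l * p * s ^ 2) := by
            rw [← h7]; field_simp
    have h11 : w (x - s) ^ 2 * p
        ≤ w (x - s) ^ 2 * (2 * (1 + x ^ 2) ^ e * (2 * wt e e n (x - s))) := by
      refine mul_le_mul_of_nonneg_left (h2.trans ?_) (sq_nonneg _)
      exact mul_le_mul_of_nonneg_left h1 (by positivity)
    have h12 := mul_le_mul_of_nonneg_left h11 (by positivity : 0 ≤ l / 2)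
    linarith
  have hpc : ContinuousOn (fun s : ℝ => s ^ (-(3 / 2) : ℝ)) (uIcc 1 L) := by
    rw [uIcc_of_le hL]
    exact ContinuousOn.rpow_const continuousOn_id fun s hs => Or.inl (by
      have := hs.1; linarith)
  have i1 : IntervalIntegrable (fun s => |w (x - s)| / s) volume 1 L := by
    refine ContinuousOn.intervalIntegrable ?_
    rw [uIcc_of_le hL]
    exact ContinuousOn.div (by fun_prop) continuousOn_id fun s hs => by
      have := hs.1; linarith
  have i2 : IntervalIntegrable (fun s => 2 * l * (1 + x ^ 2) ^ e
      * (w (x - s) ^ 2 * wt e e n (x - s))) volume 1 L :=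
    (iE'.const_mul _).intervalIntegrable
  have i3 : IntervalIntegrable (fun s : ℝ => 1 / l * s ^ (-(3 / 2) : ℝ)) volume 1 L :=
    hpc.intervalIntegrable.const_mul _
  refine (intervalIntegral.integral_mono_on hL i1 (i2.add i3) hpt).trans ?_
  rw [intervalIntegral.integral_add i2 i3]
  refine add_le_add ?_ ?_
  · rw [intervalIntegral.integral_const_mul, intervalIntegral.integral_of_le hL, mul_assoc (2 * l)]
    refine mul_le_mul_of_nonneg_left (mul_le_mul_of_nonneg_left ?_ hXp.le) (by positivity)
    refine (setIntegral_le_integral iE' (ae_of_all _ fun s =>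
      mul_nonneg (sq_nonneg _) (hφ.pos _).le)).trans ?_
    rw [integral_sub_left_eq_self (fun z => w z ^ 2 * wt e e n z)]
    exact hE n hn1
  · rw [intervalIntegral.integral_const_mul, integral_rpow (Or.inr ⟨by norm_num, by
      rw [uIcc_of_le hL]; intro h0; have := h0.1; linarith⟩)]
    have : 0 ≤ L ^ (-(3 / 2) + 1 : ℝ) := by positivity
    rw [Real.one_rpow, show (2 : ℝ) / l = 1 / l * 2 by ring]
    refine mul_le_mul_of_nonneg_left ?_ (by positivity)
    rw [div_le_iff_of_neg (by norm_num)]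
    linarith

lemma sq_integral_symQuot_le (he : 0 < e) (he' : e ≤ 1 / 4) (hw : IsBL w B) {E : ℝ} (hE0 : 0 < E)
    (hE : ∀ R, 1 ≤ R → ∫ x, w x ^ 2 * wt e e R x ≤ E) (x : ℝ) {L : ℝ} (hL : 1 ≤ L) :
    (∫ s in (1 : ℝ)..L, symQuot w x s) ^ 2 ≤ 64 * ((1 + x ^ 2) ^ e * E) := by
  have hwc := hw.continuous
  set P := (1 + x ^ 2) ^ e * E with hP
  have hP0 : 0 < P := mul_pos (Real.rpow_pos_of_pos (one_add_sq_pos x) e) hE0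
  have hq := Real.sqrt_pos.2 hP0
  have h1 := integral_abs_div_le he he' hw hE x hL (inv_pos.2 hq)
  have hE' : ∀ R, 1 ≤ R → ∫ x, w (-x) ^ 2 * wt e e R x ≤ E := fun R hR => by
    have := integral_neg_eq_self (fun x => w x ^ 2 * wt e e R x) volume
    simp only [wt_neg] at this
    rw [this]; exact hE R hR
  have h2 := integral_abs_div_le he he' hw.comp_neg hE' (-x) hL (inv_pos.2 hq)
  simp only [neg_sub, neg_sq, sub_neg_eq_add] at h2
  rw [← hP] at h1 h2
  have i1 : IntervalIntegrable (fun s => |w (x - s)| / s) volume 1 L := by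
    refine ContinuousOn.intervalIntegrable ?_
    rw [uIcc_of_le hL]
    exact ContinuousOn.div (by fun_prop) continuousOn_id fun s hs => by
      have := hs.1; linarith
  have i2 : IntervalIntegrable (fun s => |w (s + x)| / s) volume 1 L := by
    refine ContinuousOn.intervalIntegrable ?_
    rw [uIcc_of_le hL]
    exact ContinuousOn.div (by fun_prop) continuousOn_id fun s hs => by
      have := hs.1; linarith
  have h3 : |∫ s in (1 : ℝ)..L, symQuot w x s|
      ≤ (∫ s in (1 : ℝ)..L, |w (x - s)| / s) + ∫ s in (1 : ℝ)..L, |w (s + x)| / s := by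
    rw [← intervalIntegral.integral_add i1 i2]
    refine (intervalIntegral.abs_integral_le_integral_abs hL).trans
      (intervalIntegral.integral_mono_on hL (hw.intervalIntegrable_symQuot x 1 L).abs
        (i1.add i2) fun s hs => ?_)
    have hs0 : 0 < s := by linarith [hs.1]
    rw [symQuot, abs_div, abs_of_pos hs0, ← add_div, add_comm s x]
    gcongr
    exact abs_sub _ _
  have h4 : 2 * (√P)⁻¹ * P + 2 / (√P)⁻¹ = 4 * √P := by
    have := Real.mul_self_sqrt hP0.le
    nth_rw 2 [← this]
    field_simp
    norm_num
  have h5 : |∫ s in (1 : ℝ)..L, symQuot w x s| ≤ 8 * √P := by linarith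
  rw [← sq_abs]
  refine (pow_le_pow_left₀ (abs_nonneg _) h5 2).trans (le_of_eq ?_)
  rw [mul_pow, Real.sq_sqrt hP0.le]
  norm_num

end SymQuot

namespace IsDrift

variable {e : ℝ} {κ : ℝ → ℝ} {t₁ t₂ M K : ℝ} {θ u u₁ b c : ℝ → ℝ → ℝ}

variable (h : IsDrift e κ t₁ t₂ M K θ u u₁ b c)
include h

lemma oddPart_bl {t : ℝ} (ht : t ∈ Icc t₁ t₂) : IsBL (fun x => θ x t - θ (-x) t) (M + M) :=
  (h.θ_bl t ht).sub (h.θ_bl t ht).comp_neg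

lemma slope_add_bl {t : ℝ} (ht : t ∈ Icc t₁ t₂) : IsBL (fun x => u x t + u (-x) t) (M + M) := by
  simpa only [sub_neg_eq_add] using (h.u_bl t ht).sub (h.u_bl t ht).comp_neg.neg

lemma hasDerivAt_oddPart {t : ℝ} (ht : t ∈ Icc t₁ t₂) (x : ℝ) :
    HasDerivAt (fun x => θ x t - θ (-x) t) (u x t + u (-x) t) x :=
  ((h.θ_x t ht x).sub ((h.θ_x t ht (-x)).comp x (hasDerivAt_neg x))).congr_deriv (by ring)

lemma abs_hilbert_add_le {t : ℝ} (ht : t ∈ Ioo t₁ t₂) (x : ℝ) :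
    |b x t + b (-x) t| ≤ 2 * K * (1 + x ^ 2) ^ (e / 2) := by
  have h1 := h.b_le t ht x
  have h2 := h.b_le t ht (-x)
  rw [neg_sq] at h2
  refine (abs_add_le _ _).trans ?_
  linarith

lemma hilbert_add_continuous {t : ℝ} (ht : t ∈ Ioo t₁ t₂) :
    Continuous fun x => b x t + b (-x) t :=
  (h.b_continuous ht).add ((h.b_continuous ht).comp continuous_neg)

lemma integrable_oddPart_source {φ : ℝ → ℝ} (hφ : IsWeight e φ) {t : ℝ} (ht : t ∈ Ioo t₁ t₂) :
    Integrable fun x =>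
      -2 * (θ x t - θ (-x) t) * (b x t + b (-x) t) * u (-x) t * φ x := by
  have ht' := Ioo_subset_Icc_self ht
  have hM := (h.u_bl t ht').nonneg
  have hK := h.K_nonneg
  have hc1 := (h.oddPart_bl ht').continuous
  have hc2 := h.hilbert_add_continuous ht
  have hc3 := (h.u_bl t ht').comp_neg.continuous
  have hc4 := hφ.diff.continuous
  refine (hφ.integrable.const_mul (2 * (M + M) * (2 * K) * M)).mono'
    ((((continuous_const.mul hc1).mul hc2).mul hc3).mul hc4).aestronglyMeasurable
    (ae_of_all _ fun x => ?_)
  rw [Real.norm_eq_abs, abs_mul, abs_mul, abs_mul, abs_mul, abs_neg, abs_two,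
    abs_of_pos (hφ.pos x)]
  have h1 := mul_le_mul_of_nonneg_left ((h.oddPart_bl ht').bdd x) zero_le_two
  have h2 := mul_le_mul h1 (h.abs_hilbert_add_le ht x) (abs_nonneg _) (by positivity)
  have h3 := mul_le_mul h2 ((h.u_bl t ht').bdd (-x)) (abs_nonneg _) (by positivity)
  have h4 := mul_le_mul_of_nonneg_right h3 (hφ.pos x).le
  linarith

/-- Energy estimate for the odd part of a solution with even data. -/
theorem integral_sq_oddPart_le (h₁ : ∀ x, θ (-x) t₁ = θ x t₁) {φ : ℝ → ℝ} (hφ : IsWeight e φ)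
    {k S : ℝ} (hk : 0 ≤ k) (hS : 0 ≤ S)
    (hψ : ∀ t ∈ Ioo t₁ t₂,
      ∫ x, -2 * (θ x t - θ (-x) t) * (b x t + b (-x) t) * u (-x) t * φ x
        ≤ k * (∫ x, (θ x t - θ (-x) t) ^ 2 * φ x) + S) {t : ℝ} (ht : t ∈ Icc t₁ t₂) :
    ∫ x, (θ x t - θ (-x) t) ^ 2 * φ x
      ≤ Real.exp ((kernelConst e κ + 3 * K + k) * (t - t₁)) * (S * (t - t₁)) := by
  have hK := h.K_nonneg
  have hM := (h.u_bl t ht).nonneg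
  obtain ⟨D, hD0, hD⟩ := h.exists_abs_θ_t_le
  have hbl : ∀ t ∈ Icc t₁ t₂, IsBL (fun x => (θ x t - θ (-x) t) ^ 2) (2 * (M + M) * (M + M)) :=
    fun t ht => by simpa only [sq] using (h.oddPart_bl ht).mul (h.oddPart_bl ht)
  have := h.energy_le hφ (k := k) (S := S) (A := 2 * (M + M) * (M + M))
    (B := 2 * (M + M) * (D + D))
    (Q := fun x t => (θ x t - θ (-x) t) ^ 2)
    (Qx := fun x t => 2 * (θ x t - θ (-x) t) * (u x t + u (-x) t))
    (Qt := fun x t => 2 * (θ x t - θ (-x) t)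
      * ((b x t * u x t - lap κ (fun x => θ x t) x)
        - (b (-x) t * u (-x) t - lap κ (fun x => θ x t) (-x))))
    (ψ := fun x t => -2 * (θ x t - θ (-x) t) * (b x t + b (-x) t) * u (-x) t)
    hk hS (fun t _ x => sq_nonneg _) hbl
    (fun x => ((h.θ_cont x).sub (h.θ_cont (-x))).pow 2)
    (fun t ht x => ((h.hasDerivAt_oddPart (Ioo_subset_Icc_self ht) x).pow 2).congr_deriv (by simp))
    (fun t ht x => (((h.θ_t t ht x).sub (h.θ_t t ht (-x))).pow 2).congr_deriv (by simp))
    (fun t ht => ((h.oddPart_bl (Ioo_subset_Icc_self ht)).continuous.measurable.const_mul 2).mul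
      ((h.measurable_θ_t ht).sub ((h.measurable_θ_t ht).comp measurable_neg)))
    (fun t ht x => ?_) (fun t ht => h.integrable_oddPart_source hφ ht)
    (fun t ht x => ?_) hψ ht
  · simpa [h₁] using this
  · have h1 := hD t ht x
    have h2 := hD t ht (-x)
    rw [neg_sq] at h2
    have h3 := (abs_sub (b x t * u x t - lap κ (fun x => θ x t) x)
      (b (-x) t * u (-x) t - lap κ (fun x => θ x t) (-x))).trans (add_le_add h1 h2)
    rw [abs_mul, abs_mul, abs_two, mul_assoc (2 * (M + M)), add_mul D]
    exact mul_le_mul (by linarith [(h.oddPart_bl (Ioo_subset_Icc_self ht)).bdd x]) h3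
      (abs_nonneg _) (by positivity)
  · have ht' := Ioo_subset_Icc_self ht
    have h1 := lap_le_mul_lap (x := x) (p := 2 * (θ x t - θ (-x) t)) h.kernel (h.oddPart_bl ht')
      (hbl t ht') fun z => by nlinarith [sq_nonneg (θ x t - θ (-x) t - (θ z t - θ (-z) t))]
    have h2 := lap_sub h.kernel (h.θ_bl t ht') (h.θ_bl t ht').comp_neg x
    have h3 := lap_comp_neg (f := fun x => θ x t) h.kernel x
    rw [h2, h3] at h1
    linarith

/-- A priori bound for the odd part. -/
theorem exists_integral_sq_oddPart_le (h₁ : ∀ x, θ (-x) t₁ = θ x t₁) {V : ℝ} (hV0 : 0 ≤ V)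
    (hV : ∀ t ∈ Icc t₁ t₂, ∀ R, 1 ≤ R → ∫ x, u x t ^ 2 * wt e 0 R x ≤ V) :
    ∃ E, 0 < E ∧ ∀ t ∈ Icc t₁ t₂, ∀ R, 1 ≤ R →
      ∫ x, (θ x t - θ (-x) t) ^ 2 * wt e e R x ≤ E := by
  have hK := h.K_nonneg
  have hkc := h.kernel.kernelConst_nonneg
  rcases lt_or_ge t₂ t₁ with h12 | h12
  · exact ⟨1, one_pos, fun t ht => absurd (ht.1.trans ht.2) (not_le.2 h12)⟩
  set E := Real.exp ((kernelConst e κ + 3 * K + 1) * (t₂ - t₁)) * (4 * K ^ 2 * V * (t₂ - t₁))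
    with hE
  have hE0 : 0 ≤ E := by
    have : 0 ≤ t₂ - t₁ := by linarith
    positivity
  refine ⟨E + 1, by linarith, fun t ht R hR => ?_⟩
  have hφ : IsWeight e (wt e e R) := isWeight_wt h.e_pos h.e_le h.e_pos.le le_rfl hR
  have hφ0 : IsWeight e (wt e 0 R) := isWeight_wt h.e_pos h.e_le le_rfl h.e_pos.le hR
  have := h.integral_sq_oddPart_le h₁ hφ (k := 1) (S := 4 * K ^ 2 * V) zero_le_one (by positivity)
    (fun t ht => ?_) ht
  · refine this.trans (le_trans ?_ (by linarith : E ≤ E + 1))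
    rw [hE]
    have := ht.1
    have := ht.2
    have : 0 ≤ t - t₁ := by linarith
    gcongr
  · have ht' := Ioo_subset_Icc_self ht
    have i1 := (h.oddPart_bl ht').integrable_sq_mul_weight hφ h.e_pos
    have i2 := (h.u_bl t ht').comp_neg.integrable_sq_mul_weight hφ0 h.e_pos
    have hV' : ∫ x, u (-x) t ^ 2 * wt e 0 R x ≤ V := by
      have := integral_neg_eq_self (fun x => u x t ^ 2 * wt e 0 R x) volume
      simp only [wt_neg] at this
      rw [this]; exact hV t ht' R hR
    refine (integral_mono (h.integrable_oddPart_source hφ ht)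
      ((i1.const_mul 1).add (i2.const_mul (4 * K ^ 2))) fun x => ?_).trans ?_
    · simp only [Pi.add_apply]
      have hb := h.abs_hilbert_add_le ht x
      have hX : 0 ≤ (1 + x ^ 2) ^ (e / 2) := Real.rpow_nonneg (one_add_sq_pos x).le _
      have h2 : (b x t + b (-x) t) ^ 2 ≤ 4 * K ^ 2 * (1 + x ^ 2) ^ e := by
        rw [← sq_abs]
        refine (pow_le_pow_left₀ (abs_nonneg _) hb 2).trans (le_of_eq ?_)
        rw [mul_pow, ← Real.rpow_natCast ((1 + x ^ 2) ^ (e / 2)),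
          ← Real.rpow_mul (one_add_sq_pos x).le]
        norm_num
        left; ring
      rw [← rpow_mul_wt]
      have hp := hφ.pos x
      have h3 := mul_le_mul_of_nonneg_left h2 (mul_nonneg (sq_nonneg (u (-x) t)) hp.le)
      have h4 := mul_nonneg (sq_nonneg (θ x t - θ (-x) t + (b x t + b (-x) t) * u (-x) t)) hp.le
      linarith
    · rw [integral_add' (i1.const_mul 1) (i2.const_mul (4 * K ^ 2)), integral_const_mul,
        integral_const_mul]
      have := mul_le_mul_of_nonneg_left hV' (by positivity : 0 ≤ 4 * K ^ 2)
      linarith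

lemma tendsto_integral_symQuot_oddPart {t : ℝ} (ht : t ∈ Icc t₁ t₂) (x : ℝ) :
    Tendsto (fun R => ∫ s in (0 : ℝ)..R, symQuot (fun x => θ x t - θ (-x) t) x s) atTop
      (𝓝 (Real.pi * (b x t + b (-x) t))) := by
  have h1 := (h.hilbert t ht x).add (h.hilbert t ht (-x))
  rw [← mul_add] at h1
  refine h1.congr fun R => ?_
  rw [← intervalIntegral.integral_add ((h.θ_bl t ht).intervalIntegrable_symQuot _ _ _)
    ((h.θ_bl t ht).intervalIntegrable_symQuot _ _ _)]
  congr 1; ext s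
  simp only [symQuot]
  rw [← add_div, show -(x - s) = -x + s by ring, show -(x + s) = -x - s by ring]
  ring

/-- Improved bound for the source term in the equation for the odd part. -/
theorem integral_oddPart_source_le {V E : ℝ} (hE0 : 0 < E) {t : ℝ} (ht : t ∈ Ioo t₁ t₂)
    (hV : ∀ R, 1 ≤ R → ∫ x, u x t ^ 2 * wt e 0 R x ≤ V)
    (hE : ∀ R, 1 ≤ R → ∫ x, (θ x t - θ (-x) t) ^ 2 * wt e e R x ≤ E) {R : ℝ} (hR : 1 ≤ R) :
    ∫ x, -2 * (θ x t - θ (-x) t) * (b x t + b (-x) t) * u (-x) t * wt e e R x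
      ≤ (60 * M + 1) * (∫ x, (θ x t - θ (-x) t) ^ 2 * wt e e R x) + 64 * E * V := by
  have ht' := Ioo_subset_Icc_self ht
  have hM := (h.u_bl t ht').nonneg
  have hφ : IsWeight e (wt e e R) := isWeight_wt h.e_pos h.e_le h.e_pos.le le_rfl hR
  have hφ0 : IsWeight e (wt e 0 R) := isWeight_wt h.e_pos h.e_le le_rfl h.e_pos.le hR
  have hw := h.oddPart_bl ht'
  have hv := (h.u_bl t ht').comp_neg
  have hnear := abs_integral_mul_near_le hφ h.e_pos h.e_le hw hv
  have hsrc := h.integrable_oddPart_source hφ ht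
  have hlim := h.tendsto_integral_symQuot_oddPart ht'
  have hnc : Continuous fun x => ∫ s in (0 : ℝ)..1, symQuot (fun x => θ x t - θ (-x) t) x s :=
    continuous_iff_continuousAt.2 fun x => (hasDerivAt_integral_symQuot hw (h.slope_add_bl ht')
      (h.hasDerivAt_oddPart ht') 0 1 x).continuousAt
  set w : ℝ → ℝ := fun x => θ x t - θ (-x) t with hwd
  set near : ℝ → ℝ := fun x => ∫ s in (0 : ℝ)..1, symQuot w x s with hnd
  set far : ℝ → ℝ := fun x => Real.pi * (b x t + b (-x) t) - near x with hfd
  have hpi : 1 ≤ Real.pi := by linarith [Real.pi_gt_three]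
  have hfar : ∀ x, far x ^ 2 ≤ 64 * ((1 + x ^ 2) ^ e * E) := fun x => by
    have hl : Tendsto (fun L => (∫ s in (1 : ℝ)..L, symQuot w x s) ^ 2) atTop (𝓝 (far x ^ 2)) := by
      refine (((hlim x).sub_const (near x)).congr fun L => ?_).pow 2
      rw [sub_eq_iff_eq_add']
      exact (intervalIntegral.integral_add_adjacent_intervals
        (hw.intervalIntegrable_symQuot x 0 1) (hw.intervalIntegrable_symQuot x 1 L)).symm
    refine le_of_tendsto hl ?_
    filter_upwards [eventually_ge_atTop 1] with L hL
    exact sq_integral_symQuot_le h.e_pos h.e_le hw hE0 hE x hL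
  have hV' : ∫ x, u (-x) t ^ 2 * wt e 0 R x ≤ V := by
    have := integral_neg_eq_self (fun x => u x t ^ 2 * wt e 0 R x) volume
    simp only [wt_neg] at this
    rw [this]; exact hV R hR
  have i1 := hw.integrable_sq_mul_weight hφ h.e_pos
  have i2 := hv.integrable_sq_mul_weight hφ0 h.e_pos
  have inear : Integrable fun x => w x * u (-x) t * wt e e R x * near x := by
    have hc1 := hw.continuous
    have hc2 := hv.continuous
    have hc3 := hφ.diff.continuous
    refine ((hφ.integrable_self h.e_pos).const_mul ((M + M) * M * (2 * (M + M)))).mono'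
      (((hc1.mul hc2).mul hc3).mul hnc).aestronglyMeasurable (ae_of_all _ fun x => ?_)
    rw [Real.norm_eq_abs, abs_mul, abs_mul, abs_mul, abs_of_pos (hφ.pos x)]
    have h1 : |near x| ≤ 2 * (M + M) := by
      have := intervalIntegral.norm_integral_le_of_norm_le_const (a := (0 : ℝ)) (b := 1)
        (f := symQuot w x) (C := 2 * (M + M)) fun s _ => hw.abs_symQuot_le x s
      simpa using this
    have h2 := mul_le_mul (hw.bdd x) (hv.bdd x) (abs_nonneg _) (by positivity)
    have h3 := mul_le_mul h2 h1 (abs_nonneg _) (by positivity)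
    have h4 := mul_le_mul_of_nonneg_right h3 (hφ.pos x).le
    linarith
  refine (integral_mono hsrc (((inear.const_mul (-2 / Real.pi)).add i1).add
    (i2.const_mul (64 * E))) fun x => ?_).trans ?_
  · simp only [Pi.add_apply]
    have hp := hφ.pos x
    have hb : b x t + b (-x) t = (near x + far x) / Real.pi := by
      simp only [hfd]; field_simp; ring
    have hf := hfar x
    have hf' : (far x / Real.pi) ^ 2 ≤ 64 * ((1 + x ^ 2) ^ e * E) := by
      rw [div_pow]
      refine (div_le_self (sq_nonneg _) ?_).trans hf
      nlinarith
    have h3 := mul_le_mul_of_nonneg_left hf' (mul_nonneg (sq_nonneg (u (-x) t)) hp.le)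
    have h4 := mul_nonneg (sq_nonneg (w x + far x / Real.pi * u (-x) t)) hp.le
    rw [hb, ← rpow_mul_wt]
    have h5 : -2 * (θ x t - θ (-x) t) * ((near x + far x) / Real.pi) * u (-x) t * wt e e R x
        = -2 / Real.pi * (w x * u (-x) t * wt e e R x * near x)
          - 2 * w x * (far x / Real.pi) * u (-x) t * wt e e R x := by
      simp only [hwd]; ring
    rw [h5]
    linarith
  · rw [integral_add' ((inear.const_mul (-2 / Real.pi)).add i1) (i2.const_mul (64 * E)),
      integral_add' (inear.const_mul (-2 / Real.pi)) i1, integral_const_mul, integral_const_mul]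
    have h6 : -2 / Real.pi * (∫ x, w x * u (-x) t * wt e e R x * near x)
        ≤ 60 * M * ∫ x, w x ^ 2 * wt e e R x := by
      refine (le_abs_self _).trans ?_
      rw [abs_mul, abs_div, abs_neg, abs_two, abs_of_pos Real.pi_pos]
      have h7 : 2 / Real.pi ≤ 2 := div_le_self zero_le_two hpi
      refine (mul_le_mul h7 hnear (abs_nonneg _) zero_le_two).trans (le_of_eq ?_)
      ring
    have := mul_le_mul_of_nonneg_left hV' (by positivity : 0 ≤ 64 * E)
    linarith

/-- Evenness propagates over short time intervals whose length only depends on the constants. -/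
theorem even_of_exp_mul_le (h₁ : ∀ x, θ (-x) t₁ = θ x t₁) {V : ℝ} (hV0 : 0 ≤ V)
    (hV : ∀ t ∈ Icc t₁ t₂, ∀ R, 1 ≤ R → ∫ x, u x t ^ 2 * wt e 0 R x ≤ V)
    (hδ : Real.exp ((kernelConst e κ + 3 * K + (60 * M + 1)) * (t₂ - t₁))
      * (64 * V * (t₂ - t₁)) ≤ 1 / 2) {t : ℝ} (ht : t ∈ Icc t₁ t₂) (x : ℝ) :
    θ (-x) t = θ x t := by
  have hK := h.K_nonneg
  have hM := (h.u_bl t ht).nonneg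
  have hkc := h.kernel.kernelConst_nonneg
  obtain ⟨E, hE0, hE⟩ := h.exists_integral_sq_oddPart_le h₁ hV0 hV
  have hiter : ∀ n : ℕ, ∀ t ∈ Icc t₁ t₂, ∀ R, 1 ≤ R →
      ∫ x, (θ x t - θ (-x) t) ^ 2 * wt e e R x ≤ E * (1 / 2) ^ n := by
    intro n
    induction n with
    | zero => simpa using hE
    | succ n ih =>
      intro t ht R hR
      have hφ : IsWeight e (wt e e R) := isWeight_wt h.e_pos h.e_le h.e_pos.le le_rfl hR
      have hEn : 0 < E * (1 / 2) ^ n := by positivity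
      refine (h.integral_sq_oddPart_le h₁ hφ (k := 60 * M + 1) (S := 64 * (E * (1 / 2) ^ n) * V)
        (by positivity) (by positivity)
        (fun t ht => h.integral_oddPart_source_le hEn ht (hV t (Ioo_subset_Icc_self ht))
          (ih t (Ioo_subset_Icc_self ht)) hR) ht).trans ?_
      have h1 : t - t₁ ≤ t₂ - t₁ := by linarith [ht.2]
      have h0 : 0 ≤ t - t₁ := by linarith [ht.1]
      calc Real.exp ((kernelConst e κ + 3 * K + (60 * M + 1)) * (t - t₁))
            * (64 * (E * (1 / 2) ^ n) * V * (t - t₁))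
          ≤ Real.exp ((kernelConst e κ + 3 * K + (60 * M + 1)) * (t₂ - t₁))
            * (64 * (E * (1 / 2) ^ n) * V * (t₂ - t₁)) := by gcongr
        _ = E * (1 / 2) ^ n * (Real.exp ((kernelConst e κ + 3 * K + (60 * M + 1)) * (t₂ - t₁))
            * (64 * V * (t₂ - t₁))) := by ring
        _ ≤ E * (1 / 2) ^ n * (1 / 2) := by gcongr
        _ = E * (1 / 2) ^ (n + 1) := by ring
  have hlim : Tendsto (fun n : ℕ => E * (1 / 2 : ℝ) ^ n) atTop (𝓝 (E * 0)) :=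
    (tendsto_pow_atTop_nhds_zero_of_lt_one (by norm_num) (by norm_num)).const_mul E
  have hz : ∫ x, (θ x t - θ (-x) t) ^ 2 * wt e e 1 x ≤ 0 := by
    rw [mul_zero] at hlim
    exact ge_of_tendsto' hlim fun n => hiter n t ht 1 le_rfl
  have hφ : IsWeight e (wt e e 1) := isWeight_wt h.e_pos h.e_le h.e_pos.le le_rfl le_rfl
  have hbl : IsBL (fun x => (θ x t - θ (-x) t) ^ 2) (2 * (M + M) * (M + M)) := by
    simpa only [sq] using (h.oddPart_bl ht).mul (h.oddPart_bl ht)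
  have := eq_zero_of_integral_mul_weight_nonpos h.e_pos hφ hbl (fun x => sq_nonneg _) hz x
  have := pow_eq_zero_iff (two_ne_zero) |>.1 this
  linarith

end IsDrift

lemma antitoneOn_Ici_of_hasDerivAt_nonpos {f f' : ℝ → ℝ} (hd : ∀ x, HasDerivAt f (f' x) x)
    (hneg : ∀ x, 0 < x → f' x ≤ 0) : AntitoneOn f (Ici 0) :=
  antitoneOn_of_deriv_nonpos (convex_Ici 0) (fun x _ => (hd x).continuousAt.continuousWithinAt)
    (fun x _ => (hd x).differentiableAt.differentiableWithinAt) fun x hx => by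
      rw [interior_Ici] at hx
      rw [(hd x).deriv]
      exact hneg x hx

lemma integrable_sq_of_even_of_nonpos {f f' : ℝ → ℝ} {A : ℝ} (hf : IsBL f A) (hf' : IsBL f' A)
    (hd : ∀ x, HasDerivAt f (f' x) x) (heven : ∀ x, f (-x) = f x)
    (hneg : ∀ x, 0 < x → f' x ≤ 0) : Integrable fun x => f' x ^ 2 := by
  have hanti := antitoneOn_Ici_of_hasDerivAt_nonpos hd hneg
  have hlim : ∃ l, Tendsto f atTop (𝓝 l) := by
    have h1 : Antitone fun x => f (max x 0) := fun x z hxz =>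
      hanti (mem_Ici.2 (le_max_right _ _)) (mem_Ici.2 (le_max_right _ _)) (max_le_max_right 0 hxz)
    have h2 : BddBelow (range fun x => f (max x 0)) := by
      refine ⟨-A, ?_⟩
      rintro _ ⟨x, rfl⟩
      exact (abs_le.1 (hf.bdd _)).1
    refine ⟨_, (tendsto_atTop_ciInf h1 h2).congr' ?_⟩
    filter_upwards [eventually_ge_atTop 0] with x hx
    rw [max_eq_left hx]
  obtain ⟨l, hl⟩ := hlim
  have hi1 : IntegrableOn f' (Ioi 0) :=
    integrableOn_Ioi_deriv_of_nonpos' (fun x _ => hd x) hneg hl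
  have hi2 : IntegrableOn f' (Iic 0) := by
    have h1 := (neg_zero (G := ℝ) ▸ hi1 : IntegrableOn f' (Ioi (-0))).comp_neg_Iio
    rw [integrableOn_Iic_iff_integrableOn_Iio]
    refine h1.neg.congr (ae_of_all _ fun x => ?_)
    simp [odd_of_hasDerivAt_of_even hd heven x]
  have hi : Integrable f' := by
    rw [← integrableOn_univ, ← Iic_union_Ioi (a := (0 : ℝ))]
    exact hi2.union hi1
  refine (hi.bdd_mul hf'.continuous.aestronglyMeasurable (ae_of_all _ hf'.bdd)).congr
    (ae_of_all _ fun x => ?_)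
  exact (sq (f' x)).symm

/-- A bounded smooth solution of the nonlocal transport equation on `[0, T]`, with `u = θ_x`,
`u₁ = θ_xx`, `b = Hθ` and `c = b_x`. -/
structure IsSol (e : ℝ) (κ : ℝ → ℝ) (T M : ℝ) (θ u u₁ b c : ℝ → ℝ → ℝ) : Prop where
  e_pos : 0 < e
  e_le : e ≤ 1 / 4
  kernel : IsKernel e κ
  θ_cont : ∀ x, ContinuousOn (fun t => θ x t) (Icc 0 T)
  u_cont : ∀ x, ContinuousOn (fun t => u x t) (Icc 0 T)
  θ_x : ∀ t ∈ Icc 0 T, ∀ x, HasDerivAt (fun x => θ x t) (u x t) x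
  u_x : ∀ t ∈ Icc 0 T, ∀ x, HasDerivAt (fun x => u x t) (u₁ x t) x
  θ_bl : ∀ t ∈ Icc 0 T, IsBL (fun x => θ x t) M
  u_bl : ∀ t ∈ Icc 0 T, IsBL (fun x => u x t) M
  hilbert : ∀ t ∈ Icc 0 T, ∀ x,
    Tendsto (fun R => ∫ s in (0 : ℝ)..R, symQuot (fun x => θ x t) x s) atTop
      (𝓝 (Real.pi * b x t))
  θ_t : ∀ t ∈ Ioo 0 T, ∀ x,
    HasDerivAt (fun t => θ x t) (b x t * u x t - lap κ (fun x => θ x t) x) t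
  u_t : ∀ t ∈ Ioo 0 T, ∀ x,
    HasDerivAt (fun t => u x t) (c x t * u x t + b x t * u₁ x t - lap κ (fun x => u x t) x) t
  b_x : ∀ t ∈ Ioo 0 T, ∀ x, HasDerivAt (fun x => b x t) (c x t) x
  c_le : ∀ t ∈ Ioo 0 T, ∀ x, |c x t| ≤ 6 * M
  θ_t_bdd : ∀ x, ∃ D, ∀ t ∈ Ioo 0 T, |b x t * u x t - lap κ (fun x => θ x t) x| ≤ D

namespace IsSol

variable {e : ℝ} {κ : ℝ → ℝ} {T M : ℝ} {θ u u₁ b c : ℝ → ℝ → ℝ}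

variable (h : IsSol e κ T M θ u u₁ b c)
include h

lemma abs_b_sub_le {t : ℝ} (ht : t ∈ Icc 0 T) (x : ℝ) :
    |b x t - b 0 t| ≤ (8 * M + 4 * M / e) * (1 + x ^ 2) ^ (e / 2) := by
  have h1 := abs_hilbert_sub_le (h.θ_bl t ht) (h.u_bl t ht) (h.θ_x t ht) (h.hilbert t ht) h.e_pos x
  rw [← mul_sub, abs_mul, abs_of_pos Real.pi_pos] at h1
  nlinarith [Real.pi_gt_three, abs_nonneg (b x t - b 0 t)]

lemma isDrift {s K₀ : ℝ} (hs : s ≤ T) (hs0 : 0 ≤ s) (hK₀ : 0 ≤ K₀)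
    (hb : ∀ t ∈ Ioo 0 s, |b 0 t| ≤ K₀) :
    IsDrift e κ 0 s M (K₀ + 8 * M + 4 * M / e) θ u u₁ b c := by
  have hI : Icc 0 s ⊆ Icc 0 T := Icc_subset_Icc_right hs
  have hO : Ioo 0 s ⊆ Ioo 0 T := Ioo_subset_Ioo_right hs
  have hM := (h.θ_bl 0 (hI (left_mem_Icc.2 hs0))).nonneg
  have he := h.e_pos
  have hMe : 0 ≤ 4 * M / e := by positivity
  refine ⟨h.e_pos, h.e_le, h.kernel, by positivity, fun x => (h.θ_cont x).mono hI,
    fun x => (h.u_cont x).mono hI, fun t ht => h.θ_x t (hI ht), fun t ht => h.u_x t (hI ht),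
    fun t ht => h.θ_bl t (hI ht), fun t ht => h.u_bl t (hI ht), fun t ht => h.hilbert t (hI ht),
    fun t ht => h.θ_t t (hO ht), fun t ht => h.u_t t (hO ht), fun t ht => h.b_x t (hO ht),
    fun t ht x => ?_, fun t ht x => (h.c_le t (hO ht) x).trans (by linarith)⟩
  have h1 := h.abs_b_sub_le (hI (Ioo_subset_Icc_self ht)) x
  have h2 : 1 ≤ (1 + x ^ 2) ^ (e / 2) := Real.one_le_rpow (one_le_one_add_sq x) (by linarith)
  have h3 := hb t ht
  have h4 : |b x t| ≤ |b x t - b 0 t| + |b 0 t| := by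
    have := abs_add_le (b x t - b 0 t) (b 0 t)
    rwa [sub_add_cancel] at this
  have h5 := mul_le_mul_of_nonneg_left h2 hK₀
  linarith

lemma b_zero_of_even {t : ℝ} (ht : t ∈ Icc 0 T) (heven : ∀ x, θ (-x) t = θ x t) : b 0 t = 0 := by
  have h1 : ∀ s, symQuot (fun x => θ x t) 0 s = 0 := fun s => by simp [symQuot, heven]
  have h2 := h.hilbert t ht 0
  simp only [h1, intervalIntegral.integral_zero] at h2
  have := tendsto_nhds_unique h2 tendsto_const_nhds
  simpa [Real.pi_ne_zero] using this

lemma exists_slope_ne_zero {s : ℝ} (hs0 : 0 ≤ s) (hs : s ≤ T)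
    (heven : ∀ t ∈ Icc 0 s, ∀ x, θ (-x) t = θ x t) (hneg : ∀ x, 0 < x → u x 0 < 0) :
    ∃ x, u x s ≠ 0 := by
  have hI : Icc 0 s ⊆ Icc 0 T := Icc_subset_Icc_right hs
  have hs' : s ∈ Icc 0 s := right_mem_Icc.2 hs0
  have h0' : (0 : ℝ) ∈ Icc 0 s := left_mem_Icc.2 hs0
  have hD := h.isDrift hs hs0 le_rfl fun t ht => by
    have ht' := Ioo_subset_Icc_self ht
    rw [h.b_zero_of_even (hI ht') (heven t ht'), abs_zero]
  by_contra! hu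
  have hθ := h.θ_x s (hI hs')
  have hconst : ∀ x, θ x s = θ 0 s := fun x =>
    is_const_of_deriv_eq_zero (fun x => (hθ x).differentiableAt)
      (fun x => by rw [(hθ x).deriv, hu]) x 0
  have hanti : StrictAntiOn (fun x => θ x 0) (Ici 0) :=
    strictAntiOn_of_deriv_neg (convex_Ici 0)
      (fun x _ => (h.θ_x 0 (hI h0') x).continuousAt.continuousWithinAt) fun x hx => by
        rw [interior_Ici] at hx
        rw [(h.θ_x 0 (hI h0') x).deriv]
        exact hneg x hx
  have habs : ∀ x, θ |x| 0 = θ x 0 := fun x => by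
    rcases abs_choice x with hx | hx <;> rw [hx]
    exact heven 0 h0' x
  by_cases hle : ∀ x, θ 0 s ≤ θ x 0
  · have hlt : ∀ x, θ 0 s < θ x 0 := fun x => by
      have h1 := hanti (mem_Ici.2 (abs_nonneg x)) (mem_Ici.2 (by positivity : 0 ≤ |x| + 1))
        (by linarith : |x| < |x| + 1)
      have h2 := hle (|x| + 1)
      have h3 := habs x
      simp only at h1
      linarith
    obtain ⟨x, hx⟩ := (hD.ae_lt_of_forall_lt hlt hs').exists
    exact hx.ne (hconst x).symm
  · push Not at hle
    obtain ⟨x₁, hx₁⟩ := hle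
    refine hD.not_forall_eq_of_lt hx₁ (abs_nonneg x₁) (fun x hx => ?_) hs' hconst
    rw [← habs x, ← habs x₁]
    exact hanti.antitoneOn (mem_Ici.2 (abs_nonneg _)) (mem_Ici.2 (abs_nonneg _)) hx

/-- The drift at the origin stays bounded slightly beyond an interval on which the solution is
even. -/
lemma exists_abs_b_zero_le {s : ℝ} (hs0 : 0 ≤ s) (hs : s < T)
    (heven : ∀ t ∈ Icc 0 s, ∀ x, θ (-x) t = θ x t) (hneg : ∀ x, 0 < x → u x 0 < 0) :
    ∃ r, s < r ∧ r ≤ T ∧ ∃ K₀, 0 ≤ K₀ ∧ ∀ t ∈ Ioo 0 r, |b 0 t| ≤ K₀ := by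
  have hsT : s ∈ Icc 0 T := ⟨hs0, hs.le⟩
  have hM := (h.θ_bl s hsT).nonneg
  have he := h.e_pos
  obtain ⟨x, hx⟩ := h.exists_slope_ne_zero hs0 hs.le heven hneg
  obtain ⟨D, hD⟩ := h.θ_t_bdd x
  have hev : ∀ᶠ t in 𝓝[Icc 0 T] s, |u x s| / 2 < |u x t| :=
    ((h.u_cont x) s hsT).abs.eventually (lt_mem_nhds (by linarith [abs_pos.2 hx]))
  have hev' : ∀ᶠ t in 𝓝[≥] s, |u x s| / 2 < |u x t| := by
    have : 𝓝[≥] s = 𝓝[Icc s T] s := (nhdsWithin_Icc_eq_nhdsGE hs).symm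
    rw [this]
    exact hev.filter_mono (nhdsWithin_mono _ (Icc_subset_Icc_left hs0))
  obtain ⟨r, hr, hrs⟩ := (mem_nhdsGE_iff_exists_mem_Ioc_Ico_subset hs).1 hev'
  set L := 2 * M * ∫ y, min |y| 1 * κ y with hL
  set K₀ := max 0 ((D + L) / (|u x s| / 2) + (8 * M + 4 * M / e) * (1 + x ^ 2) ^ (e / 2)) with hK₀
  refine ⟨r, hr.1, hr.2, K₀, le_max_left _ _, fun t ht => ?_⟩
  have htT : t ∈ Ioo 0 T := ⟨ht.1, ht.2.trans_le hr.2⟩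
  have htT' := Ioo_subset_Icc_self htT
  rcases le_or_gt t s with hts | hts
  · rw [h.b_zero_of_even htT' (heven t ⟨ht.1.le, hts⟩), abs_zero]
    exact le_max_left _ _
  · have h1 : |u x s| / 2 < |u x t| := hrs ⟨hts.le, ht.2⟩
    have h2 := hD t htT
    have h3 := (h.θ_bl t htT').abs_lap_le h.kernel x
    have h4 := h.abs_b_sub_le htT' x
    have hup : 0 < |u x s| / 2 := by linarith [abs_pos.2 hx]
    have h5 : |b x t| ≤ (D + L) / (|u x s| / 2) := by
      rw [le_div_iff₀ hup]
      have h6 : |b x t * u x t| ≤ D + L := by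
        have := abs_add_le (b x t * u x t - lap κ (fun x => θ x t) x) (lap κ (fun x => θ x t) x)
        rw [sub_add_cancel] at this
        linarith
      rw [abs_mul] at h6
      nlinarith [abs_nonneg (b x t)]
    have h7 : |b 0 t| ≤ |b x t| + |b x t - b 0 t| := by
      have := abs_sub (b x t) (b x t - b 0 t)
      rwa [sub_sub_cancel] at this
    exact le_trans (by linarith) (le_max_right _ _)

lemma exists_even_beyond {s : ℝ} (hs0 : 0 ≤ s) (hs : s < T)
    (heven : ∀ t ∈ Icc 0 s, ∀ x, θ (-x) t = θ x t) (hneg : ∀ x, 0 < x → u x 0 < 0)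
    {y : ℝ} (hy : s < y) :
    ∃ r ∈ Ioc s y, ∀ t ∈ Icc 0 r, ∀ x, θ (-x) t = θ x t := by
  obtain ⟨r, hsr, hrT, K₀, hK₀, hb⟩ := h.exists_abs_b_zero_le hs0 hs heven hneg
  have hD := h.isDrift hrT (hs0.trans hsr.le) hK₀ hb
  set K := K₀ + 8 * M + 4 * M / e
  have hK := hD.K_nonneg
  have hkc := hD.kernel.kernelConst_nonneg
  have h0 : (0 : ℝ) ∈ Icc 0 r := ⟨le_rfl, hs0.trans hsr.le⟩
  have hsq := integrable_sq_of_even_of_nonpos (hD.θ_bl 0 h0) (hD.u_bl 0 h0) (hD.θ_x 0 h0)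
    (heven 0 ⟨le_rfl, hs0⟩) fun x hx => (hneg x hx).le
  set V := Real.exp ((kernelConst e κ + 3 * K + 2 * K) * r) * ∫ x, u x 0 ^ 2 with hVd
  have hI0 : 0 ≤ ∫ x, u x 0 ^ 2 := integral_nonneg fun x => sq_nonneg _
  have hV0 : 0 ≤ V := by positivity
  have hV : ∀ t ∈ Icc 0 r, ∀ R, 1 ≤ R → ∫ x, u x t ^ 2 * wt e 0 R x ≤ V := fun t ht R hR => by
    have hφ : IsWeight e (wt e 0 R) := isWeight_wt h.e_pos h.e_le le_rfl h.e_pos.le hR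
    refine (hD.integral_sq_slope_le hφ ht).trans ?_
    rw [sub_zero]
    have h1 : ∫ x, u x 0 ^ 2 * wt e 0 R x ≤ ∫ x, u x 0 ^ 2 :=
      integral_mono ((hD.u_bl 0 h0).integrable_sq_mul_weight hφ h.e_pos) hsq fun x =>
        mul_le_of_le_one_right (sq_nonneg _) (wt_zero_le_one h.e_pos R x)
    have h2 := ht.2
    rw [hVd]
    gcongr
    exact integral_nonneg fun x => mul_nonneg (sq_nonneg _) (hφ.pos x).le
  have hlim : Tendsto (fun q => Real.exp ((kernelConst e κ + 3 * K + (60 * M + 1)) * (q - s))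
      * (64 * V * (q - s))) (𝓝[>] s) (𝓝 0) := by
    have : Continuous fun q => Real.exp ((kernelConst e κ + 3 * K + (60 * M + 1)) * (q - s))
      * (64 * V * (q - s)) := by fun_prop
    have := this.tendsto s
    simp only [sub_self, mul_zero] at this
    exact this.mono_left nhdsWithin_le_nhds
  obtain ⟨q, hq, hqI⟩ := ((hlim.eventually (ge_mem_nhds (by norm_num : (0 : ℝ) < 1 / 2))).and
    (Ioc_mem_nhdsGT (lt_min hsr hy))).exists
  have hqr : q ≤ r := hqI.2.trans (min_le_left _ _)
  refine ⟨q, ⟨hqI.1, hqI.2.trans (min_le_right _ _)⟩, fun t ht x => ?_⟩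
  rcases le_or_gt t s with hts | hts
  · exact heven t ⟨ht.1, hts⟩ x
  · exact (hD.mono hs0 hqr).even_of_exp_mul_le (heven s ⟨hs0, le_rfl⟩) hV0
      (fun t ht => hV t ⟨hs0.trans ht.1, ht.2.trans hqr⟩) hq ⟨hts.le, ht.2⟩ x

/-- Solutions with even, strictly decreasing data remain even. -/
theorem even (heven : ∀ x, θ (-x) 0 = θ x 0) (hneg : ∀ x, 0 < x → u x 0 < 0) :
    ∀ t ∈ Icc 0 T, ∀ x, θ (-x) t = θ x t := by
  set S : Set ℝ := {t | ∀ s ∈ Icc 0 t, ∀ x, θ (-x) s = θ x s} with hS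
  have hclosed : IsClosed (S ∩ Icc 0 T) := by
    refine IsSeqClosed.isClosed fun r t hr hrt => ?_
    have htT : t ∈ Icc 0 T := isClosed_Icc.isSeqClosed (fun n => (hr n).2) hrt
    refine ⟨fun s hs x => ?_, htT⟩
    have hsT : s ∈ Icc 0 T := ⟨hs.1, hs.2.trans htT.2⟩
    have hmin : Tendsto (fun n => min s (r n)) atTop (𝓝[Icc 0 T] s) := by
      refine tendsto_nhdsWithin_iff.2 ⟨?_, Eventually.of_forall fun n =>
        ⟨le_min hs.1 (hr n).2.1, (min_le_left _ _).trans hsT.2⟩⟩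
      have := (tendsto_const_nhds (x := s)).min hrt
      rwa [min_eq_left hs.2] at this
    have h1 := (h.θ_cont (-x) s hsT).tendsto.comp hmin
    have h2 := (h.θ_cont x s hsT).tendsto.comp hmin
    refine tendsto_nhds_unique h1 (h2.congr fun n => ?_)
    exact ((hr n).1 _ ⟨le_min hs.1 (hr n).2.1, min_le_right _ _⟩ x).symm
  have h0 : (0 : ℝ) ∈ S := fun s hs x => by
    rw [le_antisymm hs.2 hs.1]; exact heven x
  have := hclosed.Icc_subset_of_forall_exists_gt h0 fun s hs y hy => by
    obtain ⟨r, hr, hre⟩ := h.exists_even_beyond hs.2.1 hs.2.2 hs.1 hneg hy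
    exact ⟨r, hre, hr⟩
  exact fun t ht => this ht t ⟨ht.1, le_rfl⟩

/-- Positivity, evenness and monotonicity are preserved. -/
theorem pos_even_antitoneOn (hT : 0 ≤ T) (hpos : ∀ x, 0 < θ x 0) (heven : ∀ x, θ (-x) 0 = θ x 0)
    (hneg : ∀ x, 0 < x → u x 0 < 0) {t : ℝ} (ht : t ∈ Icc 0 T) :
    (∀ x, 0 < θ x t) ∧ (∀ x, θ (-x) t = θ x t) ∧ AntitoneOn (fun x => θ x t) (Ioi 0) := by
  have hev := h.even heven hneg
  have hD := h.isDrift le_rfl hT le_rfl fun t ht => by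
    have ht' := Ioo_subset_Icc_self ht
    rw [h.b_zero_of_even ht' (hev t ht'), abs_zero]
  have hanti := antitoneOn_Ici_of_hasDerivAt_nonpos (h.θ_x t ht) fun x hx =>
    hD.slope_nonpos hev (fun x hx => (hneg x hx).le) ht hx
  refine ⟨fun x => ?_, hev t ht, hanti.mono Ioi_subset_Ici_self⟩
  have hae := hD.ae_lt_of_forall_lt hpos ht
  obtain ⟨z, hz, hxz⟩ : ∃ z, 0 < θ z t ∧ |x| < z := by
    by_contra! hcon
    have h1 : volume (Ioi |x|) = 0 := measure_mono_null (t := {z | ¬ 0 < θ z t})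
      (fun z hz hz' => absurd (hcon z hz') (not_le.2 (mem_Ioi.1 hz))) (ae_iff.1 hae)
    simp at h1
  have h2 : θ |x| t = θ x t := by
    rcases abs_choice x with hx | hx <;> rw [hx]
    exact hev t ht x
  rw [← h2]
  exact hz.trans_le (hanti (mem_Ici.2 (abs_nonneg x))
    (mem_Ici.2 ((abs_nonneg x).trans hxz.le)) hxz.le)

end IsSol

lemma isKernel_zero {e : ℝ} : IsKernel e fun _ => 0 where
  meas := measurable_const
  nonneg _ := le_rfl
  even _ := rfl
  anti _ _ _ _ := le_rfl
  tail y _ := by positivity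
  integrable := by simp

lemma isKernel_inv_abs_rpow {α : ℝ} (hα0 : 0 < α) (hα : α < 1 / 2) :
    IsKernel (α / 2) fun y => (|y| ^ (1 + 2 * α))⁻¹ where
  meas := by fun_prop
  nonneg _ := by positivity
  even _ := by rw [abs_neg]
  anti y z hy hyz := by
    have := abs_pos.2 hy
    gcongr
  tail y hy := by
    have hy0 : 0 < |y| := one_pos.trans_le hy
    have h1 : 0 < (1 + y ^ 2) ^ (1 / 2 + 2 * (α / 2)) := by positivity
    rw [Real.rpow_neg (by positivity), ← div_eq_mul_inv, le_div_iff₀ h1,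
      inv_mul_le_iff₀ (by positivity)]
    calc (1 + y ^ 2) ^ (1 / 2 + 2 * (α / 2)) ≤ (2 * |y| ^ 2) ^ (1 / 2 + 2 * (α / 2)) := by
          gcongr
          rw [sq_abs]
          nlinarith [sq_abs y]
      _ = 2 ^ (1 / 2 + 2 * (α / 2)) * |y| ^ (1 + 2 * α) := by
          rw [Real.mul_rpow (by norm_num) (by positivity), ← Real.rpow_natCast_mul hy0.le]
          congr 2
          push_cast
          ring
      _ ≤ 2 ^ (1 : ℝ) * |y| ^ (1 + 2 * α) := by
          gcongr
          · norm_num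
          · linarith
      _ = |y| ^ (1 + 2 * α) * 2 := by rw [Real.rpow_one, mul_comm]
  integrable := by
    have hIoi : IntegrableOn (fun y => min |y| 1 * (|y| ^ (1 + 2 * α))⁻¹) (Ioi (0 : ℝ)) := by
      rw [← Ioc_union_Ioi_eq_Ioi zero_le_one]
      refine IntegrableOn.union ?_ ?_
      · have h1 : IntegrableOn (fun y : ℝ => y ^ (-(2 * α))) (Ioc 0 1) :=
          (intervalIntegrable_iff_integrableOn_Ioc_of_le zero_le_one).1
            (intervalIntegral.intervalIntegrable_rpow' (by linarith))
        refine h1.congr_fun (fun y hy => ?_) measurableSet_Ioc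
        simp only
        rw [abs_of_pos hy.1, min_eq_left hy.2, Real.rpow_add hy.1, Real.rpow_one, mul_inv,
          mul_inv_cancel_left₀ hy.1.ne', Real.rpow_neg hy.1.le]
      · refine (integrableOn_Ioi_rpow_of_lt (a := -(1 + 2 * α)) (by linarith) one_pos).congr_fun
          (fun y hy => ?_) measurableSet_Ioi
        have hy0 : 0 < y := one_pos.trans hy
        simp only
        rw [abs_of_pos hy0, min_eq_right (mem_Ioi.1 hy).le, one_mul, Real.rpow_neg hy0.le]
    rw [← integrableOn_univ, ← Iic_union_Ioi (a := (0 : ℝ))]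
    refine IntegrableOn.union ?_ hIoi
    rw [integrableOn_Iic_iff_integrableOn_Iio]
    have h2 := (neg_zero (G := ℝ) ▸ hIoi : IntegrableOn
      (fun y => min |y| 1 * (|y| ^ (1 + 2 * α))⁻¹) (Ioi (-0 : ℝ))).comp_neg_Iio
    simpa only [abs_neg] using h2

/-- For Lipschitz functions the principal value defining the nonlocal operator is an absolutely
convergent integral. -/
lemma tendsto_setIntegral_lap {e A : ℝ} {κ f : ℝ → ℝ} (hκ : IsKernel e κ) (hf : IsBL f A) (x : ℝ) :
    Tendsto (fun ε => ∫ y in {y : ℝ | ε < |y|}, (f x - f (x + y)) * κ y) (𝓝[>] 0)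
      (𝓝 (lap κ f x)) := by
  have hm : ∀ ε : ℝ, MeasurableSet {y : ℝ | ε < |y|} := fun ε =>
    (isOpen_lt continuous_const continuous_abs).measurableSet
  simp only [← integral_indicator (hm _)]
  refine tendsto_integral_filter_of_dominated_convergence
    (fun y => ‖(f x - f (x + y)) * κ y‖)
    (Eventually.of_forall fun ε => (hf.integrable_lap hκ x).aestronglyMeasurable.indicator (hm ε))
    (Eventually.of_forall fun ε => ae_of_all _ fun y => norm_indicator_le_norm_self _ _)
    (hf.integrable_lap hκ x).norm (ae_of_all _ fun y => ?_)
  refine tendsto_const_nhds.congr' ?_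
  rcases eq_or_ne y 0 with rfl | hy
  · exact Eventually.of_forall fun ε => by simp [indicator]
  · filter_upwards [Ioo_mem_nhdsGT (abs_pos.2 hy)] with ε hε
    rw [indicator_of_mem]
    exact hε.2

lemma isBL_of_hasDerivAt {f f' : ℝ → ℝ} {A : ℝ} (hf : ∀ x, |f x| ≤ A)
    (hd : ∀ x, HasDerivAt f (f' x) x) (hf' : ∀ x, |f' x| ≤ A) : IsBL f A where
  bdd := hf
  lip x z := convex_univ.norm_image_sub_le_of_norm_hasDerivWithin_le
    (fun x _ => (hd x).hasDerivWithinAt) (fun x _ => hf' x) (mem_univ z) (mem_univ x)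

section Slab

variable {f : ℝ × ℝ → ℝ} {T : ℝ}

lemma uniqueDiffOn_slab (hT : 0 < T) : UniqueDiffOn ℝ (univ ×ˢ Icc 0 T : Set (ℝ × ℝ)) :=
  uniqueDiffOn_univ.prod (uniqueDiffOn_Icc hT)

lemma ContDiffOn.fderivWithin_slab_apply (hT : 0 < T)
    (hf : ContDiffOn ℝ (⊤ : ℕ∞) f (univ ×ˢ Icc 0 T)) (v : ℝ × ℝ) :
    ContDiffOn ℝ (⊤ : ℕ∞) (fun p => fderivWithin ℝ f (univ ×ˢ Icc 0 T) p v) (univ ×ˢ Icc 0 T) :=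
  (hf.fderivWithin (uniqueDiffOn_slab hT) (by norm_cast)).clm_apply contDiffOn_const

lemma ContDiffOn.hasDerivAt_slab_fst (hf : ContDiffOn ℝ (⊤ : ℕ∞) f (univ ×ˢ Icc 0 T)) {t : ℝ}
    (ht : t ∈ Icc 0 T) (x : ℝ) :
    HasDerivAt (fun x => f (x, t)) (fderivWithin ℝ f (univ ×ˢ Icc 0 T) (x, t) (1, 0)) x := by
  have h1 := ((hf.differentiableOn (by simp)) (x, t) ⟨mem_univ x, ht⟩).hasFDerivWithinAt
  have h2 : HasDerivWithinAt (fun x => (x, t)) ((1 : ℝ), (0 : ℝ)) univ x :=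
    ((hasDerivAt_id x).prodMk (hasDerivAt_const x t)).hasDerivWithinAt
  exact hasDerivWithinAt_univ.1
    (h1.comp_hasDerivWithinAt x h2 fun z _ => (⟨mem_univ z, ht⟩ : (z, t) ∈ univ ×ˢ Icc 0 T))

lemma ContDiffOn.hasDerivWithinAt_slab_snd (hf : ContDiffOn ℝ (⊤ : ℕ∞) f (univ ×ˢ Icc 0 T)) {t : ℝ}
    (ht : t ∈ Icc 0 T) (x : ℝ) :
    HasDerivWithinAt (fun t => f (x, t)) (fderivWithin ℝ f (univ ×ˢ Icc 0 T) (x, t) (0, 1))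
      (Icc 0 T) t := by
  have h1 := ((hf.differentiableOn (by simp)) (x, t) ⟨mem_univ x, ht⟩).hasFDerivWithinAt
  have h2 : HasDerivWithinAt (fun t => (x, t)) ((0 : ℝ), (1 : ℝ)) (Icc 0 T) t :=
    ((hasDerivAt_const t x).prodMk (hasDerivAt_id t)).hasDerivWithinAt
  exact h1.comp_hasDerivWithinAt t h2 fun s hs => (⟨mem_univ x, hs⟩ : (x, s) ∈ univ ×ˢ Icc 0 T)

lemma ContDiffOn.continuousOn_slab_snd (hf : ContDiffOn ℝ (⊤ : ℕ∞) f (univ ×ˢ Icc 0 T)) (x : ℝ) :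
    ContinuousOn (fun t => f (x, t)) (Icc 0 T) :=
  hf.continuousOn.comp (by fun_prop) fun _ ht => ⟨mem_univ x, ht⟩

/-- Symmetry of mixed derivatives on the open slab. -/
lemma ContDiffOn.hasDerivAt_mixed_slab (hf : ContDiffOn ℝ (⊤ : ℕ∞) f (univ ×ˢ Icc 0 T))
    {x t w' : ℝ} {u w : ℝ → ℝ → ℝ} (ht : t ∈ Ioo 0 T)
    (hu : ∀ t ∈ Ioo 0 T, ∀ x, HasDerivAt (fun x => f (x, t)) (u x t) x)
    (hw : ∀ t ∈ Ioo 0 T, ∀ x, HasDerivAt (fun t => f (x, t)) (w x t) t)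
    (hw' : HasDerivAt (fun x => w x t) w' x) : HasDerivAt (fun t => u x t) w' t := by
  have hnhds : ∀ t ∈ Ioo 0 T, ∀ x, (univ ×ˢ Icc 0 T : Set (ℝ × ℝ)) ∈ 𝓝 (x, t) := fun t ht x =>
    prod_mem_nhds univ_mem (Icc_mem_nhds ht.1 ht.2)
  have hd : ∀ t ∈ Ioo 0 T, ∀ x, HasFDerivAt f (fderiv ℝ f (x, t)) (x, t) := fun t ht x =>
    ((hf.contDiffAt (hnhds t ht x)).differentiableAt (by simp)).hasFDerivAt
  have hu' : ∀ t ∈ Ioo 0 T, ∀ x, u x t = fderiv ℝ f (x, t) (1, 0) := fun t ht x =>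
    (hu t ht x).unique ((hd t ht x).comp_hasDerivAt x
      ((hasDerivAt_id x).prodMk (hasDerivAt_const x t)))
  have hw'' : ∀ t ∈ Ioo 0 T, ∀ x, w x t = fderiv ℝ f (x, t) (0, 1) := fun t ht x =>
    (hw t ht x).unique ((hd t ht x).comp_hasDerivAt t
      ((hasDerivAt_const t x).prodMk (hasDerivAt_id t)))
  have hC := hf.contDiffAt (hnhds t ht x)
  have h2 : HasFDerivAt (fderiv ℝ f) (fderiv ℝ (fderiv ℝ f) (x, t)) (x, t) :=
    ((hC.fderiv_right (m := 1) (by norm_cast)).differentiableAt (by simp)).hasFDerivAt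
  have hsymm : IsSymmSndFDerivAt ℝ f (x, t) := hC.isSymmSndFDerivAt (by simp; norm_cast)
  have hx : HasDerivAt (fun z => fderiv ℝ f (z, t) (0, 1))
      (fderiv ℝ (fderiv ℝ f) (x, t) (1, 0) (0, 1)) x :=
    (ContinuousLinearMap.apply ℝ ℝ ((0 : ℝ), (1 : ℝ))).hasFDerivAt.comp_hasDerivAt x
      (h2.comp_hasDerivAt x ((hasDerivAt_id x).prodMk (hasDerivAt_const x t)))
  have ht' : HasDerivAt (fun s => fderiv ℝ f (x, s) (1, 0))
      (fderiv ℝ (fderiv ℝ f) (x, t) (0, 1) (1, 0)) t :=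
    (ContinuousLinearMap.apply ℝ ℝ ((1 : ℝ), (0 : ℝ))).hasFDerivAt.comp_hasDerivAt t
      (h2.comp_hasDerivAt t ((hasDerivAt_const t x).prodMk (hasDerivAt_id t)))
  have hval : w' = fderiv ℝ (fderiv ℝ f) (x, t) (0, 1) (1, 0) := by
    rw [hsymm]
    refine hw'.unique (hx.congr_of_eventuallyEq (Eventually.of_forall fun z => ?_))
    exact hw'' t ht z
  rw [hval]
  refine ht'.congr_of_eventuallyEq ?_
  filter_upwards [Ioo_mem_nhds ht.1 ht.2] with s hs
  exact hu' s hs x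

end Slab

/-- A smooth bounded solution on a nondegenerate time interval satisfies `IsSol`. -/
lemma exists_isSol {e T : ℝ} {κ : ℝ → ℝ} (he : 0 < e) (he' : e ≤ 1 / 4) (hκ : IsKernel e κ)
    (hT : 0 < T) {θ b : ℝ → ℝ → ℝ}
    (hsmooth : ContDiffOn ℝ (⊤ : ℕ∞) (fun p : ℝ × ℝ => θ p.1 p.2) (univ ×ˢ Icc 0 T))
    (hbdd : ∀ j : ℕ, ∃ M, ∀ x, ∀ t ∈ Icc 0 T, |iteratedDeriv j (fun x' => θ x' t) x| ≤ M)
    (hb : ∀ t ∈ Icc 0 T, ∀ x, HilbertPVAt (fun x' => θ x' t) x (Real.pi * b x t))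
    (hPDE : ∀ x, ∀ t ∈ Icc 0 T, HasDerivWithinAt (fun s => θ x s)
      (b x t * deriv (fun x' => θ x' t) x - lap κ (fun x' => θ x' t) x) (Icc 0 T) t) :
    ∃ M u₁ c, IsSol e κ T M θ (fun x t => deriv (fun x' => θ x' t) x) u₁ b c := by
  set f : ℝ × ℝ → ℝ := fun p => θ p.1 p.2
  set u : ℝ → ℝ → ℝ := fun x t => deriv (fun x' => θ x' t) x with hu
  set g : ℝ × ℝ → ℝ := fun p => fderivWithin ℝ f (univ ×ˢ Icc 0 T) p (1, 0)
  have hg : ContDiffOn ℝ (⊤ : ℕ∞) g (univ ×ˢ Icc 0 T) := hsmooth.fderivWithin_slab_apply hT (1, 0)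
  have hug : ∀ t ∈ Icc 0 T, ∀ x, u x t = g (x, t) := fun t ht x =>
    (hsmooth.hasDerivAt_slab_fst ht x).deriv
  set u₁ : ℝ → ℝ → ℝ := fun x t => fderivWithin ℝ g (univ ×ˢ Icc 0 T) (x, t) (1, 0)
  have hθx : ∀ t ∈ Icc 0 T, ∀ x, HasDerivAt (fun x => θ x t) (u x t) x := fun t ht x => by
    rw [hug t ht]
    exact hsmooth.hasDerivAt_slab_fst ht x
  have hux : ∀ t ∈ Icc 0 T, ∀ x, HasDerivAt (fun x => u x t) (u₁ x t) x := fun t ht x =>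
    (hg.hasDerivAt_slab_fst ht x).congr_of_eventuallyEq (Eventually.of_forall (hug t ht))
  obtain ⟨M₀, hM₀⟩ := hbdd 0
  obtain ⟨M₁, hM₁⟩ := hbdd 1
  obtain ⟨M₂, hM₂⟩ := hbdd 2
  simp only [iteratedDeriv_zero] at hM₀
  simp only [iteratedDeriv_one] at hM₁
  have hM₂' : ∀ x, ∀ t ∈ Icc 0 T, |u₁ x t| ≤ M₂ := fun x t ht => by
    have := hM₂ x t ht
    rwa [iteratedDeriv_succ, iteratedDeriv_one, (hux t ht x).deriv] at this
  set M := max M₀ (max M₁ M₂)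
  have h0 : M₀ ≤ M := le_max_left _ _
  have h1 : M₁ ≤ M := (le_max_left _ _).trans (le_max_right _ _)
  have h2 : M₂ ≤ M := (le_max_right _ _).trans (le_max_right _ _)
  have hθbl : ∀ t ∈ Icc 0 T, IsBL (fun x => θ x t) M := fun t ht =>
    isBL_of_hasDerivAt (fun x => (hM₀ x t ht).trans h0) (hθx t ht) fun x => (hM₁ x t ht).trans h1
  have hubl : ∀ t ∈ Icc 0 T, IsBL (fun x => u x t) M := fun t ht =>
    isBL_of_hasDerivAt (fun x => (hM₁ x t ht).trans h1) (hux t ht) fun x => (hM₂' x t ht).trans h2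
  have hhil : ∀ t ∈ Icc 0 T, ∀ x, Tendsto (fun R => ∫ s in (0 : ℝ)..R,
      symQuot (fun x => θ x t) x s) atTop (𝓝 (Real.pi * b x t)) := fun t ht x =>
    (hb t ht x).tendsto_symQuot (hθbl t ht)
  have hbx : ∀ t ∈ Icc 0 T, ∀ x, HasDerivAt (fun x => b x t) (deriv (fun x => b x t) x) x ∧
      |deriv (fun x => b x t) x| ≤ 6 * M := fun t ht x => by
    obtain ⟨c, hc, hcM⟩ := exists_hasDerivAt_hilbert (hθbl t ht) (hubl t ht) (hθx t ht) (hhil t ht)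
    have h3 : HasDerivAt (fun x => b x t) (Real.pi⁻¹ * c x) x := by
      refine ((hc x).const_mul Real.pi⁻¹).congr_of_eventuallyEq (Eventually.of_forall fun z => ?_)
      exact (inv_mul_cancel_left₀ Real.pi_ne_zero _).symm
    refine ⟨h3.differentiableAt.hasDerivAt, ?_⟩
    rw [h3.deriv, abs_mul, abs_of_pos (inv_pos.2 Real.pi_pos), inv_mul_le_iff₀ Real.pi_pos]
    nlinarith [hcM x, abs_nonneg (c x), Real.pi_gt_three]
  have hθt : ∀ t ∈ Ioo 0 T, ∀ x,
      HasDerivAt (fun t => θ x t) (b x t * u x t - lap κ (fun x => θ x t) x) t := fun t ht x =>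
    (hPDE x t (Ioo_subset_Icc_self ht)).hasDerivAt (Icc_mem_nhds ht.1 ht.2)
  refine ⟨M, u₁, fun x t => deriv (fun x => b x t) x, he, he', hκ, hsmooth.continuousOn_slab_snd,
    fun x => (hg.continuousOn_slab_snd x).congr fun t ht => hug t ht x, hθx, hux, hθbl, hubl, hhil,
    hθt, fun t ht x => ?_, fun t ht x => (hbx t (Ioo_subset_Icc_self ht) x).1,
    fun t ht x => (hbx t (Ioo_subset_Icc_self ht) x).2, fun x => ?_⟩
  · have ht' := Ioo_subset_Icc_self ht
    exact hsmooth.hasDerivAt_mixed_slab ht (fun t ht => hθx t (Ioo_subset_Icc_self ht)) hθt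
      (((hbx t ht' x).1.mul (hux t ht' x)).sub
        (hasDerivAt_lap hκ (hθbl t ht') (hubl t ht') (hθx t ht') x))
  · obtain ⟨D, hD⟩ := isCompact_Icc.exists_bound_of_continuousOn
      ((hsmooth.fderivWithin_slab_apply hT (0, 1)).continuousOn_slab_snd x)
    refine ⟨D, fun t ht => ?_⟩
    have ht' := Ioo_subset_Icc_self ht
    rw [(hθt t ht x).unique
      ((hsmooth.hasDerivWithinAt_slab_snd ht' x).hasDerivAt (Icc_mem_nhds ht.1 ht.2))]
    exact hD t ht'

/-- **Preservation of positivity, evenness and monotonicity for the CCF equation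
(Lemma ccfmon).** If `0 ≤ α < 1/2` and `θ` is a smooth bounded solution (with bounded
spatial derivatives) of `∂_t θ = (Hθ)∂_x θ − L_α θ` on `[0,T]` whose initial data is smooth,
bounded, positive, even, and strictly monotone decaying on `(0,∞)`, then `θ(·,t)` remains
positive, even, and monotone decaying on `(0,∞)` for all `t ∈ [0,T]`. -/
theorem ccf_monotonicity_preservation (α T : ℝ) (hα0 : 0 ≤ α) (hα : α < 1/2) (hT : 0 ≤ T)
    (θ Hθ Lθ : ℝ → ℝ → ℝ)
    (hsmooth : ContDiffOn ℝ (⊤ : ℕ∞) (fun p : ℝ × ℝ => θ p.1 p.2) (univ ×ˢ Icc 0 T))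
    (hbdd : ∃ M, ∀ x, ∀ t ∈ Icc (0:ℝ) T, |θ x t| ≤ M)
    (hderivbdd : ∀ j : ℕ, ∃ M, ∀ x, ∀ t ∈ Icc (0:ℝ) T,
      |iteratedDeriv j (fun x' => θ x' t) x| ≤ M)
    (hHilbert : ∀ t ∈ Icc (0:ℝ) T, ∀ x,
      HilbertPVAt (fun x' => θ x' t) x (Real.pi * Hθ x t))
    (hL0 : α = 0 → ∀ x t, Lθ x t = 0)
    (hLpos : 0 < α → ∀ t ∈ Icc (0:ℝ) T, ∀ x,
      Tendsto (fun ε => ∫ y in {y : ℝ | ε < |y|},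
          (θ x t - θ (x + y) t) / |y| ^ (1 + 2*α))
        (nhdsWithin 0 (Ioi 0)) (nhds (Lθ x t)))
    (hPDE : ∀ x, ∀ t ∈ Icc (0:ℝ) T,
      HasDerivWithinAt (fun s => θ x s)
        (Hθ x t * deriv (fun x' => θ x' t) x - Lθ x t) (Icc 0 T) t)
    (hpos0 : ∀ x, 0 < θ x 0)
    (heven0 : ∀ x, θ (-x) 0 = θ x 0)
    (hmono0 : ∀ x > (0:ℝ), deriv (fun x' => θ x' 0) x < 0) :
    ∀ t ∈ Icc (0:ℝ) T,
      (∀ x, 0 < θ x t) ∧ (∀ x, θ (-x) t = θ x t) ∧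
      AntitoneOn (fun x => θ x t) (Ioi 0) := by
  intro t ht
  rcases hT.eq_or_lt with rfl | hT
  · obtain rfl : t = 0 := le_antisymm ht.2 ht.1
    refine ⟨hpos0, heven0, (strictAntiOn_of_deriv_neg (convex_Ioi 0) (fun x hx => ?_)
      fun x hx => hmono0 x (by simpa using hx)).antitoneOn⟩
    exact (differentiableAt_of_deriv_ne_zero (hmono0 x hx).ne).continuousAt.continuousWithinAt
  obtain ⟨e, κ, he, he', hκ, hL⟩ : ∃ (e : ℝ) (κ : ℝ → ℝ), 0 < e ∧ e ≤ 1 / 4 ∧ IsKernel e κ ∧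
      ∀ t ∈ Icc 0 T, ∀ x, Lθ x t = lap κ (fun x' => θ x' t) x := by
    rcases hα0.eq_or_lt with rfl | hα0
    · exact ⟨1 / 4, fun _ => 0, by norm_num, le_rfl, isKernel_zero, fun t _ x => by
        simp [hL0 rfl, lap]⟩
    · have hκ := isKernel_inv_abs_rpow hα0 hα
      refine ⟨α / 2, _, by linarith, by linarith, hκ, fun t ht x => ?_⟩
      obtain ⟨M₀, hM₀⟩ := hbdd
      obtain ⟨M₁, hM₁⟩ := hderivbdd 1
      simp only [iteratedDeriv_one] at hM₁
      have hbl : IsBL (fun x => θ x t) (max M₀ M₁) :=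
        isBL_of_hasDerivAt (fun x => (hM₀ x t ht).trans (le_max_left _ _))
          (fun x => (hsmooth.hasDerivAt_slab_fst ht x).differentiableAt.hasDerivAt)
          fun x => (hM₁ x t ht).trans (le_max_right _ _)
      exact tendsto_nhds_unique (hLpos hα0 t ht x) (tendsto_setIntegral_lap hκ hbl x)
  obtain ⟨M, u₁, c, hsol⟩ := exists_isSol he he' hκ hT hsmooth hderivbdd hHilbert
    fun x t ht => hL t ht x ▸ hPDE x t ht
  exact hsol.pos_even_antitoneOn hT.le hpos0 heven0 hmono0 ht
end
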